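/- arXiv:1107.4842 — 2 statements merged into one kernel-verified Lean document; each statement's English description precedes it below -/
import Mathlib

section
/- Let N ∈ [1,∞) and let (X,d,m) be a geodesic metric measure space, with m locally finite, in which the Rényi entropy functional E_N is strongly displacement convex. Then for every continuous function u : X → ℝ, every upper gradient g of u, every x ∈ X and every r > 0 one has the weak local Poincaré inequality ⨍_{B(x,r)} |u − ⟨u⟩_{B(x,r)}| dm ≤ 2^{N+2} r ⨍_{B(x,2r)} g dm, where ⨍ denotes the average integral. -/
open MeasureTheory Metric Set Filter ProbabilityTheory
open scoped ENNReal NNReal Topology ProbabilityTheory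

noncomputable section

variable {X : Type*} [MetricSpace X] [MeasurableSpace X]

/-- A constant-speed geodesic parametrized on `[0,1]`:
`d(γ(s),γ(t)) = |s - t| · d(γ(0),γ(1))` for all `s,t ∈ [0,1]`. -/
def IsGeodesicMap (γ : ℝ → X) : Prop :=
  ∀ s ∈ Set.Icc (0:ℝ) 1, ∀ t ∈ Set.Icc (0:ℝ) 1,
    dist (γ s) (γ t) = |s - t| * dist (γ 0) (γ 1)

/-- A geodesic metric space: any two points are joined by a geodesic. -/
def IsGeodesicSpace (X : Type*) [MetricSpace X] : Prop :=
  ∀ x y : X, ∃ γ : ℝ → X, IsGeodesicMap γ ∧ γ 0 = x ∧ γ 1 = y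

/-- The squared Wasserstein cost: infimum over couplings of `∫ d(x,y)² dσ`. -/
def W2sq (μ ν : Measure X) : ℝ≥0∞ :=
  ⨅ (σ : Measure (X × X)) (_ : σ.map Prod.fst = μ ∧ σ.map Prod.snd = ν),
    ∫⁻ p, edist p.1 p.2 ^ 2 ∂σ

/-- The Wasserstein distance `W₂`, with values in `[0,∞]`. -/
def W2 (μ ν : Measure X) : ℝ≥0∞ := W2sq μ ν ^ (1/2 : ℝ)

/-- A geodesic in the Wasserstein space `(P(X), W₂)`, parametrized on `[0,1]`. -/
def IsW2Geodesic (Γ : ℝ → Measure X) : Prop :=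
  (∀ t ∈ Set.Icc (0:ℝ) 1, IsProbabilityMeasure (Γ t)) ∧
  W2 (Γ 0) (Γ 1) ≠ ∞ ∧
  ∀ s ∈ Set.Icc (0:ℝ) 1, ∀ t ∈ Set.Icc (0:ℝ) 1,
    W2 (Γ s) (Γ t) = ENNReal.ofReal |s - t| * W2 (Γ 0) (Γ 1)

/-- The evaluation map `e_t : γ ↦ γ(t)`. -/
def evalGeo (t : ℝ) : (ℝ → X) → X := fun γ => γ t

/-- `π ∈ GeoOpt(μ,ν)`: a probability measure on geodesics of `X` such that
`t ↦ (e_t)_# π` is a geodesic in `(P(X), W₂)` from `μ` to `ν`. -/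
def IsGeoOpt (μ ν : Measure X) (π : Measure (ℝ → X)) : Prop :=
  IsProbabilityMeasure π ∧ (∀ᵐ γ ∂π, IsGeodesicMap γ) ∧
  π.map (evalGeo 0) = μ ∧ π.map (evalGeo 1) = ν ∧
  IsW2Geodesic (fun t => π.map (evalGeo t))

/-- `ρ ↦ ρ^(1-1/N)` with the convention `0^(1-1/N) = 0` (also for `N = 1`). -/
def renyiIntegrand (N : ℝ) (ρ : ℝ≥0∞) : ℝ≥0∞ :=
  haveI := Classical.dec (ρ = 0)
  if ρ = 0 then 0 else ρ ^ (1 - 1/N)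

/-- The Rényi entropy functional `E_N(μ) = -∫ ρ^(1-1/N) dm`, where `ρ` is the density of
the absolutely continuous part of `μ` with respect to `m`. -/
def renyiEntropy (N : ℝ) (m μ : Measure X) : EReal :=
  - ((∫⁻ x, renyiIntegrand N (μ.rnDeriv m x) ∂m : ℝ≥0∞) : EReal)

/-- The Shannon entropy functional `E_∞(μ) = ∫ ρ log ρ dm` if `μ = ρ m ≪ m`
(defined as the difference of the integrals of the positive and negative parts),
and `+∞` otherwise. -/
def shannonEntropy (m μ : Measure X) : EReal :=
  haveI := Classical.dec (μ ≪ m)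
  if μ ≪ m then
    ((∫⁻ x, ENNReal.ofReal ((μ.rnDeriv m x).toReal * Real.log (μ.rnDeriv m x).toReal) ∂m :
        ℝ≥0∞) : EReal)
      - ((∫⁻ x, ENNReal.ofReal (-((μ.rnDeriv m x).toReal *
          Real.log (μ.rnDeriv m x).toReal)) ∂m : ℝ≥0∞) : EReal)
  else (⊤ : EReal)

/-- A functional on `P(X)` is strongly displacement convex if it is convex along every
geodesic of the Wasserstein space. -/
def StronglyDisplacementConvex (E : Measure X → EReal) : Prop :=
  ∀ Γ : ℝ → Measure X, IsW2Geodesic Γ → ∀ s ∈ Set.Icc (0:ℝ) 1,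
    E (Γ s) ≤ ((1 - s : ℝ) : EReal) * E (Γ 0) + ((s : ℝ) : EReal) * E (Γ 1)

/-- The displacement convexity class `DC_∞`. -/
def MemDCinf (F : ℝ → ℝ) : Prop :=
  ContinuousOn F (Set.Ici 0) ∧ ConvexOn ℝ (Set.Ici 0) F ∧ F 0 = 0 ∧
  ConvexOn ℝ Set.univ (fun l : ℝ => Real.exp l * F (Real.exp (-l)))

/-- The displacement convexity class `DC_N`, `N ∈ [1,∞)`. -/
def MemDCN (N : ℝ) (F : ℝ → ℝ) : Prop :=
  ContinuousOn F (Set.Ici 0) ∧ ConvexOn ℝ (Set.Ici 0) F ∧ F 0 = 0 ∧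
  ConvexOn ℝ (Set.Ioi 0) (fun l : ℝ => l ^ N * F (l ^ (-N)))

/-- `F′(∞) = lim_{r → ∞} F(r)/r` (as an extended real number). -/
def derivAtInfty (F : ℝ → ℝ) : EReal :=
  Filter.limsup (fun r : ℝ => ((F r / r : ℝ) : EReal)) Filter.atTop

/-- The integral functional `𝔉(μ) = ∫ F(ρ) dm + F′(∞) μ^⊥(X)` associated to `F`,
where `μ = ρ m + μ^⊥` is the Lebesgue decomposition of `μ` w.r.t. `m`. -/
def entFunctional (F : ℝ → ℝ) (m μ : Measure X) : EReal :=
  ((∫ x, F ((μ.rnDeriv m x).toReal) ∂m : ℝ) : EReal)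
    + derivAtInfty F * ((μ.singularPart m Set.univ : ℝ≥0∞) : EReal)

/-- Distortion coefficients `β_t(x,y)` for `N = ∞`. -/
def betaInf (K : ℝ) (t : ℝ) (x y : X) : ℝ :=
  Real.exp (K * (1 - t ^ 2) * dist x y ^ 2 / 6)

/-- Distortion coefficients `β_t(x,y)` for `N ∈ [1,∞)` and `K ≤ 0`. -/
def betaFin (K N : ℝ) (t : ℝ) (x y : X) : ℝ :=
  haveI := Classical.dec (K = 0 ∨ N = 1)
  if K = 0 ∨ N = 1 then 1
  else (Real.sinh (t * (Real.sqrt (|K| / (N - 1)) * dist x y)) /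
       (t * Real.sinh (Real.sqrt (|K| / (N - 1)) * dist x y))) ^ (N - 1)

/-- The joint law of the endpoints `(γ(0), γ(1))` under `π`. -/
def endpointLaw (π : Measure (ℝ → X)) : Measure (X × X) :=
  π.map (fun γ => (γ 0, γ 1))

/-- The curvature-dimension condition `CD(K,∞)` (for `K ≤ 0`). -/
def IsCDinf (K : ℝ) (m : Measure X) : Prop :=
  ∀ μ₀ μ₁ : Measure X, IsProbabilityMeasure μ₀ → IsProbabilityMeasure μ₁ →
    W2 μ₀ μ₁ ≠ ∞ →
    ∃ π : Measure (ℝ → X), IsGeoOpt μ₀ μ₁ π ∧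
      ∃ κ₀ κ₁ : Kernel X X, IsMarkovKernel κ₀ ∧ IsMarkovKernel κ₁ ∧
        μ₀ ⊗ₘ κ₀ = endpointLaw π ∧
        μ₁ ⊗ₘ κ₁ = (endpointLaw π).map Prod.swap ∧
        ∀ F : ℝ → ℝ, MemDCinf F → ∀ t ∈ Set.Icc (0:ℝ) 1,
          entFunctional F m (π.map (evalGeo t)) ≤
            ((1 - t : ℝ) : EReal) *
              ((∫ x₀, ∫ x₁, betaInf K (1 - t) x₀ x₁ *
                  F ((μ₀.rnDeriv m x₀).toReal / betaInf K (1 - t) x₀ x₁) ∂(κ₀ x₀) ∂m : ℝ) : EReal)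
            + ((t : ℝ) : EReal) *
              ((∫ x₁, ∫ x₀, betaInf K t x₀ x₁ *
                  F ((μ₁.rnDeriv m x₁).toReal / betaInf K t x₀ x₁) ∂(κ₁ x₁) ∂m : ℝ) : EReal)
            + derivAtInfty F *
              ((ENNReal.ofReal (1 - t) * μ₀.singularPart m Set.univ
                + ENNReal.ofReal t * μ₁.singularPart m Set.univ : ℝ≥0∞) : EReal)

/-- The curvature-dimension condition `CD(K,N)` for `K ≤ 0`, `N ∈ [1,∞)`. -/
def IsCDfin (K N : ℝ) (m : Measure X) : Prop :=
  ∀ μ₀ μ₁ : Measure X, IsProbabilityMeasure μ₀ → IsProbabilityMeasure μ₁ →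
    W2 μ₀ μ₁ ≠ ∞ →
    ∃ π : Measure (ℝ → X), IsGeoOpt μ₀ μ₁ π ∧
      ∃ κ₀ κ₁ : Kernel X X, IsMarkovKernel κ₀ ∧ IsMarkovKernel κ₁ ∧
        μ₀ ⊗ₘ κ₀ = endpointLaw π ∧
        μ₁ ⊗ₘ κ₁ = (endpointLaw π).map Prod.swap ∧
        ∀ F : ℝ → ℝ, MemDCN N F → ∀ t ∈ Set.Icc (0:ℝ) 1,
          entFunctional F m (π.map (evalGeo t)) ≤
            ((1 - t : ℝ) : EReal) *
              ((∫ x₀, ∫ x₁, betaFin K N (1 - t) x₀ x₁ *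
                  F ((μ₀.rnDeriv m x₀).toReal / betaFin K N (1 - t) x₀ x₁) ∂(κ₀ x₀) ∂m : ℝ) : EReal)
            + ((t : ℝ) : EReal) *
              ((∫ x₁, ∫ x₀, betaFin K N t x₀ x₁ *
                  F ((μ₁.rnDeriv m x₁).toReal / betaFin K N t x₀ x₁) ∂(κ₁ x₁) ∂m : ℝ) : EReal)
            + derivAtInfty F *
              ((ENNReal.ofReal (1 - t) * μ₀.singularPart m Set.univ
                + ENNReal.ofReal t * μ₁.singularPart m Set.univ : ℝ≥0∞) : EReal)

/-- The support of a measure on a metric space. -/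
def msupport (μ : Measure X) : Set X := {x : X | ∀ ε > 0, 0 < μ (Metric.ball x ε)}

/-- `g` is an upper gradient of `u`: for every curve `γ : [0,1] → X` which is Lipschitz with
constant `l` (in particular of length at most `l`),
`|u(γ(1)) - u(γ(0))| ≤ l ∫₀¹ g(γ(t)) dt`. -/
def IsUpperGradient (u : X → ℝ) (g : X → ℝ≥0∞) : Prop :=
  Measurable g ∧
  ∀ (γ : ℝ → X) (l : ℝ≥0), LipschitzOnWith l γ (Set.Icc 0 1) →
    ENNReal.ofReal |u (γ 1) - u (γ 0)| ≤ (l : ℝ≥0∞) * ∫⁻ t in Set.Icc (0:ℝ) 1, g (γ t)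

/-- The evolution variational inequality (E.V.I.) condition for the entropy functional `E`:
from every absolutely continuous probability measure there starts a curve `(μ_t)_{t ≥ 0}` with
`limsup_{h ↓ 0} (1/2h)(W₂²(ν,μ_{t+h}) - W₂²(ν,μ_t)) ≤ E(ν) - E(μ_t)` for all `t ≥ 0` and all
absolutely continuous probability measures `ν`. -/
def EVIGradientFlow (E : Measure X → EReal) (m : Measure X) : Prop :=
  ∀ μ₀ : Measure X, IsProbabilityMeasure μ₀ → μ₀ ≪ m →
    ∃ μ : ℝ → Measure X, μ 0 = μ₀ ∧ (∀ t : ℝ, 0 ≤ t → IsProbabilityMeasure (μ t)) ∧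
      ∀ t : ℝ, 0 ≤ t → ∀ ν : Measure X, IsProbabilityMeasure ν → ν ≪ m →
        Filter.limsup (fun h : ℝ =>
            (((1 / (2 * h)) * ((W2sq ν (μ (t + h))).toReal - (W2sq ν (μ t)).toReal) : ℝ) : EReal))
          (nhdsWithin 0 (Set.Ioi 0)) ≤ E ν - E (μ t)

end

lemma aux_preconnected {X : Type*} [MetricSpace X] (hgeo : IsGeodesicSpace X) :
    PreconnectedSpace X := by
  refine ⟨isPreconnected_of_forall_pair ?_⟩
  intro x _ y _
  obtain ⟨γ, hγ, h0, h1⟩ := hgeo x y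
  refine ⟨γ '' Icc 0 1, subset_univ _, ⟨0, by simp, h0⟩, ⟨1, by simp, h1⟩, ?_⟩
  apply isPreconnected_Icc.image
  have : LipschitzOnWith (dist (γ 0) (γ 1)).toNNReal γ (Icc 0 1) := by
    apply LipschitzOnWith.of_dist_le_mul
    intro s hs t ht
    rw [hγ s hs t ht, Real.dist_eq, Real.coe_toNNReal _ dist_nonneg, mul_comm]
  exact this.continuousOn

lemma aux_ball_separable {X : Type*} [MetricSpace X] [MeasurableSpace X] [BorelSpace X]
    (m : Measure X) (hsupp : ∀ x : X, ∀ ε > 0, 0 < m (Metric.ball x ε))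
    (U : Set X) (hU : IsOpen U) (hm : m U ≠ ∞) : TopologicalSpace.IsSeparable U := by
  have key : ∀ ε : ℝ, 0 < ε → ∃ t : Set X, t.Countable ∧ ∀ x ∈ U, ∃ y ∈ t, dist x y ≤ ε := by
    intro ε hε
    obtain ⟨t, htU, hsep, hmax⟩ : ∃ t ⊆ U, (t.Pairwise fun x y => ε < dist x y) ∧
        ∀ x ∈ U, ∃ y ∈ t, dist x y ≤ ε := by
      obtain ⟨t, ht⟩ := zorn_subset {t : Set X | t ⊆ U ∧ t.Pairwise fun x y => ε < dist x y} (by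
        intro c hc hch
        refine ⟨⋃₀ c, ⟨sUnion_subset fun s hs => (hc hs).1, ?_⟩, fun s hs => subset_sUnion_of_mem hs⟩
        exact (pairwise_sUnion hch.directedOn).2 fun s hs => (hc hs).2)
      refine ⟨t, ht.prop.1, ht.prop.2, ?_⟩
      intro x hx
      by_contra! hcon
      have hxt : x ∉ t := fun h => by
        have := hcon x h
        simp at this; linarith
      have h2 : insert x t ⊆ t := by
        apply ht.le_of_ge (y := insert x t) _ (subset_insert x t)
        refine ⟨insert_subset hx ht.prop.1, ?_⟩
        rw [pairwise_insert]
        exact ⟨ht.prop.2, fun b hb _ => ⟨hcon b hb, by rw [dist_comm]; exact hcon b hb⟩⟩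
      exact hxt (h2 (mem_insert _ _))
    refine ⟨t, ?_, hmax⟩
    have : IsFiniteMeasure (m.restrict U) := ⟨by simpa using hm.lt_top⟩
    have hc := Measure.countable_meas_pos_of_disjoint_iUnion (μ := m.restrict U)
      (As := fun x : t => ball (x : X) (ε/2)) (fun x => measurableSet_ball) (by
        intro x y hxy
        apply ball_disjoint_ball
        have := hsep x.2 y.2 (fun h => hxy (Subtype.ext h))
        linarith)
    have huniv : {i : t | 0 < m.restrict U (ball (i : X) (ε/2))} = univ := by
      apply eq_univ_of_forall
      intro x
      simp only [mem_ofPred_eq]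
      rw [Measure.restrict_apply measurableSet_ball]
      obtain ⟨δ, hδ, hδU⟩ := Metric.isOpen_iff.1 hU x (htU x.2)
      refine (hsupp x (min δ (ε/2)) (by positivity)).trans_le (measure_mono ?_)
      intro y hy
      simp only [mem_ball, lt_min_iff] at hy
      exact ⟨hy.2, hδU hy.1⟩
    rw [huniv] at hc
    exact Set.countable_coe_iff.1 (Set.countable_univ_iff.1 hc)
  choose! t ht1 ht2 using key
  refine ⟨⋃ n : ℕ, t (1/((n:ℝ)+1)), countable_iUnion fun n => ht1 _ (by positivity), ?_⟩
  intro x hx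
  rw [Metric.mem_closure_iff]
  intro ε hε
  obtain ⟨n, hn⟩ := exists_nat_one_div_lt hε
  obtain ⟨y, hy, hxy⟩ := ht2 (1/((n:ℝ)+1)) (by positivity) x hx
  exact ⟨y, mem_iUnion.2 ⟨n, hy⟩, hxy.trans_lt hn⟩

lemma aux_separable {X : Type*} [MetricSpace X] [MeasurableSpace X] [BorelSpace X]
    (m : Measure X) [IsLocallyFiniteMeasure m] (hgeo : IsGeodesicSpace X)
    (hsupp : ∀ x : X, ∀ ε > 0, 0 < m (Metric.ball x ε)) :
    SecondCountableTopology X := by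
  rcases isEmpty_or_nonempty X with hX | ⟨⟨x0⟩⟩
  · infer_instance
  have := aux_preconnected hgeo
  let U : ℕ → Set X := fun n => {x | TopologicalSpace.IsSeparable (ball x (1/((n:ℝ)+1)))}
  have hU : ∀ x, ∃ n, x ∈ U n := by
    intro x
    obtain ⟨s, hs, hms⟩ := m.finiteAt_nhds x
    obtain ⟨ε, hε, hεs⟩ := Metric.mem_nhds_iff.1 hs
    obtain ⟨n, hn⟩ := exists_nat_one_div_lt hε
    refine ⟨n, aux_ball_separable m hsupp _ isOpen_ball (ne_of_lt ?_)⟩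
    exact (measure_mono ((ball_subset_ball hn.le).trans hεs)).trans_lt hms
  let nx : Set X → Set X := fun S => ⋃ n, ⋃ x ∈ S ∩ U n, ball x (1/((n:ℝ)+1))
  have hnx : ∀ S, TopologicalSpace.IsSeparable S → TopologicalSpace.IsSeparable (nx S) := by
    intro S hS
    refine TopologicalSpace.isSeparable_iUnion.2 fun n => ?_
    obtain ⟨D, hD, hDc, hSD⟩ := (hS.mono (inter_subset_left (t := U n))).exists_countable_dense_subset
    have hDc' : Countable D := hDc
    have hsepD : TopologicalSpace.IsSeparable (⋃ d : D, ball (d : X) (1/((n:ℝ)+1))) :=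
      TopologicalSpace.isSeparable_iUnion.2 fun d => (hD d.2).2
    refine hsepD.mono ?_
    intro y hy
    simp only [mem_iUnion, exists_prop, Subtype.exists] at hy ⊢
    obtain ⟨x, hx, hxy⟩ := hy
    obtain ⟨d, hd, hdx⟩ := Metric.mem_closure_iff.1 (hSD hx) _ (sub_pos.2 hxy)
    refine ⟨d, hd, ?_⟩
    rw [mem_ball]
    have := dist_triangle y x d
    linarith
  let S : ℕ → Set X := fun k => nx^[k] {x0}
  have hS : ∀ k, TopologicalSpace.IsSeparable (S k) := by
    intro k
    induction k with
    | zero => exact (countable_singleton x0).isSeparable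
    | succ k ih =>
      simp only [S, Function.iterate_succ_apply'] at ih ⊢
      exact hnx _ ih
  have hsucc : ∀ k, S (k+1) = nx (S k) := fun k => by simp only [S, Function.iterate_succ_apply']
  have hclopen : IsClopen (⋃ k, S k) := by
    constructor
    · apply isClosed_of_closure_subset
      intro p hp
      obtain ⟨n, hn⟩ := hU p
      obtain ⟨q, hq, hpq⟩ := Metric.mem_closure_iff.1 hp (1/(((2*n+1 : ℕ):ℝ)+1)) (by positivity)
      obtain ⟨k, hk⟩ := mem_iUnion.1 hq
      refine mem_iUnion.2 ⟨k+1, ?_⟩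
      rw [hsucc]
      simp only [nx, mem_iUnion, exists_prop]
      refine ⟨2*n+1, q, ⟨hk, ?_⟩, hpq⟩
      refine TopologicalSpace.IsSeparable.mono hn ?_
      apply ball_subset_ball'
      rw [dist_comm] at hpq
      have : (1/(((2*n+1 : ℕ):ℝ)+1)) + (1/(((2*n+1 : ℕ):ℝ)+1)) = 1/((n:ℝ)+1) := by
        push_cast; field_simp; ring
      linarith
    · have : (⋃ k, S k) = ⋃ k, S (k+1) := by
        apply Subset.antisymm
        · intro p hp
          obtain ⟨k, hk⟩ := mem_iUnion.1 hp
          refine mem_iUnion.2 ⟨k, ?_⟩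
          rw [hsucc]
          obtain ⟨n, hn⟩ := hU p
          simp only [nx, mem_iUnion, exists_prop]
          exact ⟨n, p, ⟨hk, hn⟩, mem_ball_self (by positivity)⟩
        · exact iUnion_subset fun k => subset_iUnion S (k+1)
      rw [this]
      refine isOpen_iUnion fun k => ?_
      rw [hsucc]
      exact isOpen_iUnion fun n => isOpen_biUnion fun x _ => isOpen_ball
  have huniv := hclopen.eq_univ ⟨x0, mem_iUnion.2 ⟨0, rfl⟩⟩
  have hsep : TopologicalSpace.IsSeparable (univ : Set X) := by
    rw [← huniv]; exact TopologicalSpace.isSeparable_iUnion.2 hS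
  have : TopologicalSpace.SeparableSpace X := TopologicalSpace.isSeparable_univ_iff.1 hsep
  exact UniformSpace.secondCountable_of_separable X

lemma aux_box_closure {Y : Type*} [TopologicalSpace Y] [T2Space Y] [RegularSpace Y]
    (h : (ℕ → ℕ) → Y) (hh : Continuous h) (b : ℕ → ℕ) :
    ⋂ n : ℕ, closure (h '' {a | ∀ i < n, a i ≤ b i}) ⊆ h '' {a | ∀ i, a i ≤ b i} := by
  have hK : IsCompact {a : ℕ → ℕ | ∀ i, a i ≤ b i} := by
    have : {a : ℕ → ℕ | ∀ i, a i ≤ b i} = Set.pi univ (fun i => Set.Iic (b i)) := by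
      ext a; simp [Pi.le_def]
    rw [this]
    exact isCompact_univ_pi fun i => (Set.finite_Iic (b i)).isCompact
  intro y hy
  by_contra hyK
  obtain ⟨V, W, hV, hW, hKV, hyW, hVW⟩ := SeparatedNhds.of_isCompact_isCompact (hK.image hh)
    (isCompact_singleton (x := y)) (disjoint_singleton_right.2 hyK)
  have hcl : ∀ n : ℕ, ∃ a : ℕ → ℕ, (∀ i < n, a i ≤ b i) ∧ h a ∉ V := by
    intro n
    have h1 := mem_iInter.1 hy n
    rw [_root_.mem_closure_iff] at h1
    obtain ⟨z, hzW, a, ha, rfl⟩ := h1 W hW (hyW rfl)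
    exact ⟨a, ha, fun hz => disjoint_left.1 hVW hz hzW⟩
  choose a ha haV using hcl
  obtain ⟨c, hc, φ, hφ, hlim⟩ := hK.tendsto_subseq (x := fun n i => min (a n i) (b i))
    (fun n i => min_le_right _ _)
  have hlim2 : Tendsto (fun k => a (φ k)) atTop (𝓝 c) := by
    rw [tendsto_pi_nhds] at hlim ⊢
    intro i
    refine (hlim i).congr' ?_
    filter_upwards [eventually_gt_atTop i] with k hk
    have : i < φ k := hk.trans_le (hφ.id_le k)
    exact min_eq_left (ha _ i this)
  have h3 := hV.isClosed_compl.mem_of_tendsto ((hh.tendsto c).comp hlim2)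
    (Eventually.of_forall fun k => haV (φ k))
  exact h3 (hKV ⟨c, hc, rfl⟩)

lemma aux_capacity {Y : Type*} [TopologicalSpace Y] [T2Space Y] [RegularSpace Y]
    [MeasurableSpace Y] [BorelSpace Y] (μ : Measure Y) [IsFiniteMeasure μ]
    (h : (ℕ → ℕ) → Y) (hh : Continuous h) (hs : Function.Surjective h)
    (L : ℝ≥0∞) (hL : L < μ univ) :
    ∃ b : ℕ → ℕ, L ≤ μ (h '' {a | ∀ i, a i ≤ b i}) := by
  have step : ∀ (S : Set (ℕ → ℕ)) (n : ℕ), L < μ (h '' S) → ∃ k, L < μ (h '' (S ∩ {a | a n ≤ k})) := by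
    intro S n hS
    have hU : h '' S = ⋃ k, h '' (S ∩ {a | a n ≤ k}) := by
      rw [← image_iUnion, ← inter_iUnion]
      congr 1
      have : (⋃ k, {a : ℕ → ℕ | a n ≤ k}) = univ := by
        apply eq_univ_of_forall; intro a; exact mem_iUnion.2 ⟨a n, le_refl (a n)⟩
      rw [this, inter_univ]
    rw [hU, Monotone.measure_iUnion] at hS
    · exact lt_iSup_iff.1 hS
    · intro i j hij
      apply image_mono
      apply inter_subset_inter_right
      intro a ha
      exact le_trans ha hij
  choose! k hk using step
  let S : ℕ → Set (ℕ → ℕ) := fun n => Nat.rec univ (fun n S => S ∩ {a | a n ≤ k S n}) n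
  have hS : ∀ n, L < μ (h '' S n) := by
    intro n
    induction n with
    | zero => simpa [S, image_univ, hs.range_eq] using hL
    | succ n ih => exact hk _ _ ih
  let b : ℕ → ℕ := fun n => k (S n) n
  have hSb : ∀ n, S n = {a | ∀ i < n, a i ≤ b i} := by
    intro n
    induction n with
    | zero => simp [S]
    | succ n ih =>
      have : S (n+1) = S n ∩ {a | a n ≤ b n} := rfl
      rw [this, ih]
      ext a
      simp only [mem_inter_iff, mem_ofPred_eq, Nat.lt_succ_iff_lt_or_eq]
      constructor
      · rintro ⟨h1, h2⟩ i (hi | rfl)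
        · exact h1 i hi
        · exact h2
      · intro h1
        exact ⟨fun i hi => h1 i (Or.inl hi), h1 n (Or.inr rfl)⟩
  refine ⟨b, le_trans ?_ (measure_mono (aux_box_closure h hh b))⟩
  rw [Antitone.measure_iInter]
  · refine le_iInf fun n => ?_
    rw [← hSb]
    exact (hS n).le.trans (measure_mono subset_closure)
  · intro i j hij
    apply closure_mono
    apply image_mono
    intro a ha l hl
    exact ha l (hl.trans_le hij)
  · intro n; exact isClosed_closure.measurableSet.nullMeasurableSet
  · exact ⟨0, measure_ne_top _ _⟩

lemma aux_sInf_meas {Y : Type*} [MeasurableSpace Y] (T : ℕ → Set Y)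
    (hT : ∀ j, MeasurableSet (T j)) : Measurable (fun y => sInf {j | y ∈ T j}) := by
  classical
  have h1 : ∀ y, sInf {j | y ∈ T j} = sInf {j | y ∈ T j ∪ (⋂ i, (T i)ᶜ)} := by
    intro y
    by_cases hy : ∃ j, y ∈ T j
    · congr 1
      ext j
      obtain ⟨i, hi⟩ := hy
      simp only [mem_ofPred_eq, mem_union, mem_iInter, mem_compl_iff]
      exact ⟨Or.inl, fun h => h.resolve_right fun h' => h' i hi⟩
    · push Not at hy
      have e1 : {j | y ∈ T j} = ∅ := by ext j; simp [hy j]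
      have e2 : {j | y ∈ T j ∪ (⋂ i, (T i)ᶜ)} = univ := by
        ext j; simp [hy]
      rw [e1, e2]; simp
  have hex : ∀ y, ∃ j, y ∈ T j ∪ (⋂ i, (T i)ᶜ) := by
    intro y
    by_cases hy : ∃ j, y ∈ T j
    · obtain ⟨j, hj⟩ := hy; exact ⟨j, Or.inl hj⟩
    · push Not at hy; exact ⟨0, Or.inr (by simpa using hy)⟩
  have h2 : (fun y => sInf {j | y ∈ T j}) = fun y => Nat.find (hex y) := by
    ext y
    rw [h1]
    apply le_antisymm
    · exact Nat.sInf_le (Nat.find_spec (hex y))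
    · exact Nat.find_min' (hex y) (Nat.sInf_mem (s := {j | y ∈ T j ∪ (⋂ i, (T i)ᶜ)}) (hex y))
  rw [h2]
  apply measurable_find
  intro k
  exact (hT k).union (MeasurableSet.iInter fun i => (hT i).compl)

lemma aux_select_compact {Y : Type*} [TopologicalSpace Y] [T2Space Y]
    [MeasurableSpace Y] [BorelSpace Y]
    (h : (ℕ → ℕ) → Y) (hh : Continuous h) (K : Set (ℕ → ℕ)) (hK : IsCompact K) :
    ∃ s : Y → (ℕ → ℕ), Measurable s ∧ ∀ y ∈ h '' K, h (s y) = y := by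
  let F : ℕ → Y → Set (ℕ → ℕ) := fun n =>
    Nat.rec (fun y => K ∩ h ⁻¹' {y}) (fun n F y => F y ∩ {a | a n = sInf {j | ∃ a ∈ F y, a n = j}}) n
  let s : Y → ℕ → ℕ := fun y n => sInf {j | ∃ a ∈ F n y, a n = j}
  have hF0 : ∀ y, F 0 y = K ∩ h ⁻¹' {y} := fun y => rfl
  have hFs : ∀ n y, F (n+1) y = F n y ∩ {a | a n = s y n} := fun n y => rfl
  have hclop : ∀ n j : ℕ, IsClosed {a : ℕ → ℕ | a n = j} := fun n j =>
    isClosed_eq (continuous_apply n) continuous_const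
  have key : ∀ n, ∀ C : Set (ℕ → ℕ), IsClosed C → MeasurableSet {y | (F n y ∩ C).Nonempty} := by
    intro n
    induction n with
    | zero =>
      intro C hC
      have : {y | (F 0 y ∩ C).Nonempty} = h '' (K ∩ C) := by
        ext y
        simp only [hF0, mem_ofPred_eq, mem_image]
        constructor
        · rintro ⟨a, ⟨h1, h2⟩, h3⟩; exact ⟨a, ⟨h1, h3⟩, h2⟩
        · rintro ⟨a, ⟨h1, h3⟩, h2⟩; exact ⟨a, ⟨h1, h2⟩, h3⟩
      rw [this]
      exact ((hK.inter_right hC).image hh).isClosed.measurableSet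
    | succ n ih =>
      intro C hC
      have hsn : Measurable (fun y => s y n) :=
        aux_sInf_meas (fun j => {y | ∃ a ∈ F n y, a n = j}) (fun j => ih _ (hclop n j))
      have : {y | (F (n+1) y ∩ C).Nonempty} =
          ⋃ j, {y | s y n = j} ∩ {y | (F n y ∩ (C ∩ {a | a n = j})).Nonempty} := by
        ext y
        simp only [hFs, mem_ofPred_eq, mem_iUnion, mem_inter_iff]
        constructor
        · rintro ⟨a, ⟨h1, h2⟩, h3⟩; exact ⟨s y n, rfl, a, h1, h3, h2⟩
        · rintro ⟨j, rfl, a, h1, h3, h2⟩; exact ⟨a, ⟨h1, h2⟩, h3⟩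
      rw [this]
      exact MeasurableSet.iUnion fun j => (hsn (measurableSet_singleton j)).inter
        (ih _ (hC.inter (hclop n j)))
  refine ⟨s, measurable_pi_iff.2 fun n =>
    aux_sInf_meas (fun j => {y | ∃ a ∈ F n y, a n = j}) (fun j => key n _ (hclop n j)), ?_⟩
  rintro y ⟨a0, ha0, hay⟩
  have hcl : ∀ n, IsCompact (F n y) ∧ (F n y).Nonempty := by
    intro n
    induction n with
    | zero => exact ⟨hK.inter_right (isClosed_singleton.preimage hh), a0, ha0, hay⟩
    | succ n ih =>
      rw [hFs]
      refine ⟨ih.1.inter_right (hclop _ _), ?_⟩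
      obtain ⟨a, ha⟩ := ih.2
      obtain ⟨a', ha', h2⟩ := Nat.sInf_mem (s := {j | ∃ a ∈ F n y, a n = j}) ⟨a n, a, ha, rfl⟩
      exact ⟨a', ha', h2⟩
  obtain ⟨a, ha⟩ := IsCompact.nonempty_iInter_of_sequence_nonempty_isCompact_isClosed (fun n => F n y)
    (fun n => by rw [hFs]; exact inter_subset_left) (fun n => (hcl n).2) (hcl 0).1
    (fun n => (hcl n).1.isClosed)
  rw [mem_iInter] at ha
  have : a = s y := by
    ext n
    have := ha (n+1)
    rw [hFs] at this
    exact this.2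
  rw [← this]
  exact (ha 0).2

lemma aux_select {P Y : Type*} [TopologicalSpace P] [PolishSpace P] [MeasurableSpace P] [BorelSpace P]
    [TopologicalSpace Y] [T2Space Y] [RegularSpace Y] [MeasurableSpace Y] [BorelSpace Y]
    [Nonempty P] (μ : Measure Y) [IsFiniteMeasure μ]
    (e : P → Y) (he : Continuous e) (hs : Function.Surjective e) :
    ∃ s : Y → P, Measurable s ∧ ∀ᵐ y ∂μ, e (s y) = y := by
  obtain ⟨f, hf, hfs⟩ := _root_.PolishSpace.exists_nat_nat_continuous_surjective P
  suffices H : ∃ s : Y → (ℕ → ℕ), Measurable s ∧ ∀ᵐ y ∂μ, e (f (s y)) = y by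
    obtain ⟨s, h1, h2⟩ := H
    exact ⟨f ∘ s, hf.measurable.comp h1, h2⟩
  rcases eq_or_ne μ 0 with h0 | h0
  · subst h0
    exact ⟨fun _ => 0, measurable_const, by simp⟩
  have hpos : 0 < μ univ := by simpa [pos_iff_ne_zero] using h0
  obtain ⟨L, -, hL, hlim⟩ := exists_seq_strictMono_tendsto' hpos
  have hb := fun n => aux_capacity μ (e ∘ f) (he.comp hf) (hs.comp hfs) (L n) (hL n).2
  choose b hb using hb
  have hK : ∀ n, IsCompact {a : ℕ → ℕ | ∀ i, a i ≤ b n i} := by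
    intro n
    have : {a : ℕ → ℕ | ∀ i, a i ≤ b n i} = Set.pi univ (fun i => Set.Iic (b n i)) := by
      ext a; simp [Pi.le_def]
    rw [this]
    exact isCompact_univ_pi fun i => (Set.finite_Iic (b n i)).isCompact
  choose s hsm hse using fun n => aux_select_compact (e ∘ f) (he.comp hf) _ (hK n)
  let A : ℕ → Set Y := fun n => (e ∘ f) '' {a : ℕ → ℕ | ∀ i, a i ≤ b n i}
  have hA : ∀ n, MeasurableSet (A n) := fun n => ((hK n).image (he.comp hf)).isClosed.measurableSet
  obtain ⟨S, hS, hSe⟩ := exists_measurable_piecewise (disjointed A)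
    (fun n => MeasurableSet.disjointed hA n) s hsm (by
      intro i j hij y hy
      exact absurd hy.2 (disjoint_left.1 (disjoint_disjointed A hij) hy.1))
  refine ⟨S, hS, ?_⟩
  have hfull : μ (⋃ n, A n)ᶜ = 0 := by
    rw [measure_compl (MeasurableSet.iUnion hA) (measure_ne_top _ _), tsub_eq_zero_iff_le]
    refine le_of_tendsto' hlim fun n => (hb n).trans (measure_mono (subset_iUnion A n))
  rw [ae_iff]
  refine measure_mono_null ?_ hfull
  intro y hy hyA
  rw [← iUnion_disjointed] at hyA
  obtain ⟨n, hn⟩ := mem_iUnion.1 hyA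
  apply hy
  rw [hSe n hn]
  exact hse n y (disjointed_subset A n hn)

lemma aux_geo_select {X : Type*} [MetricSpace X] [CompleteSpace X] [SecondCountableTopology X]
    [MeasurableSpace X] [BorelSpace X] (hgeo : IsGeodesicSpace X) [Nonempty X]
    (σ : Measure (X × X)) [IsFiniteMeasure σ] :
    ∃ G : ℝ → X × X → X, Measurable (fun p : ℝ × (X × X) => G p.1 p.2) ∧
      ∀ᵐ w ∂σ, IsGeodesicMap (fun t => G t w) ∧ G 0 w = w.1 ∧ G 1 w = w.2 := by
  let Q : Set C(unitInterval, X) := {γ | ∀ s t : unitInterval,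
    dist (γ s) (γ t) = |(s:ℝ) - t| * dist (γ 0) (γ 1)}
  have hQ : IsClosed Q := by
    have : Q = ⋂ s : unitInterval, ⋂ t : unitInterval, {γ : C(unitInterval, X) |
        dist (γ s) (γ t) = |(s:ℝ) - t| * dist (γ 0) (γ 1)} := by
      ext γ; simp only [Q, mem_iInter, mem_ofPred_eq]
    rw [this]
    refine isClosed_iInter fun s => isClosed_iInter fun t => isClosed_eq ?_ ?_
    · fun_prop
    · fun_prop
  have hpol : PolishSpace Q := hQ.polishSpace
  let _ : MeasurableSpace Q := borel Q
  have : BorelSpace Q := ⟨rfl⟩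
  let e : Q → X × X := fun γ => (γ.1 0, γ.1 1)
  have he : Continuous e := by
    have h0 : Continuous fun γ : Q => γ.1 0 := (continuous_eval_const (0 : unitInterval)).comp continuous_subtype_val
    have h1 : Continuous fun γ : Q => γ.1 1 := (continuous_eval_const (1 : unitInterval)).comp continuous_subtype_val
    exact h0.prodMk h1
  have hes : Function.Surjective e := by
    rintro ⟨x, y⟩
    obtain ⟨γ, hγ, h0, h1⟩ := hgeo x y
    have hc : Continuous fun t : unitInterval => γ t := by
      have : LipschitzWith (dist (γ 0) (γ 1)).toNNReal fun t : unitInterval => γ t := by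
        apply LipschitzWith.of_dist_le_mul
        intro s t
        rw [hγ s s.2 t t.2, Subtype.dist_eq, Real.dist_eq, Real.coe_toNNReal _ dist_nonneg, mul_comm]
      exact this.continuous
    refine ⟨⟨⟨fun t => γ t, hc⟩, ?_⟩, ?_⟩
    · intro s t
      simpa using hγ s s.2 t t.2
    · simp [e, h0, h1]
  have : Nonempty Q := by
    obtain ⟨x⟩ := ‹Nonempty X›
    obtain ⟨q, -⟩ := hes (x, x)
    exact ⟨q⟩
  obtain ⟨s, hs, hse⟩ := aux_select σ e he hes
  refine ⟨fun t w => (s w).1 (projIcc 0 1 zero_le_one t), ?_, ?_⟩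
  · have h1 : Continuous fun p : ℝ × Q => p.2.1 (projIcc 0 1 zero_le_one p.1) := by
      have h2 : Continuous fun p : ℝ × Q => projIcc (0:ℝ) 1 zero_le_one p.1 :=
        continuous_projIcc.comp continuous_fst
      have h3 : Continuous fun p : ℝ × Q => p.2.1 := continuous_subtype_val.comp continuous_snd
      exact h3.eval h2
    have h4 : Measurable fun p : ℝ × Q => p.2.1 (projIcc 0 1 zero_le_one p.1) := h1.measurable
    exact h4.comp (measurable_fst.prodMk (hs.comp measurable_snd))
  · filter_upwards [hse] with w hw
    have p0 : projIcc (0:ℝ) 1 zero_le_one 0 = 0 := by simp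
    have p1 : projIcc (0:ℝ) 1 zero_le_one 1 = 1 := by simp
    refine ⟨?_, ?_, ?_⟩
    · intro a ha b hb
      have := (s w).2 (projIcc 0 1 zero_le_one a) (projIcc 0 1 zero_le_one b)
      simp only [p0, p1]
      rw [this, projIcc_of_mem _ ha, projIcc_of_mem _ hb]
    · simp only [p0]; exact congrArg Prod.fst hw
    · simp only [p1]; exact congrArg Prod.snd hw

set_option linter.unusedSectionVars false

section
variable {X : Type*} [MetricSpace X] [CompleteSpace X] [SecondCountableTopology X]
    [MeasurableSpace X] [BorelSpace X]

lemma aux_meas_edist {Ω : Type*} [MeasurableSpace Ω] {f g : Ω → X} (hf : Measurable f)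
    (hg : Measurable g) : Measurable fun ω => edist (f ω) (g ω) ^ 2 :=
  (hf.edist hg).pow_const 2

lemma aux_glue [Nonempty X] (σ₁ σ₂ : Measure (X × X)) [IsFiniteMeasure σ₁] [IsFiniteMeasure σ₂]
    (h : σ₁.map Prod.snd = σ₂.map Prod.fst) :
    ∃ T : Measure ((X × X) × X), T.map Prod.fst = σ₁ ∧
      T.map (fun p => (p.1.2, p.2)) = σ₂ := by
  let κ := σ₂.condKernel
  refine ⟨σ₁ ⊗ₘ (κ.comap Prod.snd measurable_snd), ?_, ?_⟩
  · exact Measure.fst_compProd _ _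
  · have h2 : σ₂ = (σ₁.map Prod.snd) ⊗ₘ κ := by
      rw [h]; exact (σ₂.disintegrate κ).symm
    rw [h2]
    ext A hA
    rw [Measure.map_apply (by fun_prop) hA, Measure.compProd_apply hA,
      Measure.compProd_apply ((by fun_prop : Measurable fun p : (X × X) × X => (p.1.2, p.2)) hA),
      lintegral_map (Kernel.measurable_kernel_prodMk_left hA) measurable_snd]
    rfl

lemma aux_isProb_of_map {σ : Measure (X × X)} {μ : Measure X} [IsProbabilityMeasure μ]
    (h : σ.map Prod.fst = μ) : IsProbabilityMeasure σ := by
  constructor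
  have : μ univ = 1 := measure_univ
  rw [← h, Measure.map_apply measurable_fst MeasurableSet.univ] at this
  simpa using this

lemma aux_W2_le {μ ν : Measure X} {σ : Measure (X × X)} (h1 : σ.map Prod.fst = μ)
    (h2 : σ.map Prod.snd = ν) : W2 μ ν ≤ (∫⁻ p, edist p.1 p.2 ^ 2 ∂σ) ^ (1/2 : ℝ) := by
  unfold W2 W2sq
  gcongr
  exact iInf₂_le σ ⟨h1, h2⟩

lemma aux_W2_triangle {μ l ν : Measure X} [IsProbabilityMeasure μ] [IsProbabilityMeasure l] :
    W2 μ ν ≤ W2 μ l + W2 l ν := by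
  have key : ∀ σ₁ : Measure (X × X), (σ₁.map Prod.fst = μ ∧ σ₁.map Prod.snd = l) →
      ∀ σ₂ : Measure (X × X), (σ₂.map Prod.fst = l ∧ σ₂.map Prod.snd = ν) →
      W2 μ ν ≤ (∫⁻ p, edist p.1 p.2 ^ 2 ∂σ₁) ^ (1/2 : ℝ) + (∫⁻ p, edist p.1 p.2 ^ 2 ∂σ₂) ^ (1/2 : ℝ) := by
    intro σ₁ h₁ σ₂ h₂
    have := aux_isProb_of_map h₁.1
    have := aux_isProb_of_map h₂.1
    have hne : Nonempty X := by
      by_contra hX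
      rw [not_nonempty_iff] at hX
      have : μ univ = 1 := measure_univ
      simp [Set.eq_empty_of_isEmpty] at this
    obtain ⟨T, hT1, hT2⟩ := aux_glue σ₁ σ₂ (h₁.2.trans h₂.1.symm)
    have hm : Measurable fun p : (X × X) × X => (p.1.2, p.2) := by fun_prop
    have hm' : Measurable fun p : (X × X) × X => (p.1.1, p.2) := by fun_prop
    have e1 : (T.map (fun p => (p.1.1, p.2))).map Prod.fst = μ := by
      rw [Measure.map_map measurable_fst hm', ← h₁.1, ← hT1, Measure.map_map measurable_fst measurable_fst]
      rfl
    have e2 : (T.map (fun p => (p.1.1, p.2))).map Prod.snd = ν := by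
      rw [Measure.map_map measurable_snd hm', ← h₂.2, ← hT2, Measure.map_map measurable_snd hm]
      rfl
    refine (aux_W2_le e1 e2).trans ?_
    rw [lintegral_map (aux_meas_edist measurable_fst measurable_snd) hm', ← hT1, ← hT2,
      lintegral_map (aux_meas_edist measurable_fst measurable_snd) hm,
      lintegral_map (aux_meas_edist measurable_fst measurable_snd) measurable_fst]
    have hmink := ENNReal.lintegral_Lp_add_le (μ := T) (p := 2)
      (f := fun p => edist p.1.1 p.1.2) (g := fun p => edist p.1.2 p.2)
      (Measurable.aemeasurable (by fun_prop)) (Measurable.aemeasurable (by fun_prop)) (by norm_num)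
    simp only [Pi.add_apply, ENNReal.rpow_two] at hmink
    refine le_trans ?_ hmink
    gcongr with p
    exact edist_triangle _ _ _
  have hmono : ∀ μ ν : Measure X, W2 μ ν = ⨅ (σ : Measure (X × X)) (_ : σ.map Prod.fst = μ ∧ σ.map Prod.snd = ν),
      (∫⁻ p, edist p.1 p.2 ^ 2 ∂σ) ^ (1/2 : ℝ) := by
    intro μ ν
    unfold W2 W2sq
    have := (ENNReal.orderIsoRpow (1/2:ℝ) (by norm_num)).map_iInf₂
      (fun (σ : Measure (X × X)) (_ : σ.map Prod.fst = μ ∧ σ.map Prod.snd = ν) => ∫⁻ p, edist p.1 p.2 ^ 2 ∂σ)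
    exact this
  rw [hmono μ l, hmono l ν]
  simp only [ENNReal.iInf_add, ENNReal.add_iInf]
  refine le_iInf₂ fun σ₁ h₁ => le_iInf₂ fun σ₂ h₂ => key _ ?_ _ ?_
  all_goals first | exact h₁ | exact h₂

lemma aux_isW2Geodesic {Ω : Type*} [MeasurableSpace Ω] (P : Measure Ω) [IsProbabilityMeasure P]
    (G : ℝ → Ω → X) (hG : ∀ t, Measurable (G t))
    (hgeo : ∀ᵐ ω ∂P, IsGeodesicMap (fun t => G t ω))
    (hfin : ∫⁻ ω, edist (G 0 ω) (G 1 ω) ^ 2 ∂P ≠ ∞)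
    (hopt : ∫⁻ ω, edist (G 0 ω) (G 1 ω) ^ 2 ∂P ≤ W2sq (P.map (G 0)) (P.map (G 1))) :
    IsW2Geodesic (fun t => P.map (G t)) := by
  have hprob : ∀ t, IsProbabilityMeasure (P.map (G t)) :=
    fun t => Measure.isProbabilityMeasure_map (hG t).aemeasurable
  set D := (∫⁻ ω, edist (G 0 ω) (G 1 ω) ^ 2 ∂P) ^ (1/2 : ℝ) with hD
  have hDfin : D ≠ ∞ := ENNReal.rpow_ne_top_of_nonneg (by norm_num) hfin
  have hup : ∀ s ∈ Icc (0:ℝ) 1, ∀ t ∈ Icc (0:ℝ) 1,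
      W2 (P.map (G s)) (P.map (G t)) ≤ ENNReal.ofReal |s - t| * D := by
    intro s hs t ht
    have hm : Measurable fun ω => (G s ω, G t ω) := (hG s).prodMk (hG t)
    refine (aux_W2_le (σ := P.map fun ω => (G s ω, G t ω)) ?_ ?_).trans ?_
    · rw [Measure.map_map measurable_fst hm]; rfl
    · rw [Measure.map_map measurable_snd hm]; rfl
    · rw [lintegral_map (aux_meas_edist measurable_fst measurable_snd) hm]
      have : ∫⁻ ω, edist (G s ω) (G t ω) ^ 2 ∂P =
          ENNReal.ofReal |s - t| ^ 2 * ∫⁻ ω, edist (G 0 ω) (G 1 ω) ^ 2 ∂P := by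
        rw [← lintegral_const_mul _ (aux_meas_edist (hG 0) (hG 1))]
        refine lintegral_congr_ae ?_
        filter_upwards [hgeo] with ω hω
        rw [← mul_pow, edist_dist, edist_dist, ← ENNReal.ofReal_mul (abs_nonneg _), hω s hs t ht]
      rw [this, ENNReal.mul_rpow_of_nonneg _ _ (by norm_num), ← ENNReal.rpow_two, ← ENNReal.rpow_mul]
      have h22 : (2:ℝ) * (1/2) = 1 := by norm_num
      rw [h22, ENNReal.rpow_one]
  have h01 : W2 (P.map (G 0)) (P.map (G 1)) = D := by
    apply le_antisymm
    · simpa using hup 0 (by simp) 1 (by simp)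
    · unfold W2; rw [hD]; gcongr
  refine ⟨fun t _ => hprob t, by simpa [h01] using hDfin, ?_⟩
  have hle : ∀ s ∈ Icc (0:ℝ) 1, ∀ t ∈ Icc (0:ℝ) 1, s ≤ t →
      ENNReal.ofReal |s - t| * D ≤ W2 (P.map (G s)) (P.map (G t)) ∧
      ENNReal.ofReal |s - t| * D ≤ W2 (P.map (G t)) (P.map (G s)) := by
    intro s hs t ht hst
    have a1 : ENNReal.ofReal |0 - s| = ENNReal.ofReal s := by rw [zero_sub, abs_neg, abs_of_nonneg hs.1]
    have a2 : ENNReal.ofReal |t - 1| = ENNReal.ofReal (1 - t) := by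
      rw [abs_sub_comm, abs_of_nonneg (sub_nonneg.2 ht.2)]
    have a3 : ENNReal.ofReal |s - t| = ENNReal.ofReal (t - s) := by
      rw [abs_sub_comm, abs_of_nonneg (sub_nonneg.2 hst)]
    have hsum : D = ENNReal.ofReal s * D + ENNReal.ofReal (1-t) * D + ENNReal.ofReal |s - t| * D := by
      rw [a3, ← add_mul, ← add_mul, ← ENNReal.ofReal_add hs.1 (sub_nonneg.2 ht.2),
        ← ENNReal.ofReal_add (add_nonneg hs.1 (sub_nonneg.2 ht.2)) (sub_nonneg.2 hst)]
      ring_nf; simp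
    have hsymm : W2 (P.map (G t)) (P.map (G s)) = W2 (P.map (G s)) (P.map (G t)) := by
      have hs' : ∀ μ ν : Measure X, W2sq μ ν ≤ W2sq ν μ := by
        intro μ ν
        refine le_iInf₂ fun σ hσ => ?_
        refine le_trans (iInf₂_le (σ.map Prod.swap) (And.intro ?h1 ?h2)) ?h3
        case h1 => rw [Measure.map_map measurable_fst measurable_swap, ← hσ.2]; rfl
        case h2 => rw [Measure.map_map measurable_snd measurable_swap, ← hσ.1]; rfl
        case h3 =>
          rw [lintegral_map (aux_meas_edist measurable_fst measurable_snd) measurable_swap]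
          simp [edist_comm]
      unfold W2
      rw [le_antisymm (hs' _ _) (hs' _ _)]
    rw [hsymm, and_self]
    have htri : D ≤ ENNReal.ofReal s * D + ENNReal.ofReal (1-t) * D + W2 (P.map (G s)) (P.map (G t)) := by
      have t1 : W2 (P.map (G 0)) (P.map (G 1)) ≤ W2 (P.map (G 0)) (P.map (G s)) + W2 (P.map (G s)) (P.map (G 1)) :=
        aux_W2_triangle
      have t2 : W2 (P.map (G s)) (P.map (G 1)) ≤ W2 (P.map (G s)) (P.map (G t)) + W2 (P.map (G t)) (P.map (G 1)) :=
        aux_W2_triangle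
      have u1 := hup 0 (by simp) s hs
      have u2 := hup t ht 1 (by simp)
      rw [a1] at u1
      rw [a2] at u2
      calc D = W2 (P.map (G 0)) (P.map (G 1)) := h01.symm
        _ ≤ ENNReal.ofReal s * D + (W2 (P.map (G s)) (P.map (G t)) + ENNReal.ofReal (1-t) * D) :=
          t1.trans (add_le_add u1 (t2.trans (add_le_add le_rfl u2)))
        _ = _ := by ring
    have hfin2 : ENNReal.ofReal s * D + ENNReal.ofReal (1-t) * D ≠ ∞ :=
      ENNReal.add_ne_top.2 ⟨ENNReal.mul_ne_top ENNReal.ofReal_ne_top hDfin,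
        ENNReal.mul_ne_top ENNReal.ofReal_ne_top hDfin⟩
    exact (ENNReal.add_le_add_iff_left hfin2).1 (hsum.symm.le.trans htri)
  intro s hs t ht
  simp only [h01]
  apply le_antisymm (hup s hs t ht)
  rcases le_total s t with h | h
  · exact (hle s hs t ht h).1
  · rw [abs_sub_comm]; exact (hle t ht s hs h).2

/-- Restriction of an optimal plan is optimal. -/
lemma aux_restrict_opt {Ω : Type*} [MeasurableSpace Ω] (P : Measure Ω) [IsProbabilityMeasure P]
    (G₀ G₁ : Ω → X) (h0 : Measurable G₀) (h1 : Measurable G₁)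
    (hfin : ∫⁻ ω, edist (G₀ ω) (G₁ ω) ^ 2 ∂P ≠ ∞)
    (hopt : ∫⁻ ω, edist (G₀ ω) (G₁ ω) ^ 2 ∂P ≤ W2sq (P.map G₀) (P.map G₁))
    (A : Set Ω) (hA : MeasurableSet A) (hPA : P A ≠ 0) :
    ∫⁻ ω, edist (G₀ ω) (G₁ ω) ^ 2 ∂((P A)⁻¹ • P.restrict A) ≤
      W2sq (((P A)⁻¹ • P.restrict A).map G₀) (((P A)⁻¹ • P.restrict A).map G₁) := by
  have hPA' : P A ≠ ∞ := measure_ne_top _ _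
  have hm : Measurable fun ω => (G₀ ω, G₁ ω) := h0.prodMk h1
  refine le_iInf₂ fun σ hσ => ?_
  have hbig : W2sq (P.map G₀) (P.map G₁) ≤
      ∫⁻ p, edist p.1 p.2 ^ 2 ∂((P.restrict Aᶜ).map (fun ω => (G₀ ω, G₁ ω)) + P A • σ) := by
    refine iInf₂_le _ ⟨?_, ?_⟩
    · rw [Measure.map_add _ _ measurable_fst, Measure.map_smul, hσ.1, Measure.map_map measurable_fst hm,
        Measure.map_smul, smul_smul, ENNReal.mul_inv_cancel hPA hPA', one_smul]
      change (P.restrict Aᶜ).map G₀ + _ = _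
      rw [← Measure.map_add _ _ h0, add_comm, Measure.restrict_add_restrict_compl hA]
    · rw [Measure.map_add _ _ measurable_snd, Measure.map_smul, hσ.2, Measure.map_map measurable_snd hm,
        Measure.map_smul, smul_smul, ENNReal.mul_inv_cancel hPA hPA', one_smul]
      change (P.restrict Aᶜ).map G₁ + _ = _
      rw [← Measure.map_add _ _ h1, add_comm, Measure.restrict_add_restrict_compl hA]
  rw [lintegral_add_measure, lintegral_smul_measure,
    lintegral_map (aux_meas_edist measurable_fst measurable_snd) hm] at hbig
  have h2 := hopt.trans hbig
  rw [← lintegral_add_compl _ hA, add_comm] at h2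
  have hfinc : ∫⁻ ω in Aᶜ, edist (G₀ ω) (G₁ ω) ^ 2 ∂P ≠ ∞ :=
    ne_top_of_le_ne_top hfin (lintegral_mono' Measure.restrict_le_self le_rfl)
  have h3 := (ENNReal.add_le_add_iff_left hfinc).1 h2
  rw [lintegral_smul_measure, smul_eq_mul]
  calc (P A)⁻¹ * ∫⁻ ω in A, edist (G₀ ω) (G₁ ω) ^ 2 ∂P
      ≤ (P A)⁻¹ * (P A * ∫⁻ p, edist p.1 p.2 ^ 2 ∂σ) := by gcongr; simpa using h3
    _ = _ := by rw [← mul_assoc, ENNReal.inv_mul_cancel hPA hPA', one_mul]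

end

lemma aux_renyi_upper {X : Type*} [MeasurableSpace X] (m ν : Measure X) [IsProbabilityMeasure ν]
    {N : ℝ} (hN : 1 ≤ N) (E : Set X) (hE : MeasurableSet E) (hνE : ν Eᶜ = 0) :
    ∫⁻ x, renyiIntegrand N (ν.rnDeriv m x) ∂m ≤ m E ^ (1/N) := by
  have hN0 : 0 < N := by linarith
  have hp : 0 ≤ 1 - 1/N := by
    rw [sub_nonneg, div_le_one hN0]; exact hN
  have hz : ∫⁻ x in Eᶜ, renyiIntegrand N (ν.rnDeriv m x) ∂m = 0 := by
    have h1 : ∫⁻ x in Eᶜ, ν.rnDeriv m x ∂m = 0 :=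
      le_antisymm ((Measure.setLIntegral_rnDeriv_le Eᶜ).trans hνE.le) (zero_le)
    rw [lintegral_eq_zero_iff (Measure.measurable_rnDeriv ν m)] at h1
    have : ∫⁻ x in Eᶜ, renyiIntegrand N (ν.rnDeriv m x) ∂m = ∫⁻ x in Eᶜ, 0 ∂m := by
      refine lintegral_congr_ae ?_
      filter_upwards [h1] with x hx
      simp only [Pi.zero_apply] at hx
      simp [renyiIntegrand, hx]
    simpa using this
  rw [← lintegral_add_compl _ hE, hz, add_zero]
  calc ∫⁻ x in E, renyiIntegrand N (ν.rnDeriv m x) ∂m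
      ≤ ∫⁻ x in E, (ν.rnDeriv m x) ^ (1 - 1/N) * (1:ℝ≥0∞) ^ (1/N) ∂m := by
        refine lintegral_mono fun x => ?_
        unfold renyiIntegrand
        split_ifs <;> simp
    _ ≤ (∫⁻ x in E, ν.rnDeriv m x ∂m) ^ (1 - 1/N) * (∫⁻ x in E, 1 ∂m) ^ (1/N) :=
        ENNReal.lintegral_mul_norm_pow_le (Measure.measurable_rnDeriv ν m).aemeasurable
          aemeasurable_const hp (by positivity) (by ring)
    _ ≤ 1 * m E ^ (1/N) := by
        gcongr
        · refine ENNReal.rpow_le_one ?_ hp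
          exact (Measure.setLIntegral_rnDeriv_le E).trans prob_le_one
        · simp
    _ = _ := one_mul _

lemma aux_renyi_lower {X : Type*} [MeasurableSpace X] (m ν : Measure X) [IsProbabilityMeasure ν]
    [SigmaFinite m] {N : ℝ} (hN : 1 ≤ N) (c : ℝ≥0∞) (hc0 : c ≠ 0) (hc : c ≠ ∞)
    (hν : ∀ E, MeasurableSet E → ν E ≤ c * m E) :
    (c⁻¹) ^ (1/N) ≤ ∫⁻ x, renyiIntegrand N (ν.rnDeriv m x) ∂m := by
  have hN0 : 0 < N := by linarith
  have hac : ν ≪ m := by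
    refine Measure.AbsolutelyContinuous.mk fun s hs h0 => ?_
    have := hν s hs
    rw [h0, mul_zero] at this
    exact le_antisymm this zero_le
  have hle : ∀ᵐ x ∂m, ν.rnDeriv m x ≤ c := by
    refine ae_le_of_forall_setLIntegral_le_of_sigmaFinite (Measure.measurable_rnDeriv ν m) ?_
    intro s hs _
    rw [setLIntegral_const]
    exact (Measure.setLIntegral_rnDeriv_le s).trans (hν s hs)
  have h1 : ∫⁻ x, ν.rnDeriv m x ∂m = 1 := by
    rw [Measure.lintegral_rnDeriv hac, measure_univ]
  calc (c⁻¹) ^ (1/N) = ∫⁻ x, (c⁻¹) ^ (1/N) * ν.rnDeriv m x ∂m := by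
        rw [lintegral_const_mul _ (Measure.measurable_rnDeriv ν m), h1, mul_one]
    _ ≤ _ := by
        refine lintegral_mono_ae ?_
        filter_upwards [hle] with x hx
        unfold renyiIntegrand
        split_ifs with h0
        · simp [h0]
        · have hfin : ν.rnDeriv m x ≠ ∞ := ne_top_of_le_ne_top hc hx
          rw [sub_eq_add_neg, ENNReal.rpow_add _ _ h0 hfin, ENNReal.rpow_one, mul_comm,
            ENNReal.rpow_neg, ← ENNReal.inv_rpow]
          gcongr

lemma aux_ereal (a b c : ℝ≥0∞) (x y : ℝ) (hx : 0 ≤ x) (hy : 0 ≤ y)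
    (h : -(a : EReal) ≤ (x : EReal) * (-(b:EReal)) + (y : EReal) * (-(c:EReal))) :
    ENNReal.ofReal x * b + ENNReal.ofReal y * c ≤ a := by
  have hx' : (x : EReal) = ((ENNReal.ofReal x : ℝ≥0∞) : EReal) := by
    rw [EReal.coe_ennreal_ofReal, max_eq_left hx]
  have hy' : (y : EReal) = ((ENNReal.ofReal y : ℝ≥0∞) : EReal) := by
    rw [EReal.coe_ennreal_ofReal, max_eq_left hy]
  rw [hx', hy', mul_neg, mul_neg, ← EReal.coe_ennreal_mul, ← EReal.coe_ennreal_mul,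
    ← sub_eq_add_neg, ← EReal.neg_add, EReal.neg_le_neg_iff, ← EReal.coe_ennreal_add,
    EReal.coe_ennreal_le_coe_ennreal_iff] at h
  · exact h
  · left; exact EReal.coe_ennreal_ne_bot _
  · right; exact EReal.coe_ennreal_ne_bot _

lemma aux_sdc {X : Type*} [MetricSpace X] [MeasurableSpace X] {m : Measure X} {N : ℝ}
    (hsdc : StronglyDisplacementConvex (renyiEntropy N m)) (Γ : ℝ → Measure X)
    (hΓ : IsW2Geodesic Γ) (s : ℝ) (hs : s ∈ Icc (0:ℝ) 1) :
    ENNReal.ofReal (1 - s) * ∫⁻ x, renyiIntegrand N ((Γ 0).rnDeriv m x) ∂m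
      + ENNReal.ofReal s * ∫⁻ x, renyiIntegrand N ((Γ 1).rnDeriv m x) ∂m
      ≤ ∫⁻ x, renyiIntegrand N ((Γ s).rnDeriv m x) ∂m :=
  aux_ereal _ _ _ _ _ (sub_nonneg.2 hs.2) hs.1 (hsdc Γ hΓ s hs)

section
variable {X : Type*} [MetricSpace X] [CompleteSpace X] [SecondCountableTopology X]
    [MeasurableSpace X] [BorelSpace X]

/-- Density bound along optimal plans. -/
lemma aux_density {m : Measure X} [SigmaFinite m] {N : ℝ} (hN : 1 ≤ N)
    (hsdc : StronglyDisplacementConvex (renyiEntropy N m))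
    {Ω : Type*} [MeasurableSpace Ω] (P : Measure Ω) [IsProbabilityMeasure P]
    (G : ℝ → Ω → X) (hG : ∀ t, Measurable (G t))
    (hgeo : ∀ᵐ ω ∂P, IsGeodesicMap (fun t => G t ω))
    (hfin : ∫⁻ ω, edist (G 0 ω) (G 1 ω) ^ 2 ∂P ≠ ∞)
    (hopt : ∫⁻ ω, edist (G 0 ω) (G 1 ω) ^ 2 ∂P ≤ W2sq (P.map (G 0)) (P.map (G 1)))
    (c : ℝ≥0∞) (hc0 : c ≠ 0) (hc : c ≠ ∞)
    (h0 : P.map (G 0) ≤ c • m) (h1 : P.map (G 1) ≤ c • m)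
    (t : ℝ) (ht : t ∈ Icc (0:ℝ) 1) : P.map (G t) ≤ c • m := by
  rw [Measure.le_iff]
  intro E hE
  rw [Measure.map_apply (hG t) hE, Measure.smul_apply, smul_eq_mul]
  set A := G t ⁻¹' E with hAdef
  have hA : MeasurableSet A := hG t hE
  rcases eq_or_ne (P A) 0 with hPA | hPA
  · rw [hPA]; exact zero_le
  have hPA' : P A ≠ ∞ := measure_ne_top _ _
  set P' := (P A)⁻¹ • P.restrict A with hP'
  have hP'prob : IsProbabilityMeasure P' := by
    constructor
    simp [hP', ENNReal.inv_mul_cancel hPA hPA']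
  have hopt' := aux_restrict_opt P (G 0) (G 1) (hG 0) (hG 1) hfin hopt A hA hPA
  have hgeo' : ∀ᵐ ω ∂P', IsGeodesicMap (fun t => G t ω) :=
    Measure.ae_smul_measure (ae_restrict_of_ae hgeo) _
  have hfin' : ∫⁻ ω, edist (G 0 ω) (G 1 ω) ^ 2 ∂P' ≠ ∞ := by
    rw [hP', lintegral_smul_measure, smul_eq_mul]
    refine ENNReal.mul_ne_top (ENNReal.inv_ne_top.2 hPA) ?_
    exact ne_top_of_le_ne_top hfin (lintegral_mono' Measure.restrict_le_self le_rfl)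
  have hW := aux_isW2Geodesic P' G hG hgeo' hfin' hopt'
  have hs := aux_sdc hsdc _ hW t ht
  have hprob : ∀ t, IsProbabilityMeasure (P'.map (G t)) :=
    fun t => Measure.isProbabilityMeasure_map (hG t).aemeasurable
  have hend : ∀ g : Ω → X, Measurable g → P.map g ≤ c • m → ∀ F, MeasurableSet F →
      P'.map g F ≤ ((P A)⁻¹ * c) * m F := by
    intro g hg hle F hF
    rw [Measure.map_apply hg hF, hP', Measure.smul_apply, smul_eq_mul, mul_assoc]
    gcongr
    refine (Measure.restrict_apply_le _ _).trans ?_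
    have := hle F
    rwa [Measure.map_apply hg hF, Measure.smul_apply, smul_eq_mul] at this
  have hcc0 : (P A)⁻¹ * c ≠ 0 := mul_ne_zero (ENNReal.inv_ne_zero.2 hPA') hc0
  have hcc : (P A)⁻¹ * c ≠ ∞ := ENNReal.mul_ne_top (ENNReal.inv_ne_top.2 hPA) hc
  have l0 := aux_renyi_lower m (P'.map (G 0)) hN _ hcc0 hcc (hend _ (hG 0) h0)
  have l1 := aux_renyi_lower m (P'.map (G 1)) hN _ hcc0 hcc (hend _ (hG 1) h1)
  have u := aux_renyi_upper m (P'.map (G t)) hN E hE (by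
    rw [Measure.map_apply (hG t) hE.compl, hP', Measure.smul_apply,
      Measure.restrict_apply (hG t hE.compl)]
    have : G t ⁻¹' Eᶜ ∩ A = ∅ := by
      ext ω; simp [hAdef]
    rw [this, measure_empty, smul_zero])
  have hfinal : (((P A)⁻¹ * c)⁻¹) ^ (1/N) ≤ m E ^ (1/N) := by
    calc (((P A)⁻¹ * c)⁻¹) ^ (1/N)
        = ENNReal.ofReal (1 - t) * (((P A)⁻¹ * c)⁻¹) ^ (1/N) + ENNReal.ofReal t * (((P A)⁻¹ * c)⁻¹) ^ (1/N) := by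
          rw [← add_mul, ← ENNReal.ofReal_add (sub_nonneg.2 ht.2) ht.1]; simp
      _ ≤ _ := (add_le_add (by gcongr) (by gcongr)).trans hs
      _ ≤ _ := u
  have hN0 : 0 < 1/N := by positivity
  rw [ENNReal.rpow_le_rpow_iff hN0, ENNReal.mul_inv (Or.inr hc) (Or.inr hc0), inv_inv] at hfinal
  calc P A = c * (P A * c⁻¹) := by
        rw [mul_comm (P A), ← mul_assoc, ENNReal.mul_inv_cancel hc0 hc, one_mul]
    _ ≤ _ := by gcongr

end

section
variable {X : Type*} [MetricSpace X] [CompleteSpace X] [SecondCountableTopology X]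
    [MeasurableSpace X] [BorelSpace X]

lemma aux_normalized {m : Measure X} (A : Set X) (h0 : m A ≠ 0) (hA : m A ≠ ∞) :
    IsProbabilityMeasure ((m A)⁻¹ • m.restrict A) := by
  constructor
  simp [ENNReal.inv_mul_cancel h0 hA]

lemma aux_ae_map_mem {Ω : Type*} [MeasurableSpace Ω] {P : Measure Ω} {f : Ω → X}
    (hf : Measurable f) {S : Set X} (hS : MeasurableSet S) (h : ∀ᵐ w ∂P, f w ∈ S) :
    ∀ᵐ y ∂(P.map f), y ∈ S :=
  (mem_ae_map_iff hf.aemeasurable hS).2 h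

lemma aux_doubling_set {m : Measure X} [SigmaFinite m] {N : ℝ} (hN : 1 ≤ N)
    (hgeo : IsGeodesicSpace X)
    (hsdc : StronglyDisplacementConvex (renyiEntropy N m)) (x : X) (r : ℝ) (hr : 0 < r)
    (A : Set X) (hA : MeasurableSet A) (hAs : A ⊆ ball x (2 * r)) (hAfin : m A ≠ ∞) :
    m A ≤ ENNReal.ofReal (2 ^ N) * m (ball x r) := by
  rcases eq_or_ne (m A) 0 with h0 | h0
  · rw [h0]; exact zero_le
  have : Nonempty X := ⟨x⟩
  set μ := (m A)⁻¹ • m.restrict A with hμ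
  have hμp : IsProbabilityMeasure μ := aux_normalized A h0 hAfin
  have hμA : ∀ᵐ y ∂μ, y ∈ A := Measure.ae_smul_measure (ae_restrict_mem hA) _
  set σ : Measure (X × X) := μ.prod (Measure.dirac x) with hσ
  obtain ⟨G, hGm, hG⟩ := aux_geo_select hgeo σ
  have hGt : ∀ t, Measurable (G t) := fun t => hGm.comp measurable_prodMk_left
  have hm1 : σ.map Prod.fst = μ := by rw [hσ]; simp
  have hm2 : σ.map Prod.snd = Measure.dirac x := by rw [hσ]; simp
  have hσ1 : ∀ᵐ w ∂σ, w.1 ∈ A := by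
    have := hμA
    rw [← hm1] at this
    exact ae_of_ae_map measurable_fst.aemeasurable this
  have hdirac : ∀ τ : Measure (X × X), τ.map Prod.snd = Measure.dirac x → ∀ᵐ w ∂τ, w.2 = x := by
    intro τ hτ
    have : ∀ᵐ y ∂(τ.map Prod.snd), y = x := by
      rw [hτ, ae_dirac_eq]
      simp
    exact ae_of_ae_map measurable_snd.aemeasurable this
  have hσ2 := hdirac σ hm2
  have hcost : ∀ τ : Measure (X × X), τ.map Prod.fst = μ → τ.map Prod.snd = Measure.dirac x →
      ∫⁻ p, edist p.1 p.2 ^ 2 ∂τ = ∫⁻ y, edist y x ^ 2 ∂μ := by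
    intro τ h1 h2
    have hme : Measurable fun y : X => edist y x ^ 2 := aux_meas_edist measurable_id measurable_const
    rw [← h1, lintegral_map hme measurable_fst]
    refine lintegral_congr_ae ?_
    filter_upwards [hdirac τ h2] with w hw
    simp [hw]
  have hG01 : ∫⁻ w, edist (G 0 w) (G 1 w) ^ 2 ∂σ = ∫⁻ p, edist p.1 p.2 ^ 2 ∂σ := by
    refine lintegral_congr_ae ?_
    filter_upwards [hG] with w hw
    rw [hw.2.1, hw.2.2]
  have hmap0 : σ.map (G 0) = μ := by
    rw [← hm1]
    refine Measure.map_congr ?_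
    filter_upwards [hG] with w hw using hw.2.1
  have hmap1 : σ.map (G 1) = Measure.dirac x := by
    rw [← hm2]
    refine Measure.map_congr ?_
    filter_upwards [hG] with w hw using hw.2.2
  have hfin : ∫⁻ w, edist (G 0 w) (G 1 w) ^ 2 ∂σ ≠ ∞ := by
    rw [hG01, hcost σ hm1 hm2]
    refine ne_top_of_le_ne_top (b := ENNReal.ofReal (2 * r) ^ 2) (ENNReal.pow_ne_top ENNReal.ofReal_ne_top) ?_
    calc ∫⁻ y, edist y x ^ 2 ∂μ ≤ ∫⁻ y, ENNReal.ofReal (2 * r) ^ 2 ∂μ := by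
          refine lintegral_mono_ae ?_
          filter_upwards [hμA] with y hy
          gcongr
          rw [edist_dist]
          exact ENNReal.ofReal_le_ofReal (le_of_lt (mem_ball.1 (hAs hy)))
      _ = _ := by simp
  have hopt : ∫⁻ w, edist (G 0 w) (G 1 w) ^ 2 ∂σ ≤ W2sq (σ.map (G 0)) (σ.map (G 1)) := by
    rw [hmap0, hmap1, hG01]
    refine le_iInf₂ fun τ hτ => ?_
    rw [hcost σ hm1 hm2, hcost τ hτ.1 hτ.2]
  have hW := aux_isW2Geodesic σ G hGt (hG.mono fun w hw => hw.1) hfin hopt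
  have hs := aux_sdc hsdc _ hW (1/2) (by norm_num)
  have hp : IsProbabilityMeasure (σ.map (G (1/2))) :=
    Measure.isProbabilityMeasure_map (hGt _).aemeasurable
  have up := aux_renyi_upper m (σ.map (G (1/2))) hN (ball x r) measurableSet_ball (by
    rw [← mem_ae_iff]
    have : ∀ᵐ y ∂(σ.map (G (1/2))), y ∈ ball x r := by
      refine aux_ae_map_mem (hGt _) measurableSet_ball ?_
      filter_upwards [hG, hσ1, hσ2] with w hw h1 h2
      have := hw.1 (1/2) (by norm_num) 1 (by norm_num)
      simp only at this
      rw [hw.2.1, hw.2.2, h2] at this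
      have h3 := hAs h1
      rw [mem_ball] at h3 ⊢
      rw [this]
      norm_num
      linarith
    exact this)
  have low := aux_renyi_lower m μ hN (m A)⁻¹ (ENNReal.inv_ne_zero.2 hAfin) (ENNReal.inv_ne_top.2 h0)
    (fun E hE => by
      rw [hμ, Measure.smul_apply, smul_eq_mul]
      gcongr
      exact Measure.restrict_le_self)
  simp only [hmap0] at hs
  rw [inv_inv] at low
  have hN0 : 0 < N := by linarith
  have key : ENNReal.ofReal (1 - 1/2) * m A ^ (1/N) ≤ m (ball x r) ^ (1/N) :=
    ((mul_le_mul_right low _).trans le_self_add).trans (hs.trans up)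
  have key2 := ENNReal.rpow_le_rpow key hN0.le
  rw [ENNReal.mul_rpow_of_nonneg _ _ hN0.le, ← ENNReal.rpow_mul, ← ENNReal.rpow_mul,
    one_div_mul_cancel hN0.ne', ENNReal.rpow_one, ENNReal.rpow_one,
    ENNReal.ofReal_rpow_of_pos (by norm_num)] at key2
  calc m A = ENNReal.ofReal (2 ^ N) * (ENNReal.ofReal ((1 - 1/2) ^ N) * m A) := by
        rw [← mul_assoc, ← ENNReal.ofReal_mul (by positivity), ← Real.mul_rpow (by norm_num) (by norm_num)]
        norm_num
    _ ≤ _ := by gcongr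

lemma aux_doubling {m : Measure X} [SigmaFinite m] {N : ℝ} (hN : 1 ≤ N)
    (hgeo : IsGeodesicSpace X)
    (hsdc : StronglyDisplacementConvex (renyiEntropy N m)) (x : X) (r : ℝ) (hr : 0 < r) :
    m (ball x (2 * r)) ≤ ENNReal.ofReal (2 ^ N) * m (ball x r) := by
  refine le_of_forall_lt fun c hc => ?_
  obtain ⟨A, hA, hAs, hcA, hAfin⟩ := Measure.exists_subset_measure_lt_top measurableSet_ball hc
  exact hcA.trans_le (aux_doubling_set hN hgeo hsdc x r hr A hA hAs hAfin.ne)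

lemma aux_finite_ball {m : Measure X} [IsLocallyFiniteMeasure m] {N : ℝ} (hN : 1 ≤ N)
    (hgeo : IsGeodesicSpace X)
    (hsdc : StronglyDisplacementConvex (renyiEntropy N m)) (x : X) (R : ℝ) :
    m (ball x R) < ∞ := by
  obtain ⟨s, hs, hsfin⟩ := m.finiteAt_nhds x
  obtain ⟨ε, hε, hεs⟩ := Metric.mem_nhds_iff.1 hs
  have h : ∀ n : ℕ, m (ball x (2 ^ n * ε)) < ∞ := by
    intro n
    induction n with
    | zero => simpa using (measure_mono hεs).trans_lt hsfin
    | succ n ih =>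
      have := aux_doubling hN hgeo hsdc x (2 ^ n * ε) (by positivity)
      rw [← mul_assoc, ← pow_succ'] at this
      exact this.trans_lt (ENNReal.mul_lt_top ENNReal.ofReal_lt_top ih)
  obtain ⟨n, hn⟩ := pow_unbounded_of_one_lt (R / ε) (one_lt_two)
  refine (measure_mono (ball_subset_ball ?_)).trans_lt (h n)
  rw [div_lt_iff₀ hε] at hn
  exact hn.le

end

section
variable {X : Type*} [MetricSpace X] [CompleteSpace X] [SecondCountableTopology X]
    [MeasurableSpace X] [BorelSpace X]

lemma aux_opt_exists (μ ν : Measure X) [IsProbabilityMeasure μ] [IsProbabilityMeasure ν]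
    (x : X) (r : ℝ) (hr : 0 < r) (hμ : ∀ᵐ y ∂μ, y ∈ ball x r) (hν : ∀ᵐ y ∂ν, y ∈ ball x r) :
    ∃ σ : Measure (X × X), σ.map Prod.fst = μ ∧ σ.map Prod.snd = ν ∧
      (∀ᵐ p ∂σ, p.1 ∈ ball x r ∧ p.2 ∈ ball x r) ∧
      ∫⁻ p, edist p.1 p.2 ^ 2 ∂σ ≤ W2sq μ ν ∧ ∫⁻ p, edist p.1 p.2 ^ 2 ∂σ ≠ ∞ := by
  let R : ℝ≥0 := ⟨2 * r, by positivity⟩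
  let c : BoundedContinuousFunction (X × X) ℝ≥0 :=
    BoundedContinuousFunction.mkOfBound
      ⟨fun p => (min (nndist p.1 p.2) R) ^ 2, by fun_prop⟩ (R ^ 2) (by
        intro p q
        rw [NNReal.dist_eq, abs_le]
        have h : ∀ p : X × X, ((((min (nndist p.1 p.2) R) ^ 2 : ℝ≥0)) : ℝ) ≤ (R:ℝ) ^ 2 := by
          intro p
          have h0 : (min (nndist p.1 p.2) R) ^ 2 ≤ R ^ 2 :=
            pow_le_pow_left₀ (zero_le) (min_le_right _ _) 2
          have h00 := NNReal.coe_le_coe.2 h0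
          rwa [NNReal.coe_pow R] at h00
        have h1 := h p
        have h2 := h q
        have h3 : (0:ℝ) ≤ ((((min (nndist p.1 p.2) R) ^ 2 : ℝ≥0)) : ℝ) := NNReal.coe_nonneg _
        have h4 : (0:ℝ) ≤ ((((min (nndist q.1 q.2) R) ^ 2 : ℝ≥0)) : ℝ) := NNReal.coe_nonneg _
        simp only [ContinuousMap.coe_mk]
        constructor <;> linarith)
  have hball : ∀ σ : Measure (X × X), σ.map Prod.fst = μ → σ.map Prod.snd = ν →
      ∀ᵐ p ∂σ, p.1 ∈ ball x r ∧ p.2 ∈ ball x r := by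
    intro σ h1 h2
    rw [← h1] at hμ
    rw [← h2] at hν
    filter_upwards [ae_of_ae_map measurable_fst.aemeasurable hμ,
      ae_of_ae_map measurable_snd.aemeasurable hν] with p hp1 hp2 using ⟨hp1, hp2⟩
  have hcost : ∀ σ : Measure (X × X), σ.map Prod.fst = μ → σ.map Prod.snd = ν →
      ∫⁻ p, edist p.1 p.2 ^ 2 ∂σ = ∫⁻ p, c p ∂σ := by
    intro σ h1 h2
    refine lintegral_congr_ae ?_
    filter_upwards [hball σ h1 h2] with p hp
    have h3 : nndist p.1 p.2 ≤ R := by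
      rw [← NNReal.coe_le_coe, coe_nndist]
      have h4 := mem_ball.1 hp.1
      have h5 := mem_ball.1 hp.2
      have := dist_triangle_right p.1 p.2 x
      change dist p.1 p.2 ≤ 2 * r
      linarith
    have : c p = nndist p.1 p.2 ^ 2 := by
      change (min (nndist p.1 p.2) R) ^ 2 = _
      rw [min_eq_left h3]
    rw [this, edist_nndist]
    push_cast; rfl
  let μ' : ProbabilityMeasure X := ⟨μ, inferInstance⟩
  let ν' : ProbabilityMeasure X := ⟨ν, inferInstance⟩
  let S : Set (ProbabilityMeasure (X × X)) :=
    {σ | σ.map measurable_fst.aemeasurable = μ' ∧ σ.map measurable_snd.aemeasurable = ν'}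
  have hSiff : ∀ σ : ProbabilityMeasure (X × X), σ ∈ S ↔
      ((σ : Measure (X × X)).map Prod.fst = μ ∧ (σ : Measure (X × X)).map Prod.snd = ν) := by
    intro σ
    constructor
    · rintro ⟨h1, h2⟩
      exact ⟨congrArg Subtype.val h1, congrArg Subtype.val h2⟩
    · rintro ⟨h1, h2⟩
      exact ⟨Subtype.ext h1, Subtype.ext h2⟩
  have hclosed : IsClosed S := by
    have h1 : Continuous fun σ : ProbabilityMeasure (X × X) =>
      σ.map (f := Prod.fst) measurable_fst.aemeasurable :=
        ProbabilityMeasure.continuous_map continuous_fst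
    have h2 : Continuous fun σ : ProbabilityMeasure (X × X) =>
      σ.map (f := Prod.snd) measurable_snd.aemeasurable :=
        ProbabilityMeasure.continuous_map continuous_snd
    exact (isClosed_eq h1 continuous_const).inter (isClosed_eq h2 continuous_const)
  have hcpt : IsCompact S := by
    rw [← hclosed.closure_eq]
    refine isCompact_closure_of_isTightMeasureSet (IsTightMeasureSet.prodMk ?_ ?_)
    · refine (isTightMeasureSet_singleton (μ := μ)).subset ?_
      rintro _ ⟨_, ⟨σ, hσ, rfl⟩, rfl⟩
      exact ((hSiff σ).1 hσ).1
    · refine (isTightMeasureSet_singleton (μ := ν)).subset ?_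
      rintro _ ⟨_, ⟨σ, hσ, rfl⟩, rfl⟩
      exact ((hSiff σ).1 hσ).2
  have hne : S.Nonempty := by
    let τ : ProbabilityMeasure (X × X) := ⟨μ.prod ν, inferInstance⟩
    have h1 : (μ.prod ν).map Prod.fst = μ := by simp
    have h2 : (μ.prod ν).map Prod.snd = ν := by simp
    exact ⟨τ, (hSiff τ).2 ⟨h1, h2⟩⟩
  have hcont : Continuous fun σ : ProbabilityMeasure (X × X) => ∫⁻ p, c p ∂(σ : Measure (X × X)) := by
    rw [continuous_iff_continuousAt]
    intro σ
    exact ProbabilityMeasure.tendsto_iff_forall_lintegral_tendsto.1 tendsto_id c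
  obtain ⟨σ, hσS, hσ⟩ := hcpt.exists_isMinOn hne hcont.continuousOn
  obtain ⟨h1, h2⟩ := (hSiff σ).1 hσS
  refine ⟨σ, h1, h2, hball _ h1 h2, ?_, ?_⟩
  · refine le_iInf₂ fun τ hτ => ?_
    have := aux_isProb_of_map hτ.1
    rw [hcost _ h1 h2, hcost _ hτ.1 hτ.2]
    exact hσ ((hSiff ⟨τ, this⟩).2 hτ)
  · rw [hcost _ h1 h2]
    refine ne_top_of_le_ne_top (b := ((R ^ 2 : ℝ≥0) : ℝ≥0∞)) ENNReal.coe_ne_top ?_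
    calc ∫⁻ p, c p ∂(σ : Measure (X × X)) ≤ ∫⁻ p, ((R ^ 2 : ℝ≥0) : ℝ≥0∞) ∂(σ : Measure (X × X)) := by
          refine lintegral_mono fun p => ?_
          exact ENNReal.coe_le_coe.2 (pow_le_pow_left₀ (zero_le) (min_le_right _ _) 2)
      _ = _ := by simp

end

section
variable {X : Type*} [MetricSpace X] [CompleteSpace X] [SecondCountableTopology X]
    [MeasurableSpace X] [BorelSpace X]

lemma aux_one_sided {m : Measure X} [SigmaFinite m] {N : ℝ} (hN : 1 ≤ N)
    (hgeo : IsGeodesicSpace X)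
    (hsdc : StronglyDisplacementConvex (renyiEntropy N m))
    (u : X → ℝ) (hu : Continuous u) (g : X → ℝ≥0∞) (hg : IsUpperGradient u g)
    (x : X) (r : ℝ) (hr : 0 < r) (hfinB : m (ball x r) ≠ ∞) (a : ℝ)
    (hle : m (ball x r ∩ {y | a < u y}) ≤ m (ball x r ∩ {y | u y ≤ a})) :
    ∫⁻ y in ball x r, ENNReal.ofReal (u y - a) ∂m ≤
      ENNReal.ofReal (2 * r) * ∫⁻ y in ball x (2 * r), g y ∂m := by
  have : Nonempty X := ⟨x⟩
  set A₁ := ball x r ∩ {y | a < u y} with hA₁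
  set A₂ := ball x r ∩ {y | u y ≤ a} with hA₂
  have hm₁ : MeasurableSet A₁ :=
    measurableSet_ball.inter (measurableSet_lt measurable_const hu.measurable)
  have hm₂ : MeasurableSet A₂ :=
    measurableSet_ball.inter (measurableSet_le hu.measurable measurable_const)
  have hmu : Measurable fun y => ENNReal.ofReal (u y - a) :=
    ENNReal.measurable_ofReal.comp (hu.measurable.sub_const a)
  -- the integral only sees `A₁`
  have hintg : ∫⁻ y in ball x r, ENNReal.ofReal (u y - a) ∂m
      = ∫⁻ y in A₁, ENNReal.ofReal (u y - a) ∂m := by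
    rw [← lintegral_indicator measurableSet_ball, ← lintegral_indicator hm₁]
    refine lintegral_congr fun y => ?_
    by_cases hy : y ∈ ball x r
    · by_cases hy2 : a < u y
      · rw [indicator_of_mem hy, indicator_of_mem (show y ∈ A₁ from ⟨hy, hy2⟩)]
      · rw [indicator_of_mem hy, indicator_of_notMem (fun h : y ∈ A₁ => hy2 h.2)]
        exact ENNReal.ofReal_of_nonpos (by linarith)
    · rw [indicator_of_notMem hy, indicator_of_notMem (fun h : y ∈ A₁ => hy h.1)]
  rw [hintg]
  rcases eq_or_ne (m A₁) 0 with h0 | h0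
  · rw [setLIntegral_measure_zero _ _ h0]; exact zero_le
  have hp : m A₁ ≠ ∞ := ne_top_of_le_ne_top hfinB (measure_mono inter_subset_left)
  have hq : m A₂ ≠ ∞ := ne_top_of_le_ne_top hfinB (measure_mono inter_subset_left)
  have hq0 : m A₂ ≠ 0 := fun h => h0 (le_antisymm (hle.trans h.le) zero_le)
  set μ := (m A₁)⁻¹ • m.restrict A₁ with hμ
  set ν := (m A₂)⁻¹ • m.restrict A₂ with hν
  have hμp : IsProbabilityMeasure μ := aux_normalized A₁ h0 hp
  have hνp : IsProbabilityMeasure ν := aux_normalized A₂ hq0 hq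
  have hμA : ∀ᵐ y ∂μ, y ∈ A₁ := Measure.ae_smul_measure (ae_restrict_mem hm₁) _
  have hνA : ∀ᵐ y ∂ν, y ∈ A₂ := Measure.ae_smul_measure (ae_restrict_mem hm₂) _
  obtain ⟨σ, hσ1, hσ2, hσB, hσopt, hσfin⟩ := aux_opt_exists μ ν x r hr
    (hμA.mono fun y hy => hy.1) (hνA.mono fun y hy => hy.1)
  have hσp : IsProbabilityMeasure σ := aux_isProb_of_map hσ1
  have hσA : ∀ᵐ w ∂σ, w.2 ∈ A₂ := by
    rw [← hσ2] at hνA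
    exact ae_of_ae_map measurable_snd.aemeasurable hνA
  obtain ⟨G, hGm, hG⟩ := aux_geo_select hgeo σ
  have hGt : ∀ t, Measurable (G t) := fun t => hGm.comp measurable_prodMk_left
  have hG01 : ∫⁻ w, edist (G 0 w) (G 1 w) ^ 2 ∂σ = ∫⁻ p, edist p.1 p.2 ^ 2 ∂σ := by
    refine lintegral_congr_ae ?_
    filter_upwards [hG] with w hw
    rw [hw.2.1, hw.2.2]
  have hmap0 : σ.map (G 0) = μ := by
    rw [← hσ1]
    refine Measure.map_congr ?_
    filter_upwards [hG] with w hw using hw.2.1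
  have hmap1 : σ.map (G 1) = ν := by
    rw [← hσ2]
    refine Measure.map_congr ?_
    filter_upwards [hG] with w hw using hw.2.2
  have hdens : ∀ t ∈ Icc (0:ℝ) 1, σ.map (G t) ≤ (m A₁)⁻¹ • m := by
    intro t ht
    refine aux_density hN hsdc σ G hGt (hG.mono fun w hw => hw.1) (hG01 ▸ hσfin)
      (by rw [hmap0, hmap1, hG01]; exact hσopt) _ (ENNReal.inv_ne_zero.2 hp)
      (ENNReal.inv_ne_top.2 h0) ?_ ?_ t ht
    · rw [hmap0, hμ, Measure.le_iff]
      intro E _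
      simp only [Measure.smul_apply, smul_eq_mul]
      exact mul_le_mul_right (Measure.restrict_apply_le _ _) _
    · rw [hmap1, hν, Measure.le_iff]
      intro E _
      simp only [Measure.smul_apply, smul_eq_mul]
      exact mul_le_mul' (ENNReal.inv_le_inv.2 hle) (Measure.restrict_apply_le _ _)
  have hinball : ∀ t ∈ Icc (0:ℝ) 1, ∀ᵐ w ∂σ, G t w ∈ ball x (2 * r) := by
    intro t ht
    filter_upwards [hG, hσB] with w hw hB
    have e0 := hw.1 t ht 0 (by norm_num)
    have e1 := hw.1 t ht 1 (by norm_num)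
    simp only at e0 e1
    rw [hw.2.1, hw.2.2] at e0 e1
    have b1 := mem_ball.1 hB.1
    have b2 := mem_ball.1 hB.2
    rw [sub_zero, abs_of_nonneg ht.1] at e0
    rw [abs_of_nonpos (by linarith [ht.2])] at e1
    have t0 := dist_triangle (G t w) w.1 x
    have t1 := dist_triangle (G t w) w.2 x
    have t2 := dist_triangle_right w.1 w.2 x
    rw [mem_ball]
    nlinarith [ht.1, ht.2]
  have hslice : ∀ t ∈ Icc (0:ℝ) 1, ∫⁻ w, g (G t w) ∂σ ≤
      (m A₁)⁻¹ * ∫⁻ y in ball x (2 * r), g y ∂m := by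
    intro t ht
    have hae : ∀ᵐ y ∂(σ.map (G t)), y ∈ ball x (2 * r) :=
      aux_ae_map_mem (hGt t) measurableSet_ball (hinball t ht)
    rw [← lintegral_map hg.1 (hGt t), ← Measure.restrict_eq_self_of_ae_mem hae,
      ← smul_eq_mul (m A₁)⁻¹, ← lintegral_smul_measure]
    refine lintegral_mono' ?_ le_rfl
    rw [← Measure.restrict_smul]
    exact Measure.restrict_mono le_rfl (hdens t ht)
  have hpt : ∀ᵐ w ∂σ, ENNReal.ofReal (u (G 0 w) - a) ≤
      ENNReal.ofReal (2 * r) * ∫⁻ t in Icc (0:ℝ) 1, g (G t w) := by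
    filter_upwards [hG, hσB, hσA] with w hw hB hA
    have b1 := mem_ball.1 hB.1
    have b2 := mem_ball.1 hB.2
    have t2 := dist_triangle_right w.1 w.2 x
    have hlip : LipschitzOnWith (2 * r).toNNReal (fun t => G t w) (Icc 0 1) := by
      refine LipschitzOnWith.of_dist_le_mul fun s hs t ht => ?_
      rw [hw.1 s hs t ht, Real.coe_toNNReal _ (by positivity), Real.dist_eq, mul_comm]
      gcongr
      change dist (G 0 w) (G 1 w) ≤ 2 * r
      rw [hw.2.1, hw.2.2]
      linarith
    refine le_trans ?_ (hg.2 (fun t => G t w) _ hlip)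
    refine ENNReal.ofReal_le_ofReal ?_
    have h2 : u w.2 ≤ a := hA.2
    rw [hw.2.2, abs_sub_comm]
    exact le_trans (by linarith) (le_abs_self _)
  have hmain : ∫⁻ y in A₁, ENNReal.ofReal (u y - a) ∂m
      = m A₁ * ∫⁻ w, ENNReal.ofReal (u (G 0 w) - a) ∂σ := by
    rw [← lintegral_map hmu (hGt 0), hmap0, hμ, lintegral_smul_measure, smul_eq_mul, ← mul_assoc,
      ENNReal.mul_inv_cancel h0 hp, one_mul]
  rw [hmain]
  have hmeas : Measurable fun p : (X × X) × ℝ => g (G p.2 p.1) :=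
    hg.1.comp (hGm.comp measurable_swap)
  calc m A₁ * ∫⁻ w, ENNReal.ofReal (u (G 0 w) - a) ∂σ
      ≤ m A₁ * ∫⁻ w, (ENNReal.ofReal (2 * r) * ∫⁻ t in Icc (0:ℝ) 1, g (G t w)) ∂σ := by
        gcongr m A₁ * ?_
        exact lintegral_mono_ae hpt
    _ = m A₁ * (ENNReal.ofReal (2 * r) * ∫⁻ t in Icc (0:ℝ) 1, ∫⁻ w, g (G t w) ∂σ) := by
        rw [lintegral_const_mul' _ _ ENNReal.ofReal_ne_top,
          lintegral_lintegral_swap hmeas.aemeasurable]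
    _ ≤ m A₁ * (ENNReal.ofReal (2 * r) * ∫⁻ t in Icc (0:ℝ) 1,
          (m A₁)⁻¹ * ∫⁻ y in ball x (2 * r), g y ∂m) := by
        gcongr m A₁ * (ENNReal.ofReal (2 * r) * ?_)
        refine setLIntegral_mono' measurableSet_Icc ?_
        exact hslice
    _ = _ := by
        rw [setLIntegral_const, Real.volume_Icc]
        simp only [sub_zero, ENNReal.ofReal_one, mul_one]
        rw [mul_left_comm, ← mul_assoc (m A₁), ENNReal.mul_inv_cancel h0 hp, one_mul]

end

section
variable {X : Type*} [MetricSpace X] [CompleteSpace X] [SecondCountableTopology X]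
    [MeasurableSpace X] [BorelSpace X]

lemma aux_exists_level {m : Measure X} [SigmaFinite m] {N : ℝ} (hN : 1 ≤ N)
    (hgeo : IsGeodesicSpace X)
    (hsupp : ∀ x : X, ∀ ε > 0, 0 < m (Metric.ball x ε))
    (hsdc : StronglyDisplacementConvex (renyiEntropy N m))
    (u : X → ℝ) (hu : Continuous u) (g : X → ℝ≥0∞) (hg : IsUpperGradient u g)
    (x : X) (r : ℝ) (hr : 0 < r) (hfinB : m (ball x r) ≠ ∞) :
    ∃ a : ℝ, ∫⁻ y in ball x r, ENNReal.ofReal (u y - a) ∂m ≤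
      ENNReal.ofReal (2 * r) * ∫⁻ y in ball x (2 * r), g y ∂m := by
  have hδ : 0 < m (ball x r ∩ {y | u y ≤ u x + 1}) := by
    have : ball x r ∩ {y | u y < u x + 1} ∈ 𝓝 x :=
      Filter.inter_mem (ball_mem_nhds x hr)
        ((isOpen_lt hu continuous_const).mem_nhds (by simp))
    obtain ⟨ε, hε, hεs⟩ := Metric.mem_nhds_iff.1 this
    refine (hsupp x ε hε).trans_le (measure_mono (hεs.trans ?_))
    exact inter_subset_inter_right _ fun y (hy : u y < u x + 1) => le_of_lt hy
  have ht : Tendsto (fun n : ℕ => m (ball x r ∩ {y | (n : ℝ) < u y})) atTop (𝓝 0) := by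
    have h := tendsto_measure_iInter_atTop (μ := m) (s := fun n : ℕ => ball x r ∩ {y | (n : ℝ) < u y})
      (fun n => (measurableSet_ball.inter
        (measurableSet_lt measurable_const hu.measurable)).nullMeasurableSet)
      (fun i j hij => inter_subset_inter_right _ fun y (hy : (j:ℝ) < u y) =>
        lt_of_le_of_lt (by exact_mod_cast hij) hy)
      ⟨0, ne_top_of_le_ne_top hfinB (measure_mono inter_subset_left)⟩
    have he : (⋂ n : ℕ, ball x r ∩ {y | (n : ℝ) < u y}) = ∅ := by
      rw [eq_empty_iff_forall_notMem]
      intro y hy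
      obtain ⟨n, hn⟩ := exists_nat_gt (u y)
      have h2 : (n : ℝ) < u y := (mem_iInter.1 hy n).2
      linarith
    rwa [he, measure_empty] at h
  obtain ⟨n, hn1, hn2⟩ := ((ht.eventually (ge_mem_nhds hδ)).and
    (eventually_ge_atTop ⌈u x + 1⌉₊)).exists
  refine ⟨n, aux_one_sided hN hgeo hsdc u hu g hg x r hr hfinB n (hn1.trans (measure_mono ?_))⟩
  refine inter_subset_inter_right _ fun y (hy : u y ≤ u x + 1) => ?_
  exact hy.trans (Nat.ceil_le.1 hn2)

lemma aux_neg_grad {u : X → ℝ} {g : X → ℝ≥0∞} (hg : IsUpperGradient u g) :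
    IsUpperGradient (fun y => - u y) g := by
  refine ⟨hg.1, fun γ l hl => ?_⟩
  have h : |(- u (γ 1)) - (- u (γ 0))| = |u (γ 1) - u (γ 0)| := by
    rw [← abs_neg]; congr 1; ring
  simp only [h]
  exact hg.2 γ l hl

lemma aux_poincare {m : Measure X} [SigmaFinite m] {N : ℝ} (hN : 1 ≤ N)
    (hgeo : IsGeodesicSpace X)
    (hsupp : ∀ x : X, ∀ ε > 0, 0 < m (Metric.ball x ε))
    (hsdc : StronglyDisplacementConvex (renyiEntropy N m))
    (u : X → ℝ) (hu : Continuous u) (g : X → ℝ≥0∞) (hg : IsUpperGradient u g)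
    (x : X) (r : ℝ) (hr : 0 < r) (hfinB : m (ball x r) ≠ ∞)
    (hgfin : ∫⁻ y in ball x (2 * r), g y ∂m ≠ ∞) :
    ∫⁻ y in ball x r, ENNReal.ofReal |u y - ⨍ z in ball x r, u z ∂m| ∂m ≤
      2 * (ENNReal.ofReal (2 * r) * ∫⁻ y in ball x (2 * r), g y ∂m) := by
  set C := ENNReal.ofReal (2 * r) * ∫⁻ y in ball x (2 * r), g y ∂m with hC
  have hCfin : C ≠ ∞ := ENNReal.mul_ne_top ENNReal.ofReal_ne_top hgfin
  set B := ball x r with hB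
  have hfinm : IsFiniteMeasure (m.restrict B) := isFiniteMeasure_restrict.2 hfinB
  have hB0 : m B ≠ 0 := (hsupp x r hr).ne'
  obtain ⟨a₁, ha₁⟩ := aux_exists_level hN hgeo hsupp hsdc u hu g hg x r hr hfinB
  obtain ⟨a₂, ha₂⟩ := aux_exists_level hN hgeo hsupp hsdc _ hu.neg g (aux_neg_grad hg) x r hr hfinB
  have hintg : Integrable u (m.restrict B) := by
    refine ⟨hu.aestronglyMeasurable, ?_⟩
    have hb : ∀ y, ‖u y‖ₑ ≤ ENNReal.ofReal (u y - a₁) +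
        (ENNReal.ofReal (-u y - a₂) + ENNReal.ofReal (|a₁| + |a₂|)) := by
      intro y
      rw [Real.enorm_eq_ofReal_abs]
      have h1 : |u y| ≤ max (u y - a₁) 0 + (max (-u y - a₂) 0 + (|a₁| + |a₂|)) := by
        have e1 := le_max_left (u y - a₁) 0
        have e2 := le_max_left (-u y - a₂) 0
        have e3 := le_max_right (u y - a₁) 0
        have e4 := le_max_right (-u y - a₂) 0
        have e5 := le_abs_self a₁
        have e6 := le_abs_self a₂
        have e7 := neg_abs_le a₁
        have e8 := neg_abs_le a₂
        rw [abs_le]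
        constructor <;> linarith [abs_nonneg a₁, abs_nonneg a₂]
      refine (ENNReal.ofReal_le_ofReal h1).trans ?_
      refine ENNReal.ofReal_add_le.trans (add_le_add ?_ (ENNReal.ofReal_add_le.trans (add_le_add ?_ le_rfl)))
      · rw [ENNReal.ofReal_max]; simp
      · rw [ENNReal.ofReal_max]; simp
    have hm1 : Measurable fun y => ENNReal.ofReal (u y - a₁) :=
      ENNReal.measurable_ofReal.comp (hu.measurable.sub_const _)
    have hm2 : Measurable fun y => ENNReal.ofReal (-u y - a₂) :=
      ENNReal.measurable_ofReal.comp (hu.measurable.neg.sub_const _)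
    refine (lintegral_mono hb).trans_lt ?_
    rw [lintegral_add_left hm1, lintegral_add_left hm2, lintegral_const]
    refine ENNReal.add_lt_top.2 ⟨ha₁.trans_lt hCfin.lt_top, ENNReal.add_lt_top.2
      ⟨ha₂.trans_lt hCfin.lt_top, ?_⟩⟩
    exact ENNReal.mul_lt_top ENNReal.ofReal_lt_top (measure_lt_top _ _)
  set a := ⨍ z in B, u z ∂m with ha
  have hia : Integrable (fun y => u y - a) (m.restrict B) := hintg.sub (integrable_const a)
  have hzero : ∫ y in B, (u y - a) ∂m = 0 := by
    have : NeZero (m.restrict B) := ⟨by rw [Ne, Measure.restrict_eq_zero]; exact hB0⟩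
    exact integral_sub_average (m.restrict B) u
  have hm1 : Measurable fun y => ENNReal.ofReal (u y - a) :=
    ENNReal.measurable_ofReal.comp (hu.measurable.sub_const _)
  have hfin1 : ∫⁻ y in B, ENNReal.ofReal (u y - a) ∂m ≠ ∞ := by
    refine ne_top_of_le_ne_top hia.2.ne (lintegral_mono fun y => ?_)
    exact Real.ofReal_le_enorm _
  have hfin2 : ∫⁻ y in B, ENNReal.ofReal (-(u y - a)) ∂m ≠ ∞ := by
    refine ne_top_of_le_ne_top hia.neg.2.ne (lintegral_mono fun y => ?_)
    exact Real.ofReal_le_enorm _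
  have heq : ∫⁻ y in B, ENNReal.ofReal (u y - a) ∂m = ∫⁻ y in B, ENNReal.ofReal (-(u y - a)) ∂m := by
    rw [integral_eq_lintegral_pos_part_sub_lintegral_neg_part hia, sub_eq_zero] at hzero
    exact (ENNReal.toReal_eq_toReal_iff' hfin1 hfin2).1 hzero
  have hsum : ∫⁻ y in B, ENNReal.ofReal |u y - a| ∂m =
      ∫⁻ y in B, ENNReal.ofReal (u y - a) ∂m + ∫⁻ y in B, ENNReal.ofReal (-(u y - a)) ∂m := by
    rw [← lintegral_add_left hm1]
    refine lintegral_congr fun y => ?_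
    rcases le_total 0 (u y - a) with h | h
    · rw [abs_of_nonneg h, ENNReal.ofReal_of_nonpos (p := -(u y - a)) (by linarith), add_zero]
    · rw [abs_of_nonpos h, ENNReal.ofReal_of_nonpos (p := u y - a) h, zero_add]
  rcases le_total (m (B ∩ {y | a < u y})) (m (B ∩ {y | u y ≤ a})) with h | h
  · have := aux_one_sided hN hgeo hsdc u hu g hg x r hr hfinB a h
    rw [hsum, ← heq, ← two_mul]
    gcongr
  · have h' : m (B ∩ {y | -a < - u y}) ≤ m (B ∩ {y | - u y ≤ -a}) := by
      refine le_trans (measure_mono ?_) (h.trans (measure_mono ?_))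
      · refine inter_subset_inter_right _ fun y (hy : -a < - u y) => ?_
        exact (by linarith : u y ≤ a)
      · refine inter_subset_inter_right _ fun y (hy : a < u y) => ?_
        exact (by linarith : - u y ≤ -a)
    have := aux_one_sided hN hgeo hsdc _ hu.neg g (aux_neg_grad hg) x r hr hfinB (-a) h'
    rw [hsum, heq, ← two_mul]
    gcongr
    refine le_trans (le_of_eq ?_) this
    refine lintegral_congr fun y => ?_
    congr 1; simp only [Pi.neg_apply]; ring

end

/-- Corollary 4: strong displacement convexity of `E_N` implies the weak local Poincaré
inequality in average form. -/
theorem renyi_sdc_weak_local_poincare_average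
    {X : Type*} [MetricSpace X] [CompleteSpace X] [MeasurableSpace X] [BorelSpace X]
    (m : Measure X) (hgeo : IsGeodesicSpace X)
    (hsupp : ∀ x : X, ∀ ε > 0, 0 < m (Metric.ball x ε))
    [IsLocallyFiniteMeasure m]
    {N : ℝ} (hN : 1 ≤ N) (hsdc : StronglyDisplacementConvex (renyiEntropy N m))
    (u : X → ℝ) (hu : Continuous u) (g : X → ℝ≥0∞) (hg : IsUpperGradient u g)
    (x : X) (r : ℝ) (hr : 0 < r) :
    (⨍⁻ y in Metric.ball x r,
        ENNReal.ofReal |u y - ⨍ z in Metric.ball x r, u z ∂m| ∂m)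
      ≤ ENNReal.ofReal ((2:ℝ) ^ (N + 2) * r) *
          ⨍⁻ y in Metric.ball x (2 * r), g y ∂m := by
  have hsc : SecondCountableTopology X := aux_separable m hgeo hsupp
  have hB := (aux_finite_ball hN hgeo hsdc x r).ne
  have h2B := (aux_finite_ball hN hgeo hsdc x (2 * r)).ne
  have hB0 : m (ball x r) ≠ 0 := (hsupp x r hr).ne'
  have h2B0 : m (ball x (2 * r)) ≠ 0 := (hsupp x (2 * r) (by positivity)).ne'
  have hdoub := aux_doubling hN hgeo hsdc x r hr
  rw [setLAverage_eq, setLAverage_eq]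
  rcases eq_or_ne (∫⁻ y in ball x (2 * r), g y ∂m) ∞ with hg' | hg'
  · rw [hg', ENNReal.top_div_of_ne_top h2B, ENNReal.mul_top]
    · exact le_top
    · rw [Ne, ENNReal.ofReal_eq_zero, not_le]; positivity
  have hP := aux_poincare hN hgeo hsupp hsdc u hu g hg x r hr hB hg'
  refine ENNReal.div_le_of_le_mul (hP.trans ?_)
  set I := ∫⁻ y in ball x (2 * r), g y ∂m
  have hconst : ENNReal.ofReal ((2:ℝ) ^ (N + 2) * r) =
      2 * ENNReal.ofReal (2 * r) * ENNReal.ofReal (2 ^ N) := by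
    have h2 : (2 : ℝ≥0∞) = ENNReal.ofReal 2 := by simp
    rw [h2, ← ENNReal.ofReal_mul (by norm_num), ← ENNReal.ofReal_mul (by positivity),
      Real.rpow_add (by norm_num)]
    congr 1
    norm_num
    ring
  calc 2 * (ENNReal.ofReal (2 * r) * I)
      = 2 * ENNReal.ofReal (2 * r) * (m (ball x (2 * r)) * (I / m (ball x (2 * r)))) := by
        rw [ENNReal.mul_div_cancel h2B0 h2B, mul_assoc]
    _ ≤ 2 * ENNReal.ofReal (2 * r) * ((ENNReal.ofReal (2 ^ N) * m (ball x r)) *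
          (I / m (ball x (2 * r)))) := by gcongr
    _ = _ := by rw [hconst]; ring
end

section
/- Let N ∈ [1,∞) and let (X,d,m) be a geodesic metric measure space, with m locally finite, in which the Rényi entropy functional E_N is strongly displacement convex. Then for every continuous function u : X → ℝ, every upper gradient g of u, every x ∈ X and every r > 0, the strong local Poincaré inequality holds: ⨍_{B(x,r)} |u − ⟨u⟩_{B(x,r)}| dm ≤ 2^{N+2} r ⨍_{B(x,r)} g dm, where ⨍ denotes the average integral (the balls on both sides are the same). -/
open MeasureTheory Metric Set Filter ProbabilityTheory
open scoped ENNReal NNReal Topology ProbabilityTheory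

/-- Borel selection on a compact set. -/
theorem rp_sel_compact {P Y : Type*} [MetricSpace P] [MeasurableSpace P] [BorelSpace P]
    [MetricSpace Y] [MeasurableSpace Y] [BorelSpace Y] (K : Set P) (hK : IsCompact K)
    (hne : K.Nonempty) (f : P → Y) (hf : Continuous f) :
    ∃ s : Y → P, Measurable s ∧ ∀ y ∈ f '' K, s y ∈ K ∧ f (s y) = y := by
  have : CompactSpace K := isCompact_iff_compactSpace.1 hK
  have : Nonempty K := hne.to_subtype
  obtain ⟨c, hc, hcs⟩ := exists_nat_bool_continuous_surjective_of_compact K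
  obtain ⟨p0, hp0⟩ := hne
  let φ : cantorSet → P := fun z => (c (cantorSetHomeomorphNatToBool z) : P)
  have hφ : Continuous φ := by
    exact continuous_subtype_val.comp (hc.comp cantorSetHomeomorphNatToBool.continuous)
  have hφK : ∀ z, φ z ∈ K := fun z => (c _).2
  have hφs : ∀ p ∈ K, ∃ z, φ z = p := by
    intro p hp
    obtain ⟨w, hw⟩ := hcs ⟨p, hp⟩
    refine ⟨cantorSetHomeomorphNatToBool.symm w, ?_⟩
    simp [φ, hw]
  have : CompactSpace cantorSet := isCompact_iff_compactSpace.1 isCompact_cantorSet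
  let S : Y → Set ℝ := fun y => Subtype.val '' {z : cantorSet | f (φ z) = y}
  have hScomp : ∀ y, IsCompact (S y) := fun y =>
    ((isClosed_eq (hf.comp hφ) continuous_const).isCompact).image continuous_subtype_val
  let F : Set Y := f '' K
  have hF : IsClosed F := (hK.image hf).isClosed
  have hSne : ∀ y ∈ F, (S y).Nonempty := by
    rintro y ⟨p, hp, rfl⟩
    obtain ⟨z, hz⟩ := hφs p hp
    exact ⟨z, z, by simp [hz], rfl⟩
  classical
  let τ : Y → ℝ := fun y => if y ∈ F then sInf (S y) else 0
  have hτmem : ∀ y ∈ F, τ y ∈ S y := by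
    intro y hy
    simp only [τ, hy, if_true]
    exact (hScomp y).sInf_mem (hSne y hy)
  have hτ : Measurable τ := by
    refine measurable_of_Iic fun a => ?_
    have hG : IsClosed ((fun z => f (φ z)) '' {z : cantorSet | (z : ℝ) ≤ a}) :=
      ((isClosed_le continuous_subtype_val continuous_const).isCompact.image
        (hf.comp hφ)).isClosed
    have hEq : τ ⁻¹' Iic a = ((fun z => f (φ z)) '' {z : cantorSet | (z : ℝ) ≤ a}) ∪
        (Fᶜ ∩ {_y | (0:ℝ) ≤ a}) := by
      ext y
      constructor
      · intro hy
        by_cases hyF : y ∈ F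
        · left
          obtain ⟨z, hz, hz'⟩ := hτmem y hyF
          exact ⟨z, by rw [Set.mem_ofPred_eq, hz']; exact hy, hz⟩
        · right
          refine ⟨hyF, ?_⟩
          simpa [τ, hyF] using hy
      · rintro (⟨z, hz, rfl⟩ | ⟨hyF, h0⟩)
        · have hyF : f (φ z) ∈ F := ⟨φ z, hφK z, rfl⟩
          simp only [τ, hyF, if_true, mem_preimage, mem_Iic]
          exact (csInf_le (hScomp _).bddBelow ⟨z, rfl, rfl⟩).trans hz
        · have hyF' : y ∉ F := hyF
          simp only [τ, hyF', if_false, mem_preimage, mem_Iic]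
          exact h0
    rw [hEq]
    exact hG.measurableSet.union (hF.measurableSet.compl.inter (MeasurableSet.const _))
  let ψ : ℝ → P := fun t => if h : t ∈ cantorSet then φ ⟨t, h⟩ else p0
  have hψ : Measurable ψ :=
    Measurable.dite (s := cantorSet) (f := φ) (g := fun _ => p0) hφ.measurable measurable_const
      isClosed_cantorSet.measurableSet
  refine ⟨fun y => ψ (τ y), hψ.comp hτ, ?_⟩
  intro y hy
  obtain ⟨z, hz, hz'⟩ := hτmem y hy
  have : ψ (τ y) = φ z := by
    rw [← hz']
    simp [ψ]
  simp only [this]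
  exact ⟨hφK z, hz⟩

theorem rp_tb {P : Type*} [MetricSpace P] {S : Set P}
    (h : ∀ k : ℕ, ∃ T : Set P, T.Finite ∧ S ⊆ ⋃ y ∈ T, closedBall y (1 / ((k : ℝ) + 1))) :
    TotallyBounded S := by
  rw [Metric.totallyBounded_iff]
  intro ε hε
  obtain ⟨k, hk⟩ := exists_nat_one_div_lt hε
  obtain ⟨T, hT, hS⟩ := h k
  exact ⟨T, hT, hS.trans (iUnion₂_mono fun y _ => closedBall_subset_ball hk)⟩

/-- Capacity argument: a continuous image of a Polish space is exhausted by images of compacts. -/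
theorem rp_capacity {P Y : Type*} [MetricSpace P] [CompleteSpace P] [SecondCountableTopology P]
    [MetricSpace Y] [MeasurableSpace Y] [BorelSpace Y] (μ : Measure Y) [IsFiniteMeasure μ]
    (F : Set P) (hF : IsClosed F) (f : P → Y) (hf : Continuous f)
    (hs : ∀ y, ∃ p ∈ F, f p = y) (ε : ℝ≥0∞) (hε : ε ≠ 0) :
    ∃ K ⊆ F, IsCompact K ∧ μ univ ≤ μ (f '' K) + ε := by
  rcases isEmpty_or_nonempty P with hP | hP
  · refine ⟨∅, empty_subset _, isCompact_empty, ?_⟩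
    have : (univ : Set Y) = ∅ := by
      ext y; obtain ⟨p, -⟩ := hs y; exact hP.elim p
    rw [this]; simp
  obtain ⟨δ, hδ0, hδ⟩ := ENNReal.exists_pos_sum_of_countable' hε ℕ
  let q := TopologicalSpace.denseSeq P
  let U : ℕ → ℕ → Set P := fun k b => ⋃ i ∈ Finset.range (b + 1), closedBall (q i) (1 / ((k : ℝ) + 1))
  have hUmono : ∀ k, Monotone (U k) := by
    intro k a b hab
    refine biUnion_subset_biUnion_left ?_
    intro i hi
    simp only [Finset.coe_range, Finset.mem_range, SetLike.mem_coe] at hi ⊢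
    first | omega | (change i < _ ; have : i < a + 1 := hi; omega)
  have hUclosed : ∀ k b, IsClosed (U k b) := fun k b =>
    Set.Finite.isClosed_biUnion (Finset.finite_toSet (Finset.range (b + 1)))
      (fun i _ => isClosed_closedBall)
  have hUuniv : ∀ k, ⋃ b, U k b = univ := by
    intro k
    refine eq_univ_of_forall fun p => ?_
    obtain ⟨i, hi⟩ := (TopologicalSpace.denseRange_denseSeq P).exists_dist_lt p
      (show (0:ℝ) < 1 / ((k : ℝ) + 1) by positivity)
    refine mem_iUnion.2 ⟨i, mem_iUnion₂.2 ⟨i, ?_, ?_⟩⟩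
    · simp
    · exact mem_closedBall.2 hi.le
  have hstep : ∀ k (C : Set P), ∃ b, μ (f '' C) ≤ μ (f '' (C ∩ U k b)) + δ k := by
    intro k C
    have h1 : f '' C = ⋃ b, f '' (C ∩ U k b) := by
      rw [← image_iUnion, ← inter_iUnion, hUuniv, inter_univ]
    have hm : Monotone fun b => f '' (C ∩ U k b) := fun a b hab =>
      image_mono (inter_subset_inter_right _ (hUmono k hab))
    have h2 : μ (f '' C) = ⨆ b, μ (f '' (C ∩ U k b)) := by
      conv_lhs => rw [h1]
      exact hm.measure_iUnion
    by_cases h0 : μ (f '' C) = 0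
    · exact ⟨0, by simp [h0]⟩
    have hlt : μ (f '' C) - δ k < ⨆ b, μ (f '' (C ∩ U k b)) := by
      rw [← h2]
      exact ENNReal.sub_lt_self (measure_ne_top _ _) h0 (hδ0 k).ne'
    obtain ⟨b, hb⟩ := lt_iSup_iff.1 hlt
    exact ⟨b, tsub_le_iff_right.1 hb.le⟩
  choose b hb using hstep
  let C : ℕ → Set P := fun n => Nat.rec F (fun k Ck => Ck ∩ U k (b k Ck)) n
  have hC0 : C 0 = F := rfl
  have hCs : ∀ k, C (k + 1) = C k ∩ U k (b k (C k)) := fun k => rfl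
  have hCclosed : ∀ k, IsClosed (C k) := by
    intro k
    induction k with
    | zero => exact hF
    | succ k ih => rw [hCs]; exact ih.inter (hUclosed _ _)
  have hCanti : Antitone C := antitone_nat_of_succ_le fun k => by
    rw [hCs]; exact inter_subset_left
  have hCmeas : ∀ k, μ univ ≤ μ (f '' C k) + ∑ j ∈ Finset.range k, δ j := by
    intro k
    induction k with
    | zero =>
      have : f '' C 0 = univ := eq_univ_of_forall fun y => by
        obtain ⟨p, hp, h⟩ := hs y
        exact ⟨p, hp, h⟩
      simp [this]
    | succ k ih =>
      rw [Finset.sum_range_succ, hCs]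
      calc μ univ ≤ μ (f '' C k) + ∑ j ∈ Finset.range k, δ j := ih
        _ ≤ (μ (f '' (C k ∩ U k (b k (C k)))) + δ k) + ∑ j ∈ Finset.range k, δ j := by
            gcongr; exact hb k (C k)
        _ = _ := by ring
  have hCmeas' : ∀ k, μ univ ≤ μ (f '' C k) + ε := fun k => (hCmeas k).trans (by
    gcongr; exact (ENNReal.sum_le_tsum _).trans hδ.le)
  have hCU : ∀ k, ∃ T : Set P, T.Finite ∧ C (k + 1) ⊆ ⋃ y ∈ T, closedBall y (1 / ((k : ℝ) + 1)) := by
    intro k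
    refine ⟨q '' (Finset.range (b k (C k) + 1) : Set ℕ), (Finset.finite_toSet _).image _, ?_⟩
    rw [hCs, biUnion_image]
    exact inter_subset_right
  refine ⟨⋂ k, C k, iInter_subset C 0, ?_, ?_⟩
  · refine TotallyBounded.isCompact_of_isClosed (rp_tb fun k => ?_) (isClosed_iInter hCclosed)
    obtain ⟨T, hT, h⟩ := hCU k
    exact ⟨T, hT, (iInter_subset C (k+1)).trans h⟩
  · have h1 : (⋂ k, closure (f '' C k)) ⊆ f '' (⋂ k, C k) := by
      intro y hy
      have : ∀ k : ℕ, ∃ p ∈ C k, dist y (f p) < 1 / ((k:ℝ) + 1) := by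
        intro k
        have := Metric.mem_closure_iff.1 (mem_iInter.1 hy k) (1 / ((k:ℝ) + 1)) (by positivity)
        obtain ⟨_, ⟨p, hp, rfl⟩, h⟩ := this
        exact ⟨p, hp, h⟩
      choose p hp hpd using this
      have htb : TotallyBounded (range p) := by
        refine rp_tb fun k => ?_
        obtain ⟨T, hT, h⟩ := hCU k
        refine ⟨T ∪ p '' (Finset.range (k+1) : Set ℕ),
          hT.union ((Finset.finite_toSet _).image _), ?_⟩
        rintro _ ⟨j, rfl⟩
        rcases lt_or_ge j (k+1) with hj | hj
        · refine mem_iUnion₂.2 ⟨p j, Or.inr ⟨j, by simpa using hj, rfl⟩, ?_⟩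
          exact mem_closedBall_self (by positivity)
        · obtain ⟨z, hz, hz'⟩ := mem_iUnion₂.1 (h (hCanti hj (hp j)))
          exact mem_iUnion₂.2 ⟨z, Or.inl hz, hz'⟩
      have hcomp : IsCompact (closure (range p)) :=
        TotallyBounded.isCompact_of_isClosed htb.closure isClosed_closure
      obtain ⟨a, -, φ, hφ, hlim⟩ := hcomp.tendsto_subseq
        (fun n => subset_closure (mem_range_self n) : ∀ n, p n ∈ closure (range p))
      refine ⟨a, mem_iInter.2 fun k => ?_, ?_⟩
      · refine (hCclosed k).mem_of_tendsto hlim ?_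
        filter_upwards [eventually_ge_atTop k] with n hn
        exact hCanti (hn.trans (hφ.id_le n)) (hp _)
      · have h2 : Tendsto (fun n => f (p (φ n))) atTop (𝓝 (f a)) := (hf.tendsto a).comp hlim
        have h3 : Tendsto (fun n => f (p n)) atTop (𝓝 y) := by
          rw [tendsto_iff_dist_tendsto_zero]
          refine squeeze_zero (fun _ => dist_nonneg) (fun n => ?_)
            tendsto_one_div_add_atTop_nhds_zero_nat
          rw [dist_comm]; exact (hpd n).le
        exact tendsto_nhds_unique h2 (h3.comp hφ.tendsto_atTop)
    have h2 : Tendsto (fun k => μ (closure (f '' C k))) atTop (𝓝 (μ (⋂ k, closure (f '' C k)))) :=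
      tendsto_measure_iInter_atTop (fun k => isClosed_closure.measurableSet.nullMeasurableSet)
        (fun a b hab => closure_mono (image_mono (hCanti hab))) ⟨0, measure_ne_top _ _⟩
    have h3 : μ univ ≤ μ (⋂ k, closure (f '' C k)) + ε := by
      refine ge_of_tendsto' (h2.add_const ε) fun k => ?_
      exact (hCmeas' k).trans (by gcongr; exact subset_closure)
    exact h3.trans (by gcongr)

/-- Almost everywhere Borel selection. -/
theorem rp_sel_ae {P Y : Type*} [MetricSpace P] [CompleteSpace P] [SecondCountableTopology P]
    [MeasurableSpace P] [BorelSpace P]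
    [MetricSpace Y] [MeasurableSpace Y] [BorelSpace Y] (μ : Measure Y) [IsFiniteMeasure μ]
    (F : Set P) (hF : IsClosed F) (hFne : F.Nonempty) (f : P → Y) (hf : Continuous f)
    (hs : ∀ y, ∃ p ∈ F, f p = y) :
    ∃ s : Y → P, Measurable s ∧ ∀ᵐ y ∂μ, s y ∈ F ∧ f (s y) = y := by
  have key : ∀ n : ℕ, ∃ (K : Set P) (s : Y → P), K ⊆ F ∧ IsCompact K ∧
      μ univ ≤ μ (f '' K) + ((n : ℝ≥0∞) + 1)⁻¹ ∧ Measurable s ∧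
      ∀ y ∈ f '' K, s y ∈ K ∧ f (s y) = y := by
    intro n
    obtain ⟨K, hKF, hK, hm⟩ := rp_capacity μ F hF f hf hs ((n : ℝ≥0∞) + 1)⁻¹ (by simp)
    rcases K.eq_empty_or_nonempty with rfl | hne
    · obtain ⟨p, hp⟩ := hFne
      exact ⟨∅, fun _ => p, hKF, hK, hm, measurable_const, by simp⟩
    · obtain ⟨s, hs1, hs2⟩ := rp_sel_compact K hK hne f hf
      exact ⟨K, s, hKF, hK, hm, hs1, hs2⟩
  choose K s hKF hK hm hsm hsK using key
  classical
  have hmeas : ∀ n, MeasurableSet (f '' K n) := fun n => ((hK n).image hf).isClosed.measurableSet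
  have hfull : μ (⋃ n, f '' K n)ᶜ = 0 := by
    have hle : ∀ n : ℕ, μ (⋃ n, f '' K n)ᶜ ≤ ((n : ℝ≥0∞) + 1)⁻¹ := by
      intro n
      rw [measure_compl (MeasurableSet.iUnion hmeas) (measure_ne_top _ _)]
      rw [tsub_le_iff_left]
      exact (hm n).trans (by gcongr; exact subset_iUnion (fun n => f '' K n) n)
    refine le_antisymm ?_ bot_le
    refine ge_of_tendsto' (?_ : Tendsto (fun n : ℕ => ((n : ℝ≥0∞) + 1)⁻¹) atTop (𝓝 0)) hle
    have := (tendsto_add_atTop_iff_nat 1).2 ENNReal.tendsto_inv_nat_nhds_zero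
    simpa using this
  let p : Y → ℕ → Prop := fun y n => y ∈ f '' K n ∨ y ∉ ⋃ n, f '' K n
  have hp : ∀ y, ∃ n, p y n := by
    intro y
    by_cases h : y ∈ ⋃ n, f '' K n
    · obtain ⟨n, hn⟩ := mem_iUnion.1 h
      exact ⟨n, Or.inl hn⟩
    · exact ⟨0, Or.inr h⟩
  refine ⟨fun y => s (Nat.find (hp y)) y, ?_, ?_⟩
  · exact Measurable.find (p := fun n y => p y n) hsm
      (fun n => (hmeas n).union (MeasurableSet.iUnion hmeas).compl) hp
  · rw [ae_iff]
    refine measure_mono_null ?_ hfull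
    intro y hy hy'
    refine hy ?_
    have h1 : y ∈ f '' K (Nat.find (hp y)) := (Nat.find_spec (hp y)).resolve_right (fun h => h hy')
    have := hsK _ y h1
    exact ⟨hKF _ this.1, this.2⟩


/-- Gluing lemma. -/
theorem rp_glue {X : Type*} [MeasurableSpace X] [StandardBorelSpace X]
    (σ τ : Measure (X × X)) [IsProbabilityMeasure σ] [IsProbabilityMeasure τ]
    (h : σ.map Prod.snd = τ.map Prod.fst) :
    ∃ ρ : Measure ((X × X) × X), ρ.map Prod.fst = σ ∧
      ρ.map (fun p => (p.1.2, p.2)) = τ := by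
  have : Nonempty (X × X) := by
    by_contra hne
    rw [not_nonempty_iff] at hne
    have h1 : σ univ = 1 := measure_univ
    rw [univ_eq_empty_iff.2 hne] at h1
    simp at h1
  have : Nonempty X := ⟨(this.some).1⟩
  let κ : Kernel (X × X) X := τ.condKernel.comap Prod.snd measurable_snd
  have : IsMarkovKernel κ := by dsimp only [κ]; infer_instance
  refine ⟨σ ⊗ₘ κ, Measure.fst_compProd _ _, ?_⟩
  have hτ : τ.fst ⊗ₘ τ.condKernel = τ := τ.disintegrate τ.condKernel
  refine Measure.ext_of_lintegral _ fun f hf => ?_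
  rw [lintegral_map hf (by fun_prop), Measure.lintegral_compProd (by fun_prop)]
  conv_rhs => rw [← hτ, Measure.lintegral_compProd hf, Measure.fst, ← h,
    lintegral_map (by fun_prop) (by fun_prop)]
  rfl

section
variable {X : Type*} [MetricSpace X] [CompleteSpace X] [SecondCountableTopology X]
  [MeasurableSpace X] [BorelSpace X]

theorem rp_prob_of_map {Y Z : Type*} [MeasurableSpace Y] [MeasurableSpace Z] {σ : Measure Y}
    {f : Y → Z} (hf : Measurable f) {μ : Measure Z} [IsProbabilityMeasure μ] (h : σ.map f = μ) :
    IsProbabilityMeasure σ := by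
  constructor
  have h1 : μ univ = 1 := measure_univ
  rw [← h, Measure.map_apply hf MeasurableSet.univ] at h1
  simpa using h1

theorem rp_edist_sq (p : X × X) : edist p.1 p.2 ^ 2 = ENNReal.ofReal (dist p.1 p.2 ^ 2) := by
  rw [edist_dist, ENNReal.ofReal_pow dist_nonneg]

/-- Existence of optimal couplings. -/
theorem rp_exists_opt (μ ν : Measure X) [IsProbabilityMeasure μ] [IsProbabilityMeasure ν] :
    ∃ σ : Measure (X × X), (σ.map Prod.fst = μ ∧ σ.map Prod.snd = ν) ∧
      ∫⁻ p, edist p.1 p.2 ^ 2 ∂σ = W2sq μ ν := by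
  let S : Set (ProbabilityMeasure (X × X)) :=
    {σ | (σ : Measure (X × X)).map Prod.fst = μ ∧ (σ : Measure (X × X)).map Prod.snd = ν}
  have hScl : IsClosed S := by
    have h1 : Continuous fun σ : ProbabilityMeasure (X × X) =>
        σ.map (f := Prod.fst) measurable_fst.aemeasurable :=
      ProbabilityMeasure.continuous_map continuous_fst
    have h2 : Continuous fun σ : ProbabilityMeasure (X × X) =>
        σ.map (f := Prod.snd) measurable_snd.aemeasurable :=
      ProbabilityMeasure.continuous_map continuous_snd
    let μ' : ProbabilityMeasure X := ⟨μ, inferInstance⟩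
    let ν' : ProbabilityMeasure X := ⟨ν, inferInstance⟩
    have e1 := isClosed_eq h1 (continuous_const (y := μ'))
    have e2 := isClosed_eq h2 (continuous_const (y := ν'))
    convert e1.inter e2 using 1
    ext σ
    simp only [S, mem_ofPred_eq, mem_inter_iff]
    refine and_congr ⟨fun h => Subtype.ext h, fun h => congrArg Subtype.val h⟩
      ⟨fun h => Subtype.ext h, fun h => congrArg Subtype.val h⟩
  have hStight : IsTightMeasureSet {((σ : ProbabilityMeasure (X × X)) : Measure (X × X)) | σ ∈ S} := by
    rw [isTightMeasureSet_iff_exists_isCompact_measure_compl_le]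
    intro ε hε
    obtain ⟨K, hK, hKμ⟩ := isTightMeasureSet_iff_exists_isCompact_measure_compl_le.1
      (isTightMeasureSet_singleton (μ := μ)) (ε / 2) (ENNReal.half_pos hε.ne')
    obtain ⟨L, hL, hLν⟩ := isTightMeasureSet_iff_exists_isCompact_measure_compl_le.1
      (isTightMeasureSet_singleton (μ := ν)) (ε / 2) (ENNReal.half_pos hε.ne')
    refine ⟨K ×ˢ L, hK.prod hL, ?_⟩
    rintro _ ⟨σ, ⟨hσ1, hσ2⟩, rfl⟩
    have hsub : (K ×ˢ L)ᶜ ⊆ Prod.fst ⁻¹' Kᶜ ∪ Prod.snd ⁻¹' Lᶜ := by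
      rintro ⟨a, b⟩ hab
      by_contra hcon
      apply hab
      simp only [mem_union, mem_preimage, mem_compl_iff, not_or, not_not] at hcon
      exact hcon
    calc (σ : Measure (X × X)) (K ×ˢ L)ᶜ
        ≤ (σ : Measure (X × X)) (Prod.fst ⁻¹' Kᶜ) + (σ : Measure (X × X)) (Prod.snd ⁻¹' Lᶜ) :=
          (measure_mono hsub).trans (measure_union_le _ _)
      _ = μ Kᶜ + ν Lᶜ := by
          rw [← Measure.map_apply measurable_fst hK.isClosed.measurableSet.compl, hσ1,
            ← Measure.map_apply measurable_snd hL.isClosed.measurableSet.compl, hσ2]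
      _ ≤ ε / 2 + ε / 2 := add_le_add (hKμ _ rfl) (hLν _ rfl)
      _ = ε := ENNReal.add_halves ε
  have hScomp : IsCompact S := by
    have := isCompact_closure_of_isTightMeasureSet hStight
    rwa [hScl.closure_eq] at this
  let c : ProbabilityMeasure (X × X) → ℝ≥0∞ := fun σ => ∫⁻ p, edist p.1 p.2 ^ 2 ∂(σ : Measure (X × X))
  have hne : (c '' S).Nonempty := by
    refine ⟨_, ⟨μ.prod ν, inferInstance⟩, ?_, rfl⟩
    exact ⟨by simp, by simp⟩
  obtain ⟨v, -, hv, hvS⟩ := exists_seq_tendsto_sInf hne (OrderBot.bddBelow _)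
  choose σs hσS hσv using hvS
  obtain ⟨σ, hσ, φ, hφ, hlim⟩ := hScomp.tendsto_subseq hσS
  have hW : sInf (c '' S) = W2sq μ ν := by
    refine le_antisymm ?_ ?_
    · refine le_iInf₂ fun τ hτ => ?_
      have : IsProbabilityMeasure τ := rp_prob_of_map measurable_fst hτ.1
      exact sInf_le ⟨⟨τ, this⟩, hτ, rfl⟩
    · refine le_sInf ?_
      rintro _ ⟨τ, hτ, rfl⟩
      exact iInf₂_le (τ : Measure (X × X)) hτ
  refine ⟨σ, hσ, le_antisymm ?_ (iInf₂_le (σ : Measure (X × X)) hσ)⟩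
  have h1 := lintegral_le_liminf_lintegral_of_forall_isOpen_measure_le_liminf_measure
    (μ := (σ : Measure (X × X))) (μs := fun n => (σs (φ n) : Measure (X × X)))
    (f := fun p => dist p.1 p.2 ^ 2) (by fun_prop) (fun p => by positivity)
    (fun G hG => ProbabilityMeasure.le_liminf_measure_open_of_tendsto hlim hG)
  simp only [← rp_edist_sq] at h1
  refine h1.trans ?_
  rw [← hW]
  have h2 : Tendsto (fun n => c (σs (φ n))) atTop (𝓝 (sInf (c '' S))) := by
    simp only [hσv]
    exact hv.comp hφ.tendsto_atTop
  exact h2.liminf_eq.le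

theorem rp_W2_triangle (μ ν ξ : Measure X) [IsProbabilityMeasure μ] [IsProbabilityMeasure ν]
    [IsProbabilityMeasure ξ] : W2 μ ξ ≤ W2 μ ν + W2 ν ξ := by
  obtain ⟨σ, ⟨hσ1, hσ2⟩, hσ⟩ := rp_exists_opt μ ν
  obtain ⟨τ, ⟨hτ1, hτ2⟩, hτ⟩ := rp_exists_opt ν ξ
  have : IsProbabilityMeasure σ := rp_prob_of_map measurable_fst hσ1
  have : IsProbabilityMeasure τ := rp_prob_of_map measurable_fst hτ1
  obtain ⟨ρ, hρ1, hρ2⟩ := rp_glue σ τ (hσ2.trans hτ1.symm)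
  have hc : W2sq μ ξ ≤ ∫⁻ p, edist p.1.1 p.2 ^ 2 ∂ρ := by
    have hcoup : (ρ.map (fun p => (p.1.1, p.2))).map Prod.fst = μ ∧
        (ρ.map (fun p => (p.1.1, p.2))).map Prod.snd = ξ := by
      constructor
      · rw [Measure.map_map (by fun_prop) (by fun_prop), ← hσ1, ← hρ1,
          Measure.map_map (by fun_prop) (by fun_prop)]
        rfl
      · rw [Measure.map_map (by fun_prop) (by fun_prop), ← hτ2, ← hρ2,
          Measure.map_map (by fun_prop) (by fun_prop)]
        rfl
    have hle : W2sq μ ξ ≤ ∫⁻ p, edist p.1 p.2 ^ 2 ∂(ρ.map (fun p => (p.1.1, p.2))) :=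
      iInf₂_le (ρ.map (fun p => (p.1.1, p.2))) hcoup
    rwa [lintegral_map (by fun_prop) (by fun_prop)] at hle
  have h12 : ∫⁻ p, edist p.1.1 p.1.2 ^ 2 ∂ρ = W2sq μ ν := by
    rw [← hσ, ← hρ1, lintegral_map (by fun_prop) (by fun_prop)]
  have h23 : ∫⁻ p, edist p.1.2 p.2 ^ 2 ∂ρ = W2sq ν ξ := by
    rw [← hτ, ← hρ2, lintegral_map (by fun_prop) (by fun_prop)]
  have hM := ENNReal.lintegral_Lp_add_le (μ := ρ) (p := 2)
    (f := fun p => edist p.1.1 p.1.2) (g := fun p => edist p.1.2 p.2)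
    (by fun_prop) (by fun_prop) (by norm_num)
  simp only [Pi.add_apply, ENNReal.rpow_two, h12, h23] at hM
  refine le_trans ?_ hM
  unfold W2
  gcongr
  refine hc.trans ?_
  gcongr
  exact edist_triangle _ _ _
end


/-- Evaluation at time `t` (clamped to `[0,1]`). -/
noncomputable def rpEv {X : Type*} [MetricSpace X] (t : ℝ) (γ : C(unitInterval, X)) : X :=
  γ (projIcc 0 1 zero_le_one t)

/-- The set of geodesics. -/
def rpGeo (X : Type*) [MetricSpace X] : Set C(unitInterval, X) :=
  {γ | ∀ s t : unitInterval, dist (γ s) (γ t) = |(s:ℝ) - t| * dist (γ 0) (γ 1)}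

section
variable {X : Type*} [MetricSpace X]

theorem rp_isClosed_geo : IsClosed (rpGeo X) := by
  have : rpGeo X = ⋂ (s : unitInterval) (t : unitInterval),
      {γ : C(unitInterval, X) | dist (γ s) (γ t) = |(s:ℝ) - t| * dist (γ 0) (γ 1)} := by
    ext γ; simp only [rpGeo, mem_iInter, mem_ofPred_eq]
  rw [this]
  refine isClosed_iInter fun s => isClosed_iInter fun t => isClosed_eq ?_ ?_ <;> fun_prop

theorem rp_geo_exists (hgeo : IsGeodesicSpace X) (p : X × X) :
    ∃ γ ∈ rpGeo X, ((γ 0, γ 1) : X × X) = p := by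
  obtain ⟨γ, hγ, h0, h1⟩ := hgeo p.1 p.2
  have hd : ∀ s t : unitInterval, dist (γ s) (γ t) = |(s:ℝ) - t| * dist (γ 0) (γ 1) :=
    fun s t => hγ s s.2 t t.2
  have hc : Continuous fun s : unitInterval => γ s := by
    have : LipschitzWith (dist (γ 0) (γ 1)).toNNReal fun s : unitInterval => γ s := by
      refine LipschitzWith.of_dist_le_mul fun s t => ?_
      rw [hd, Real.coe_toNNReal _ dist_nonneg, mul_comm]
      rfl
    exact this.continuous
  refine ⟨⟨_, hc⟩, ?_, ?_⟩
  · intro s t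
    simpa using hd s t
  · simp [h0, h1]

theorem rp_ev_cont (t : ℝ) : Continuous (rpEv (X := X) t) := by
  unfold rpEv; fun_prop

theorem rp_ev_dist {γ : C(unitInterval, X)} (hγ : γ ∈ rpGeo X) {s t : ℝ} (hs : s ∈ Icc (0:ℝ) 1)
    (ht : t ∈ Icc (0:ℝ) 1) : dist (rpEv s γ) (rpEv t γ) = |s - t| * dist (rpEv 0 γ) (rpEv 1 γ) := by
  have := hγ ⟨s, hs⟩ ⟨t, ht⟩
  simp only [rpEv, projIcc_of_mem _ hs, projIcc_of_mem _ ht, projIcc_left, projIcc_right]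
  simpa using this

end

section
variable {X : Type*} [MetricSpace X] [CompleteSpace X] [SecondCountableTopology X]
  [MeasurableSpace X] [BorelSpace X] [MeasurableSpace C(unitInterval, X)]
  [BorelSpace C(unitInterval, X)]

theorem rp_ev_meas (t : ℝ) : Measurable (rpEv (X := X) t) := (rp_ev_cont t).measurable

theorem rp_geo_lift (hgeo : IsGeodesicSpace X) (μ ν : Measure X) [IsProbabilityMeasure μ]
    [IsProbabilityMeasure ν] :
    ∃ π : Measure C(unitInterval, X), IsProbabilityMeasure π ∧ (∀ᵐ γ ∂π, γ ∈ rpGeo X) ∧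
      π.map (rpEv 0) = μ ∧ π.map (rpEv 1) = ν ∧
      ∫⁻ γ, edist (rpEv 0 γ) (rpEv 1 γ) ^ 2 ∂π = W2sq μ ν := by
  obtain ⟨σ, ⟨h1, h2⟩, hσ⟩ := rp_exists_opt μ ν
  have : IsProbabilityMeasure σ := rp_prob_of_map measurable_fst h1
  have hne : (rpGeo X).Nonempty := by
    have : (univ : Set (X × X)).Nonempty := nonempty_of_measure_ne_zero (μ := σ) (by simp)
    obtain ⟨p, -⟩ := this
    obtain ⟨γ, hγ, -⟩ := rp_geo_exists hgeo p
    exact ⟨γ, hγ⟩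
  let f : C(unitInterval, X) → X × X := fun γ => (rpEv 0 γ, rpEv 1 γ)
  have hf : Continuous f := (rp_ev_cont 0).prodMk (rp_ev_cont 1)
  obtain ⟨s, hs, hsσ⟩ := rp_sel_ae σ (rpGeo X) rp_isClosed_geo hne f hf (by
    intro p
    obtain ⟨γ, hγ, h⟩ := rp_geo_exists hgeo p
    exact ⟨γ, hγ, by simpa [f, rpEv] using h⟩)
  have hpush : (σ.map s).map f = σ := by
    rw [Measure.map_map hf.measurable hs]
    have : f ∘ s =ᵐ[σ] id := hsσ.mono fun y hy => hy.2
    rw [Measure.map_congr this, Measure.map_id]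
  have e0 : (σ.map s).map (rpEv 0) = μ := by
    rw [← h1]
    conv_rhs => rw [← hpush, Measure.map_map measurable_fst hf.measurable]
    rfl
  have e1 : (σ.map s).map (rpEv 1) = ν := by
    rw [← h2]
    conv_rhs => rw [← hpush, Measure.map_map measurable_snd hf.measurable]
    rfl
  refine ⟨σ.map s, Measure.isProbabilityMeasure_map hs.aemeasurable, ?_, e0, e1, ?_⟩
  · exact (ae_map_iff (p := fun γ => γ ∈ rpGeo X) hs.aemeasurable rp_isClosed_geo.measurableSet).2
      (hsσ.mono fun y hy => hy.1)
  · rw [← hσ]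
    conv_rhs => rw [← hpush, lintegral_map (by fun_prop) hf.measurable]

theorem rp_W2sq_le_of_ev (π : Measure C(unitInterval, X)) (s t : ℝ) :
    W2sq (π.map (rpEv s)) (π.map (rpEv t)) ≤ ∫⁻ γ, edist (rpEv s γ) (rpEv t γ) ^ 2 ∂π := by
  have hm : Measurable fun γ : C(unitInterval, X) => (rpEv s γ, rpEv t γ) :=
    (rp_ev_meas s).prodMk (rp_ev_meas t)
  have hle : W2sq (π.map (rpEv s)) (π.map (rpEv t)) ≤
      ∫⁻ p, edist p.1 p.2 ^ 2 ∂(π.map fun γ => (rpEv s γ, rpEv t γ)) := by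
    refine iInf₂_le (π.map fun γ => (rpEv s γ, rpEv t γ)) ⟨?_, ?_⟩
    · rw [Measure.map_map measurable_fst hm]; rfl
    · rw [Measure.map_map measurable_snd hm]; rfl
  rwa [lintegral_map (by fun_prop) hm] at hle

theorem rp_W2_symm_le (μ ν : Measure X) : W2 μ ν ≤ W2 ν μ := by
  unfold W2
  gcongr
  refine le_iInf₂ fun σ hσ => ?_
  have hle : W2sq μ ν ≤ ∫⁻ p, edist p.1 p.2 ^ 2 ∂(σ.map Prod.swap) := by
    refine iInf₂_le (σ.map Prod.swap) ⟨?_, ?_⟩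
    · rw [Measure.map_map measurable_fst measurable_swap]; exact hσ.2
    · rw [Measure.map_map measurable_snd measurable_swap]; exact hσ.1
  rw [lintegral_map (by fun_prop) measurable_swap] at hle
  refine hle.trans (le_of_eq ?_)
  congr with p
  simp [edist_comm]

/-- An optimal measure on geodesics gives a Wasserstein geodesic. -/
theorem rp_geodesic_of_opt (π : Measure C(unitInterval, X)) [IsProbabilityMeasure π]
    (hG : ∀ᵐ γ ∂π, γ ∈ rpGeo X)
    (hopt : ∫⁻ γ, edist (rpEv 0 γ) (rpEv 1 γ) ^ 2 ∂π ≤ W2sq (π.map (rpEv 0)) (π.map (rpEv 1)))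
    (hfin : W2sq (π.map (rpEv 0)) (π.map (rpEv 1)) ≠ ∞) :
    IsW2Geodesic (fun t => π.map (rpEv t)) := by
  have hprob : ∀ t, IsProbabilityMeasure (π.map (rpEv t)) := fun t =>
    Measure.isProbabilityMeasure_map (rp_ev_meas t).aemeasurable
  have hLfin : W2 (π.map (rpEv 0)) (π.map (rpEv 1)) ≠ ∞ := by
    unfold W2
    exact ENNReal.rpow_ne_top_of_nonneg (by norm_num) hfin
  set L := W2 (π.map (rpEv 0)) (π.map (rpEv 1)) with hL
  have hup : ∀ s ∈ Icc (0:ℝ) 1, ∀ t ∈ Icc (0:ℝ) 1,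
      W2 (π.map (rpEv s)) (π.map (rpEv t)) ≤ ENNReal.ofReal |s - t| * L := by
    intro s hs t ht
    have h1 : W2sq (π.map (rpEv s)) (π.map (rpEv t)) ≤
        ENNReal.ofReal |s - t| ^ 2 * W2sq (π.map (rpEv 0)) (π.map (rpEv 1)) := by
      refine (rp_W2sq_le_of_ev π s t).trans ?_
      calc ∫⁻ γ, edist (rpEv s γ) (rpEv t γ) ^ 2 ∂π
          = ∫⁻ γ, ENNReal.ofReal |s - t| ^ 2 * edist (rpEv 0 γ) (rpEv 1 γ) ^ 2 ∂π := by
            refine lintegral_congr_ae (hG.mono fun γ hγ => ?_)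
            simp only
            rw [edist_dist, rp_ev_dist hγ hs ht, ENNReal.ofReal_mul (abs_nonneg _), mul_pow,
              ← edist_dist]
        _ = ENNReal.ofReal |s - t| ^ 2 * ∫⁻ γ, edist (rpEv 0 γ) (rpEv 1 γ) ^ 2 ∂π := by
            refine lintegral_const_mul _ ?_
            exact ((rp_ev_meas 0).edist (rp_ev_meas 1)).pow_const 2
        _ ≤ _ := by gcongr
    calc W2 (π.map (rpEv s)) (π.map (rpEv t))
        ≤ (ENNReal.ofReal |s - t| ^ 2 * W2sq (π.map (rpEv 0)) (π.map (rpEv 1))) ^ (1/2 : ℝ) := by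
          unfold W2; gcongr
      _ = ENNReal.ofReal |s - t| * L := by
          rw [ENNReal.mul_rpow_of_nonneg _ _ (by norm_num), ← ENNReal.rpow_natCast,
            ← ENNReal.rpow_mul]
          norm_num
          rfl
  have hlow : ∀ s ∈ Icc (0:ℝ) 1, ∀ t ∈ Icc (0:ℝ) 1, s ≤ t →
      ENNReal.ofReal |s - t| * L ≤ W2 (π.map (rpEv s)) (π.map (rpEv t)) := by
    intro s hs t ht hst
    have h0 : (0:ℝ) ∈ Icc (0:ℝ) 1 := by simp
    have h1 : (1:ℝ) ∈ Icc (0:ℝ) 1 := by simp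
    have htri : L ≤ W2 (π.map (rpEv 0)) (π.map (rpEv s)) +
        (W2 (π.map (rpEv s)) (π.map (rpEv t)) + W2 (π.map (rpEv t)) (π.map (rpEv 1))) :=
      (rp_W2_triangle _ (π.map (rpEv s)) _).trans (by gcongr; exact rp_W2_triangle _ _ _)
    have ha := hup 0 h0 s hs
    have hb := hup t ht 1 h1
    have hsplit : L = ENNReal.ofReal |0 - s| * L + (ENNReal.ofReal |s - t| * L +
        ENNReal.ofReal |t - 1| * L) := by
      rw [← add_mul, ← add_mul, ← ENNReal.ofReal_add (abs_nonneg _) (abs_nonneg _),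
        ← ENNReal.ofReal_add (abs_nonneg _) (by positivity)]
      have : |0 - s| + (|s - t| + |t - 1|) = 1 := by
        rw [abs_of_nonpos (by linarith [hs.1]), abs_of_nonpos (by linarith),
          abs_of_nonpos (by linarith [ht.2])]
        ring
      rw [this]; simp
    have hf1 : ENNReal.ofReal |0 - s| * L ≠ ∞ := ENNReal.mul_ne_top ENNReal.ofReal_ne_top hLfin
    have hf2 : ENNReal.ofReal |t - 1| * L ≠ ∞ := ENNReal.mul_ne_top ENNReal.ofReal_ne_top hLfin
    have hfinal : ENNReal.ofReal |0 - s| * L + (ENNReal.ofReal |s - t| * L +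
        ENNReal.ofReal |t - 1| * L) ≤ ENNReal.ofReal |0 - s| * L +
        (W2 (π.map (rpEv s)) (π.map (rpEv t)) + ENNReal.ofReal |t - 1| * L) := by
      rw [← hsplit]
      exact htri.trans (by gcongr)
    exact (ENNReal.add_le_add_iff_right hf2).1 ((ENNReal.add_le_add_iff_left hf1).1 hfinal)
  refine ⟨fun t _ => hprob t, hLfin, fun s hs t ht => le_antisymm (hup s hs t ht) ?_⟩
  rcases le_total s t with hst | hst
  · exact hlow s hs t ht hst
  · have := hlow t ht s hs hst
    rw [abs_sub_comm] at this
    exact this.trans (rp_W2_symm_le _ _)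

/-- Restrictions of optimal measures on geodesics are optimal. -/
theorem rp_restrict_opt (π : Measure C(unitInterval, X)) [IsProbabilityMeasure π]
    (hG : ∀ᵐ γ ∂π, γ ∈ rpGeo X)
    (hopt : ∫⁻ γ, edist (rpEv 0 γ) (rpEv 1 γ) ^ 2 ∂π = W2sq (π.map (rpEv 0)) (π.map (rpEv 1)))
    (hfin : W2sq (π.map (rpEv 0)) (π.map (rpEv 1)) ≠ ∞)
    (A : Set C(unitInterval, X)) (hA : MeasurableSet A) (hA0 : π A ≠ 0) :
    IsW2Geodesic (fun t => ((π A)⁻¹ • π.restrict A).map (rpEv t)) := by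
  have hAt : π A ≠ ∞ := measure_ne_top _ _
  have hinv : (π A)⁻¹ * π A = 1 := ENNReal.inv_mul_cancel hA0 hAt
  have hprob : IsProbabilityMeasure ((π A)⁻¹ • π.restrict A) := by
    constructor
    simp [hinv]
  set c : C(unitInterval, X) → ℝ≥0∞ := fun γ => edist (rpEv 0 γ) (rpEv 1 γ) ^ 2 with hc
  have hcm : Measurable c := ((rp_ev_meas 0).edist (rp_ev_meas 1)).pow_const 2
  have hsplit : ∫⁻ γ in A, c γ ∂π + ∫⁻ γ in Aᶜ, c γ ∂π = ∫⁻ γ, c γ ∂π :=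
    lintegral_add_compl c hA
  have htot : ∫⁻ γ, c γ ∂π ≠ ∞ := by rw [hopt]; exact hfin
  have hAc : ∫⁻ γ in Aᶜ, c γ ∂π ≠ ∞ :=
    ne_top_of_le_ne_top htot (by rw [← hsplit]; exact le_add_self)
  have hA' : ∫⁻ γ in A, c γ ∂π ≠ ∞ :=
    ne_top_of_le_ne_top htot (by rw [← hsplit]; exact le_self_add)
  have hcost : ∫⁻ γ, c γ ∂((π A)⁻¹ • π.restrict A) = (π A)⁻¹ * ∫⁻ γ in A, c γ ∂π := by
    rw [lintegral_smul_measure]; rfl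
  refine rp_geodesic_of_opt _ ?_ ?_ ?_
  · exact Measure.ae_smul_measure (ae_restrict_of_ae hG) _
  · refine le_iInf₂ fun τ hτ => ?_
    change ∫⁻ γ, c γ ∂((π A)⁻¹ • π.restrict A) ≤ _
    rw [hcost]
    have hm : Measurable fun γ : C(unitInterval, X) => (rpEv 0 γ, rpEv 1 γ) :=
      (rp_ev_meas 0).prodMk (rp_ev_meas 1)
    let τ' : Measure (X × X) := (π.restrict Aᶜ).map (fun γ => (rpEv 0 γ, rpEv 1 γ)) + π A • τ
    have hback : ∀ t, π A • ((π A)⁻¹ • π.restrict A).map (rpEv t) = (π.restrict A).map (rpEv t) := by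
      intro t
      rw [Measure.map_smul, smul_smul, mul_comm, hinv, one_smul]
    have hsum : ∀ t, (π.restrict Aᶜ).map (rpEv t) + (π.restrict A).map (rpEv t) = π.map (rpEv t) := by
      intro t
      rw [← Measure.map_add _ _ (rp_ev_meas t), add_comm, Measure.restrict_add_restrict_compl hA]
    have hle : W2sq (π.map (rpEv 0)) (π.map (rpEv 1)) ≤ ∫⁻ p, edist p.1 p.2 ^ 2 ∂τ' := by
      refine iInf₂_le τ' ⟨?_, ?_⟩
      · rw [Measure.map_add _ _ measurable_fst, Measure.map_smul, hτ.1,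
          Measure.map_map measurable_fst hm, hback, ← hsum 0]
        rfl
      · rw [Measure.map_add _ _ measurable_snd, Measure.map_smul, hτ.2,
          Measure.map_map measurable_snd hm, hback, ← hsum 1]
        rfl
    rw [lintegral_add_measure, lintegral_map (by fun_prop) hm, lintegral_smul_measure, ← hopt,
      ← hsplit, add_comm] at hle
    have hle2 : ∫⁻ γ in A, c γ ∂π ≤ π A * ∫⁻ p, edist p.1 p.2 ^ 2 ∂τ :=
      (ENNReal.add_le_add_iff_left hAc).1 hle
    calc (π A)⁻¹ * ∫⁻ γ in A, c γ ∂π ≤ (π A)⁻¹ * (π A * ∫⁻ p, edist p.1 p.2 ^ 2 ∂τ) := by gcongr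
      _ = _ := by rw [← mul_assoc, hinv, one_mul]
  · refine ne_top_of_le_ne_top ?_ (rp_W2sq_le_of_ev _ 0 1)
    change ∫⁻ γ, c γ ∂((π A)⁻¹ • π.restrict A) ≠ _
    rw [hcost]
    exact ENNReal.mul_ne_top (ENNReal.inv_ne_top.2 hA0) hA'
end


/-- Minus the Rényi entropy. -/
noncomputable def rpS {X : Type*} [MeasurableSpace X] (N : ℝ) (m μ : Measure X) : ℝ≥0∞ :=
  ∫⁻ x, renyiIntegrand N (μ.rnDeriv m x) ∂m

theorem rp_sdc {X : Type*} [MetricSpace X] [MeasurableSpace X] {N : ℝ} {m : Measure X}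
    (hsdc : StronglyDisplacementConvex (renyiEntropy N m)) {Γ : ℝ → Measure X}
    (hΓ : IsW2Geodesic Γ) {t : ℝ} (ht : t ∈ Icc (0:ℝ) 1) :
    ENNReal.ofReal (1 - t) * rpS N m (Γ 0) + ENNReal.ofReal t * rpS N m (Γ 1) ≤ rpS N m (Γ t) := by
  have h := hsdc Γ hΓ t ht
  have hr : ∀ μ, renyiEntropy N m μ = -(rpS N m μ : EReal) := fun μ => rfl
  rw [hr, hr, hr, mul_neg, mul_neg] at h
  have e1 : ∀ a : ℝ, 0 ≤ a → ((a : ℝ) : EReal) = ((ENNReal.ofReal a : ℝ≥0∞) : EReal) := by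
    intro a ha
    rw [EReal.coe_ennreal_ofReal, max_eq_left ha]
  rw [e1 _ (sub_nonneg.2 ht.2), e1 _ ht.1, ← EReal.coe_ennreal_mul, ← EReal.coe_ennreal_mul] at h
  rw [← sub_eq_add_neg, ← EReal.neg_add (Or.inl (EReal.coe_ennreal_ne_bot _)) (Or.inr (EReal.coe_ennreal_ne_bot _)),
    EReal.neg_le_neg_iff, ← EReal.coe_ennreal_add] at h
  exact_mod_cast h

section
variable {X : Type*} [MeasurableSpace X]

theorem rp_renyi_le {N : ℝ} (hN : 1 ≤ N) (ρ : ℝ≥0∞) : renyiIntegrand N ρ ≤ ρ ^ (1 - 1/N) := by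
  unfold renyiIntegrand
  split_ifs <;> simp

theorem rp_S_upper {N : ℝ} (hN : 1 ≤ N) (m μ : Measure X) [SigmaFinite m] [IsProbabilityMeasure μ]
    {E : Set X} (hE : MeasurableSet E) (hμE : μ Eᶜ = 0) : rpS N m μ ≤ m E ^ (1/N) := by
  have hN0 : 0 < N := by linarith
  have h1N : 1 / N ≤ 1 := by rw [div_le_one hN0]; exact hN
  have h0 : ∫⁻ x in Eᶜ, μ.rnDeriv m x ∂m = 0 :=
    le_antisymm ((Measure.setLIntegral_rnDeriv_le _).trans hμE.le) bot_le
  have h0' : ∀ᵐ x ∂(m.restrict Eᶜ), μ.rnDeriv m x = 0 := by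
    have := (lintegral_eq_zero_iff (Measure.measurable_rnDeriv μ m)).1 h0
    exact this
  have hz : ∫⁻ x in Eᶜ, renyiIntegrand N (μ.rnDeriv m x) ∂m = 0 := by
    rw [lintegral_congr_ae (g := fun _ => 0)]
    · simp
    · filter_upwards [h0'] with x hx
      simp [renyiIntegrand, hx]
  unfold rpS
  rw [← lintegral_add_compl _ hE, hz, add_zero]
  calc ∫⁻ x in E, renyiIntegrand N (μ.rnDeriv m x) ∂m
      ≤ ∫⁻ x in E, (μ.rnDeriv m x) ^ (1 - 1/N) * (1:ℝ≥0∞) ^ (1/N) ∂m := by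
        refine lintegral_mono fun x => ?_
        simpa using rp_renyi_le hN _
    _ ≤ (∫⁻ x in E, μ.rnDeriv m x ∂m) ^ (1 - 1/N) * (∫⁻ x in E, 1 ∂m) ^ (1/N) := by
        refine ENNReal.lintegral_mul_norm_pow_le ?_ ?_ (by linarith) (by positivity) (by ring)
        · exact (Measure.measurable_rnDeriv μ m).aemeasurable
        · fun_prop
    _ ≤ 1 ^ (1 - 1/N) * m E ^ (1/N) := by
        gcongr
        · exact (Measure.setLIntegral_rnDeriv_le _).trans prob_le_one
        · simp
    _ = _ := by simp

theorem rp_S_lower {N : ℝ} (hN : 1 ≤ N) (m μ : Measure X) [SigmaFinite m] [IsProbabilityMeasure μ]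
    {c : ℝ≥0∞} (hc0 : c ≠ 0) (hc : c ≠ ∞) (hle : μ ≤ c • m) : c ^ (-(1/N)) ≤ rpS N m μ := by
  have hN0 : 0 < N := by linarith
  have hac : μ ≪ m := (Measure.absolutelyContinuous_of_le hle).trans Measure.smul_absolutelyContinuous
  have hintg : ∀ s, MeasurableSet s → ∫⁻ x in s, μ.rnDeriv m x ∂m = μ s := fun s hs =>
    Measure.setLIntegral_rnDeriv hac s
  have hρ : ∀ᵐ x ∂m, μ.rnDeriv m x ≤ c := by
    refine ae_le_of_forall_setLIntegral_le_of_sigmaFinite (Measure.measurable_rnDeriv μ m)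
      fun s hs _ => ?_
    rw [hintg s hs, lintegral_const]
    simpa using hle s
  calc c ^ (-(1/N)) = c ^ (-(1/N)) * μ univ := by simp
    _ = ∫⁻ x, c ^ (-(1/N)) * μ.rnDeriv m x ∂m := by
        rw [lintegral_const_mul _ (Measure.measurable_rnDeriv μ m), ← hintg _ MeasurableSet.univ,
          Measure.restrict_univ]
    _ ≤ rpS N m μ := by
        refine lintegral_mono_ae ?_
        filter_upwards [hρ] with x hx
        unfold renyiIntegrand
        split_ifs with h
        · simp [h]
        · set ρ := μ.rnDeriv m x
          have hρt : ρ ≠ ∞ := ne_top_of_le_ne_top hc hx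
          rw [sub_eq_add_neg, ENNReal.rpow_add _ _ h hρt, ENNReal.rpow_one, mul_comm]
          refine mul_le_mul' le_rfl ?_
          rw [ENNReal.rpow_neg, ENNReal.rpow_neg]
          gcongr
end

section
variable {X : Type*} [MetricSpace X] [CompleteSpace X] [SecondCountableTopology X]
  [MeasurableSpace X] [BorelSpace X] [MeasurableSpace C(unitInterval, X)]
  [BorelSpace C(unitInterval, X)]

theorem rp_restr_marg (m : Measure X) (π : Measure C(unitInterval, X)) (A : Set C(unitInterval, X))
    (s : ℝ) {C : ℝ≥0∞} (h : π.map (rpEv s) ≤ C • m) :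
    ((π A)⁻¹ • π.restrict A).map (rpEv s) ≤ ((π A)⁻¹ * C) • m := by
  rw [Measure.map_smul, ← smul_smul]
  have := (Measure.map_mono (μ := π.restrict A) Measure.restrict_le_self (rp_ev_meas s)).trans h
  gcongr

/-- General density estimate. -/
theorem rp_density_aux {N : ℝ} (hN : 1 ≤ N) {m : Measure X} [SigmaFinite m]
    (hsdc : StronglyDisplacementConvex (renyiEntropy N m))
    (π : Measure C(unitInterval, X)) [IsProbabilityMeasure π]
    (hG : ∀ᵐ γ ∂π, γ ∈ rpGeo X)
    (hopt : ∫⁻ γ, edist (rpEv 0 γ) (rpEv 1 γ) ^ 2 ∂π = W2sq (π.map (rpEv 0)) (π.map (rpEv 1)))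
    (hfin : W2sq (π.map (rpEv 0)) (π.map (rpEv 1)) ≠ ∞)
    {C : ℝ≥0∞} (hC0 : C ≠ 0) (hC : C ≠ ∞) (h0 : π.map (rpEv 0) ≤ C • m)
    {t : ℝ} (ht : t ∈ Icc (0:ℝ) 1) {E : Set X} (hE : MeasurableSet E) {k : ℝ≥0∞}
    (hk : k = ENNReal.ofReal (1 - t) ∨ (k = 1 ∧ π.map (rpEv 1) ≤ C • m)) :
    k ^ N * π.map (rpEv t) E ≤ C * m E := by
  have hN0 : 0 < N := by linarith
  rw [Measure.map_apply (rp_ev_meas t) hE]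
  set A := rpEv t ⁻¹' E with hAdef
  have hA : MeasurableSet A := rp_ev_meas t hE
  by_cases hA0 : π A = 0
  · simp [hA0]
  have hAt : π A ≠ ∞ := measure_ne_top _ _
  have hgeod := rp_restrict_opt π hG hopt hfin A hA hA0
  have hprob : IsProbabilityMeasure ((π A)⁻¹ • π.restrict A) := by
    constructor
    simp [ENNReal.inv_mul_cancel hA0 hAt]
  have hpr : ∀ s, IsProbabilityMeasure (((π A)⁻¹ • π.restrict A).map (rpEv s)) := fun s =>
    Measure.isProbabilityMeasure_map (rp_ev_meas s).aemeasurable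
  have key := rp_sdc hsdc hgeod ht
  have hup : rpS N m (((π A)⁻¹ • π.restrict A).map (rpEv t)) ≤ m E ^ (1/N) := by
    refine rp_S_upper hN m _ hE ?_
    rw [Measure.map_apply (rp_ev_meas t) hE.compl]
    have : rpEv t ⁻¹' Eᶜ = Aᶜ := rfl
    rw [this]
    simp [Measure.restrict_apply hA.compl]
  have hc0 : (π A)⁻¹ * C ≠ 0 := mul_ne_zero (ENNReal.inv_ne_zero.2 hAt) hC0
  have hct : (π A)⁻¹ * C ≠ ∞ := ENNReal.mul_ne_top (ENNReal.inv_ne_top.2 hA0) hC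
  have hl0 := rp_S_lower hN m _ hc0 hct (rp_restr_marg m π A 0 h0)
  have hmain : k * ((π A)⁻¹ * C) ^ (-(1/N)) ≤ m E ^ (1/N) := by
    refine le_trans ?_ (key.trans hup)
    rcases hk with hk | ⟨hk, h1⟩
    · rw [hk]
      exact le_trans (by gcongr) le_self_add
    · have hl1 := rp_S_lower hN m _ hc0 hct (rp_restr_marg m π A 1 h1)
      calc k * ((π A)⁻¹ * C) ^ (-(1/N))
          = ENNReal.ofReal (1 - t) * ((π A)⁻¹ * C) ^ (-(1/N)) +
            ENNReal.ofReal t * ((π A)⁻¹ * C) ^ (-(1/N)) := by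
            rw [← add_mul, ← ENNReal.ofReal_add (sub_nonneg.2 ht.2) ht.1, hk]
            simp
        _ ≤ _ := by gcongr
  have hpow := ENNReal.rpow_le_rpow hmain hN0.le
  rw [ENNReal.mul_rpow_of_nonneg _ _ hN0.le, ← ENNReal.rpow_mul, ← ENNReal.rpow_mul] at hpow
  have e1 : 1 / N * N = 1 := by field_simp
  have e2 : -(1 / N) * N = -1 := by field_simp
  rw [e1, e2, ENNReal.rpow_one, ENNReal.rpow_neg_one, ENNReal.mul_inv (Or.inl (ENNReal.inv_ne_zero.2 hAt)) (Or.inl (ENNReal.inv_ne_top.2 hA0)), inv_inv] at hpow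
  calc k ^ N * π A = C * (k ^ N * (π A * C⁻¹)) := by
        rw [mul_comm C, mul_assoc, mul_assoc, ENNReal.inv_mul_cancel hC0 hC, mul_one]
    _ ≤ _ := by gcongr
end


section
variable {X : Type*} [MetricSpace X] [MeasurableSpace X] [BorelSpace X]

theorem rp_sep_ball (m : Measure X) (hsupp : ∀ x : X, ∀ ε > 0, 0 < m (Metric.ball x ε))
    (x : X) (R : ℝ) (hR : 0 < R) (hfin : m (ball x R) ≠ ∞) :
    ∃ t : Set X, t.Countable ∧ ball x (R/2) ⊆ closure t := by
  obtain ⟨t, -, ht, h⟩ := EMetric.subset_countable_closure_of_almost_dense_set (ball x (R/2)) (by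
    intro ε hε
    obtain ⟨δ', hδ'0, hδ'⟩ : ∃ δ : ℝ, 0 < δ ∧ ENNReal.ofReal (5 * δ) ≤ ε := by
      rcases eq_or_ne ε ∞ with h | h
      · exact ⟨1, one_pos, by simp [h]⟩
      · refine ⟨ε.toReal / 5, by have := ENNReal.toReal_pos hε.ne' h; positivity, ?_⟩
        rw [mul_div_cancel₀ _ (by norm_num : (5:ℝ) ≠ 0), ENNReal.ofReal_toReal h]
    obtain ⟨δ, hδ0, hδ, hδR⟩ : ∃ δ : ℝ, 0 < δ ∧ ENNReal.ofReal (5 * δ) ≤ ε ∧ δ < R / 2 := by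
      refine ⟨min δ' (R/4), lt_min hδ'0 (by positivity), le_trans ?_ hδ', ?_⟩
      · exact ENNReal.ofReal_le_ofReal (by gcongr; exact min_le_left _ _)
      · exact (min_le_right _ _).trans_lt (by linarith)
    obtain ⟨u, hut, hdis, hcov⟩ := Vitali.exists_disjoint_subfamily_covering_enlargement_closedBall
      (ball x (R/2)) (fun a : X => a) (fun _ => δ) δ (fun _ _ => le_rfl) 5 (by norm_num)
    have : IsFiniteMeasure (m.restrict (ball x R)) := ⟨by simpa using hfin.lt_top⟩
    have hc : Set.Countable {i : u | 0 < (m.restrict (ball x R)) (closedBall (i : X) δ)} := by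
      refine Measure.countable_meas_pos_of_disjoint_iUnion (fun i => measurableSet_closedBall) ?_
      intro i j hij
      exact hdis i.2 j.2 (fun h => hij (Subtype.ext h))
    have huc : u.Countable := by
      have hall : {i : u | 0 < (m.restrict (ball x R)) (closedBall (i : X) δ)} = univ := by
        refine eq_univ_of_forall fun i => ?_
        have hsub : closedBall (i:X) δ ⊆ ball x R := by
          refine closedBall_subset_ball' ?_
          have := mem_ball.1 (hut i.2)
          linarith
        change 0 < (m.restrict (ball x R)) (closedBall (i : X) δ)
        rw [Measure.restrict_apply measurableSet_closedBall, inter_eq_left.2 hsub]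
        exact (hsupp i δ hδ0).trans_le (measure_mono ball_subset_closedBall)
      rw [hall] at hc
      exact countable_coe_iff.1 (countable_univ_iff.1 hc)
    refine ⟨u, huc, fun a ha => ?_⟩
    obtain ⟨b, hb, hab⟩ := hcov a ha
    refine mem_biUnion hb ?_
    have := hab (mem_closedBall_self hδ0.le)
    rw [mem_closedBall] at this
    rw [Metric.mem_closedEBall, edist_dist]
    exact (ENNReal.ofReal_le_ofReal this).trans hδ)
  exact ⟨t, ht, h⟩

theorem rp_second_countable (hgeo : IsGeodesicSpace X) (m : Measure X)
    (hsupp : ∀ x : X, ∀ ε > 0, 0 < m (Metric.ball x ε)) [IsLocallyFiniteMeasure m] (x₀ : X) :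
    SecondCountableTopology X := by
  have hloc : ∀ x : X, ∃ η > 0, ∃ t : Set X, t.Countable ∧ ball x η ⊆ closure t := by
    intro x
    obtain ⟨s, hs, hsm⟩ := m.finiteAt_nhds x
    obtain ⟨R, hR, hRs⟩ := Metric.mem_nhds_iff.1 hs
    obtain ⟨t, ht⟩ := rp_sep_ball m hsupp x R hR
      (ne_top_of_le_ne_top hsm.ne (measure_mono hRs))
    exact ⟨R/2, by positivity, t, ht⟩
  have hF : ∀ p : X × ℚ, ∃ t : Set X, t.Countable ∧
      ((∃ t : Set X, t.Countable ∧ ball p.1 (p.2:ℝ) ⊆ closure t) → ball p.1 (p.2:ℝ) ⊆ closure t) := by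
    intro p
    by_cases h : ∃ t : Set X, t.Countable ∧ ball p.1 (p.2:ℝ) ⊆ closure t
    · obtain ⟨t, ht, ht'⟩ := h
      exact ⟨t, ht, fun _ => ht'⟩
    · exact ⟨∅, countable_empty, fun h' => absurd h' h⟩
  choose F hFc hFd using hF
  let D : ℕ → Set X := fun n => Nat.rec {x₀} (fun _ S => ⋃ d ∈ S, ⋃ q : ℚ, F (d, q)) n
  have hD0 : D 0 = {x₀} := rfl
  have hDs : ∀ n, D (n+1) = ⋃ d ∈ D n, ⋃ q : ℚ, F (d, q) := fun n => rfl
  have hDc : ∀ n, (D n).Countable := by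
    intro n
    induction n with
    | zero => rw [hD0]; exact countable_singleton _
    | succ k ih =>
      rw [hDs]
      exact ih.biUnion fun d _ => countable_iUnion fun q => hFc _
  set S := ⋃ n, D n with hS
  have hSc : S.Countable := countable_iUnion hDc
  have hopen : IsOpen (closure S) := by
    rw [Metric.isOpen_iff]
    intro x hx
    obtain ⟨η, hη, t, htc, ht⟩ := hloc x
    obtain ⟨d, hd, hxd⟩ := Metric.mem_closure_iff.1 hx (η/8) (by positivity)
    obtain ⟨q, hq1, hq2⟩ := exists_rat_btwn (show η/4 < η/2 by linarith)
    have hsub : ball d (q:ℝ) ⊆ ball x η := ball_subset_ball' (by rw [dist_comm]; linarith)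
    have h1 : ball d (q:ℝ) ⊆ closure (F (d, q)) := hFd (d, q) ⟨t, htc, hsub.trans ht⟩
    obtain ⟨n, hn⟩ := mem_iUnion.1 hd
    have h2 : F (d, q) ⊆ S := by
      refine subset_trans ?_ (subset_iUnion D (n+1))
      rw [hDs]
      intro y hy
      exact mem_biUnion hn (mem_iUnion.2 ⟨q, hy⟩)
    refine ⟨η/8, by positivity, ?_⟩
    refine subset_trans ?_ (h1.trans (closure_mono h2))
    exact ball_subset_ball' (by linarith)
  have huniv : closure S = univ := by
    refine eq_univ_of_forall fun y => ?_
    obtain ⟨γ, -, hγ⟩ := rp_geo_exists hgeo (x₀, y)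
    have hcl : IsClopen (γ ⁻¹' closure S) :=
      ⟨isClosed_closure.preimage γ.continuous, hopen.preimage γ.continuous⟩
    have : γ ⁻¹' closure S = univ := by
      refine hcl.eq_univ ⟨0, ?_⟩
      have : γ 0 = x₀ := congrArg Prod.fst hγ
      rw [mem_preimage, this]
      exact subset_closure (mem_iUnion.2 ⟨0, by simp [hD0]⟩)
    have h1 : (1:unitInterval) ∈ γ ⁻¹' closure S := by rw [this]; trivial
    have h2 : γ 1 = y := congrArg Prod.snd hγ
    rwa [mem_preimage, h2] at h1
  have : TopologicalSpace.SeparableSpace X := ⟨S, hSc, fun y => by rw [huniv]; trivial⟩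
  exact UniformSpace.secondCountable_of_separable X
end

section
variable {X : Type*} [MetricSpace X] [CompleteSpace X] [SecondCountableTopology X]
  [MeasurableSpace X] [BorelSpace X] [MeasurableSpace C(unitInterval, X)]
  [BorelSpace C(unitInterval, X)]

theorem rp_W2_fin (μ ν : Measure X) [IsProbabilityMeasure μ] [IsProbabilityMeasure ν]
    (x : X) (R : ℝ) (hμ : ∀ᵐ y ∂μ, y ∈ ball x R) (hν : ∀ᵐ y ∂ν, y ∈ ball x R) :
    W2sq μ ν ≠ ∞ := by
  have hle : W2sq μ ν ≤ ∫⁻ p, edist p.1 p.2 ^ 2 ∂(μ.prod ν) := by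
    refine iInf₂_le (μ.prod ν) ⟨?_, ?_⟩
    · simp [Measure.map_fst_prod]
    · simp [Measure.map_snd_prod]
  refine ne_top_of_le_ne_top ?_ hle
  have h1 : ∀ᵐ p ∂(μ.prod ν), p.1 ∈ ball x R :=
    Measure.quasiMeasurePreserving_fst.ae hμ
  have h2 : ∀ᵐ p ∂(μ.prod ν), p.2 ∈ ball x R :=
    Measure.quasiMeasurePreserving_snd.ae hν
  have h3 : ∫⁻ p, edist p.1 p.2 ^ 2 ∂(μ.prod ν) ≤ ∫⁻ p, ENNReal.ofReal (R + R) ^ 2 ∂(μ.prod ν) := by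
    refine lintegral_mono_ae ?_
    filter_upwards [h1, h2] with p hp1 hp2
    rw [edist_dist]
    gcongr
    refine (dist_triangle_right _ _ x).trans ?_
    exact add_le_add (mem_ball.1 hp1).le (mem_ball.1 hp2).le
  refine ne_top_of_le_ne_top ?_ h3
  simp

/-- Transport plans to a point. -/
theorem rp_to_point (hgeo : IsGeodesicSpace X) {N : ℝ} (hN : 1 ≤ N) {m : Measure X} [SigmaFinite m]
    (hsdc : StronglyDisplacementConvex (renyiEntropy N m)) (x : X) (R : ℝ) (hR : 0 < R)
    {A : Set X} (hA : MeasurableSet A) (hAR : A ⊆ ball x R) (hA0 : m A ≠ 0) (hAt : m A ≠ ∞) :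
    ∃ π : Measure C(unitInterval, X), IsProbabilityMeasure π ∧
      (∀ᵐ γ ∂π, γ ∈ rpGeo X ∧ rpEv 0 γ ∈ A ∧ rpEv 1 γ = x) ∧
      π.map (rpEv 0) = (m A)⁻¹ • m.restrict A ∧
      ∀ t ∈ Icc (0:ℝ) 1, ∀ E, MeasurableSet E →
        ENNReal.ofReal (1 - t) ^ N * π.map (rpEv t) E ≤ (m A)⁻¹ * m E := by
  have hprob : IsProbabilityMeasure ((m A)⁻¹ • m.restrict A) := by
    constructor
    simp [ENNReal.inv_mul_cancel hA0 hAt]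
  obtain ⟨π, hπ, hG, h0, h1, hopt⟩ := rp_geo_lift hgeo ((m A)⁻¹ • m.restrict A) (Measure.dirac x)
  have hA' : ∀ᵐ y ∂((m A)⁻¹ • m.restrict A), y ∈ A :=
    Measure.ae_smul_measure (ae_restrict_mem hA) _
  have hx' : ∀ᵐ y ∂(Measure.dirac x), y = x := by
    simp [ae_dirac_eq]
  have hfin : W2sq ((m A)⁻¹ • m.restrict A) (Measure.dirac x) ≠ ∞ := by
    refine rp_W2_fin _ _ x R (hA'.mono fun y hy => hAR hy) (hx'.mono fun y hy => ?_)
    rw [hy]; exact mem_ball_self hR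
  refine ⟨π, hπ, ?_, h0, ?_⟩
  · rw [← h0] at hA'
    rw [← h1] at hx'
    filter_upwards [hG, ae_of_ae_map (rp_ev_meas 0).aemeasurable hA',
      ae_of_ae_map (rp_ev_meas 1).aemeasurable hx'] with γ ha hb hc
    exact ⟨ha, hb, hc⟩
  · intro t ht E hE
    refine rp_density_aux hN hsdc π hG ?_ ?_ (ENNReal.inv_ne_zero.2 hAt) (ENNReal.inv_ne_top.2 hA0)
      ?_ ht hE (Or.inl rfl)
    · rw [h0, h1, hopt]
    · rw [h0, h1]; exact hfin
    · rw [h0]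
      have := Measure.restrict_le_self (μ := m) (s := A)
      gcongr

theorem rp_ball_fin (hgeo : IsGeodesicSpace X) {N : ℝ} (hN : 1 ≤ N) {m : Measure X}
    [IsLocallyFiniteMeasure m] (hsdc : StronglyDisplacementConvex (renyiEntropy N m))
    (x : X) (R : ℝ) (hR : 0 < R) : m (ball x R) ≠ ∞ := by
  have hN0 : 0 < N := by linarith
  obtain ⟨s, hs, hsm⟩ := m.finiteAt_nhds x
  obtain ⟨ρ, hρ, hρs⟩ := Metric.mem_nhds_iff.1 hs
  have hρf : m (ball x ρ) ≠ ∞ := ne_top_of_le_ne_top hsm.ne (measure_mono hρs)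
  obtain ⟨a, ha0, ha1, haR⟩ : ∃ a : ℝ, 0 < a ∧ a ≤ 1 ∧ a * R < ρ := by
    refine ⟨min 1 (ρ / (2 * R)), lt_min one_pos (by positivity), min_le_left _ _, ?_⟩
    calc min 1 (ρ / (2 * R)) * R ≤ ρ / (2 * R) * R := by gcongr; exact min_le_right _ _
      _ = ρ / 2 := by field_simp
      _ < ρ := by linarith
  have hK0 : ENNReal.ofReal a ^ N ≠ 0 := by
    simp [ENNReal.rpow_eq_zero_iff, hN0, not_le.2 ha0]
  have hKt : ENNReal.ofReal a ^ N ≠ ∞ := ENNReal.rpow_ne_top_of_nonneg hN0.le ENNReal.ofReal_ne_top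
  intro htop
  have hlt : (ENNReal.ofReal a ^ N)⁻¹ * m (ball x ρ) < m (ball x R) := by
    rw [htop]
    exact (ENNReal.mul_ne_top (ENNReal.inv_ne_top.2 hK0) hρf).lt_top
  obtain ⟨A, hA, hAR, hAl, hAt⟩ := Measure.exists_subset_measure_lt_top measurableSet_ball hlt
  have hA0 : m A ≠ 0 := (bot_le.trans_lt hAl).ne'
  obtain ⟨π, hπ, hG, h0, hd⟩ := rp_to_point hgeo hN hsdc x R hR hA hAR hA0 hAt.ne
  have := hd (1 - a) ⟨by linarith, by linarith⟩ (ball x ρ) measurableSet_ball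
  have hone : π.map (rpEv (1 - a)) (ball x ρ) = 1 := by
    rw [Measure.map_apply (rp_ev_meas _) measurableSet_ball]
    refine (prob_compl_eq_zero_iff (rp_ev_meas _ measurableSet_ball)).1 ?_
    refine measure_eq_zero_iff_ae_notMem.2 ?_
    filter_upwards [hG] with γ hγ
    simp only [mem_compl_iff, mem_preimage, not_not, mem_ball]
    rw [← hγ.2.2, rp_ev_dist hγ.1 ⟨by linarith, by linarith⟩ ⟨by norm_num, by norm_num⟩, hγ.2.2]
    have h2 := mem_ball.1 (hAR hγ.2.1)
    have h3 : |1 - a - 1| = a := by rw [show 1 - a - 1 = -a by ring, abs_neg, abs_of_pos ha0]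
    rw [h3]
    calc a * dist (rpEv 0 γ) x ≤ a * R := by gcongr
      _ < ρ := haR
  rw [hone, mul_one, sub_sub_cancel] at this
  refine absurd hAl (not_lt.2 ?_)
  calc m A = (ENNReal.ofReal a ^ N)⁻¹ * (m A * ENNReal.ofReal a ^ N) := by
        rw [mul_comm (m A), ← mul_assoc, ENNReal.inv_mul_cancel hK0 hKt, one_mul]
    _ ≤ (ENNReal.ofReal a ^ N)⁻¹ * (m A * ((m A)⁻¹ * m (ball x ρ))) := by gcongr
    _ = _ := by rw [← mul_assoc (m A), ENNReal.mul_inv_cancel hA0 hAt.ne, one_mul]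
end


section
variable {X : Type*} [MetricSpace X] [CompleteSpace X] [SecondCountableTopology X]
  [MeasurableSpace X] [BorelSpace X] [MeasurableSpace C(unitInterval, X)]
  [BorelSpace C(unitInterval, X)]

theorem rp_ev_joint (a : ℝ) :
    Measurable fun p : C(unitInterval, X) × ℝ => rpEv (a * p.2) p.1 := by
  have : Continuous fun p : C(unitInterval, X) × ℝ => rpEv (a * p.2) p.1 := by
    unfold rpEv
    have h : Continuous fun p : C(unitInterval, X) × ℝ =>
        projIcc (0:ℝ) 1 zero_le_one (a * p.2) := continuous_projIcc.comp (by fun_prop)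
    exact continuous_fst.eval h
  exact this.measurable

theorem rp_ug_int {m : Measure X} {u : X → ℝ} {g : X → ℝ≥0∞} (hg : IsUpperGradient u g)
    (π : Measure C(unitInterval, X)) [IsProbabilityMeasure π] (a : ℝ) (ha : a ∈ Icc (0:ℝ) 1)
    (l : ℝ≥0) {B : Set X} (hB : MeasurableSet B) (K : ℝ≥0∞)
    (hG : ∀ᵐ γ ∂π, γ ∈ rpGeo X)
    (hlip : ∀ᵐ γ ∂π, a * dist (rpEv 0 γ) (rpEv 1 γ) ≤ l)
    (hBin : ∀ᵐ γ ∂π, ∀ t ∈ Icc (0:ℝ) 1, rpEv (a * t) γ ∈ B)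
    (hden : ∀ t ∈ Icc (0:ℝ) 1, ∀ E, MeasurableSet E → π.map (rpEv (a * t)) E ≤ K * m E) :
    ∫⁻ γ, ENNReal.ofReal |u (rpEv a γ) - u (rpEv 0 γ)| ∂π ≤ l * (K * ∫⁻ y in B, g y ∂m) := by
  have hgB : Measurable (B.indicator g) := hg.1.indicator hB
  have hj := rp_ev_joint (X := X) a
  calc ∫⁻ γ, ENNReal.ofReal |u (rpEv a γ) - u (rpEv 0 γ)| ∂π
      ≤ ∫⁻ γ, (l * ∫⁻ t in Icc (0:ℝ) 1, B.indicator g (rpEv (a * t) γ)) ∂π := by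
        refine lintegral_mono_ae ?_
        filter_upwards [hG, hlip, hBin] with γ h1 h2 h3
        have := hg.2 (fun t => rpEv (a * t) γ) l ?_
        · simp only [mul_one, mul_zero] at this
          refine this.trans (le_of_eq ?_)
          congr 1
          refine setLIntegral_congr_fun measurableSet_Icc fun t ht => ?_
          rw [indicator_of_mem (h3 t ht)]
        · refine LipschitzOnWith.of_dist_le_mul fun s hs t ht => ?_
          have hm : ∀ s ∈ Icc (0:ℝ) 1, a * s ∈ Icc (0:ℝ) 1 := fun s hs =>
            ⟨mul_nonneg ha.1 hs.1, mul_le_one₀ ha.2 hs.1 hs.2⟩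
          rw [rp_ev_dist h1 (hm s hs) (hm t ht), ← mul_sub, abs_mul, abs_of_nonneg ha.1,
            Real.dist_eq]
          calc a * |s - t| * dist (rpEv 0 γ) (rpEv 1 γ)
              = a * dist (rpEv 0 γ) (rpEv 1 γ) * |s - t| := by ring
            _ ≤ l * |s - t| := by gcongr
    _ = l * ∫⁻ γ, (∫⁻ t in Icc (0:ℝ) 1, B.indicator g (rpEv (a * t) γ)) ∂π := by
        refine lintegral_const_mul _ ?_
        exact (hgB.comp hj).lintegral_prod_right'
    _ = l * ∫⁻ t in Icc (0:ℝ) 1, ∫⁻ γ, B.indicator g (rpEv (a * t) γ) ∂π := by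
        rw [lintegral_lintegral_swap]
        exact (hgB.comp hj).aemeasurable
    _ ≤ l * ∫⁻ t in Icc (0:ℝ) 1, K * ∫⁻ y in B, g y ∂m := by
        refine mul_le_mul' le_rfl ?_
        refine setLIntegral_mono' measurableSet_Icc fun t ht => ?_
        rw [← lintegral_map hgB (rp_ev_meas _), ← lintegral_indicator hB, ← smul_eq_mul K,
          ← lintegral_smul_measure]
        refine lintegral_mono' ?_ le_rfl
        exact Measure.le_iff.2 fun E hE => by simpa using hden t ht E hE
    _ = _ := by simp
end

theorem rp_median_exists (ν : Measure ℝ) [IsProbabilityMeasure ν] :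
    ∃ M : ℝ, ν (Iio M) ≤ 2⁻¹ ∧ 2⁻¹ ≤ ν (Iic M) := by
  have htop : Tendsto (fun c => ν (Iic c)) atTop (𝓝 1) := by
    simpa using tendsto_measure_Iic_atTop ν
  have hbot : Tendsto (fun c => ν (Iic c)) atBot (𝓝 0) := by
    have := ENNReal.tendsto_ofReal (tendsto_cdf_atBot ν)
    simpa [ofReal_cdf] using this
  set S : Set ℝ := {c | 2⁻¹ ≤ ν (Iic c)} with hS
  have hne : S.Nonempty := by
    obtain ⟨c, hc⟩ := (htop.eventually (lt_mem_nhds ENNReal.one_half_lt_one)).exists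
    exact ⟨c, hc.le⟩
  have hbdd : BddBelow S := by
    obtain ⟨c, hc⟩ := (hbot.eventually (gt_mem_nhds (show (0:ℝ≥0∞) < 2⁻¹ by simp))).exists
    refine ⟨c, fun d hd => ?_⟩
    by_contra hcd
    have : ν (Iic d) ≤ ν (Iic c) := measure_mono (Iic_subset_Iic.2 (not_le.1 hcd).le)
    exact absurd (le_trans hd this) (not_le.2 hc)
  refine ⟨sInf S, ?_, ?_⟩
  · obtain ⟨v, hvm, hvlt, hvt⟩ := exists_seq_strictMono_tendsto (sInf S)
    have hU : Iio (sInf S) = ⋃ n, Iic (v n) := by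
      refine Subset.antisymm (fun y hy => ?_) (iUnion_subset fun n y hy => lt_of_le_of_lt hy (hvlt n))
      obtain ⟨n, hn⟩ := (hvt.eventually (lt_mem_nhds hy)).exists
      exact mem_iUnion.2 ⟨n, hn.le⟩
    rw [hU, Monotone.measure_iUnion (fun i j hij => Iic_subset_Iic.2 (hvm.monotone hij))]
    refine iSup_le fun n => ?_
    by_contra h
    exact absurd (csInf_le hbdd (show v n ∈ S from (not_le.1 h).le)) (not_le.2 (hvlt n))
  · obtain ⟨v, hvm, hvlt, hvt⟩ := exists_seq_strictAnti_tendsto (sInf S)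
    have hU : Iic (sInf S) = ⋂ n, Iic (v n) := by
      refine Subset.antisymm (fun y hy => mem_iInter.2 fun n => le_trans hy (hvlt n).le)
        (fun y hy => ?_)
      exact ge_of_tendsto' hvt fun n => mem_iInter.1 hy n
    rw [hU, Antitone.measure_iInter (fun i j hij => Iic_subset_Iic.2 (hvm.antitone hij))
      (fun i => measurableSet_Iic.nullMeasurableSet) ⟨0, measure_ne_top _ _⟩]
    refine le_iInf fun n => ?_
    obtain ⟨c, hc, hcv⟩ := exists_lt_of_csInf_lt hne (hvlt n)
    exact le_trans hc (measure_mono (Iic_subset_Iic.2 hcv.le))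

/-- Splitting a probability measure at a median. -/
theorem rp_median {X : Type*} [MeasurableSpace X] (μ : Measure X) [IsProbabilityMeasure μ]
    (u : X → ℝ) (hu : Measurable u) :
    ∃ (M : ℝ) (ν₀ ν₁ : Measure X), ν₀ + ν₁ = μ ∧ ν₀ univ = 2⁻¹ ∧ ν₁ univ = 2⁻¹ ∧
      (∀ᵐ y ∂ν₀, M ≤ u y) ∧ (∀ᵐ y ∂ν₁, u y ≤ M) := by
  have := Measure.isProbabilityMeasure_map (μ := μ) hu.aemeasurable
  obtain ⟨M, h1, h2⟩ := rp_median_exists (μ.map u)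
  rw [Measure.map_apply hu measurableSet_Iio] at h1
  rw [Measure.map_apply hu measurableSet_Iic] at h2
  have mL : MeasurableSet (u ⁻¹' Iio M) := hu measurableSet_Iio
  have mE : MeasurableSet (u ⁻¹' {M}) := hu (measurableSet_singleton M)
  have mG : MeasurableSet (u ⁻¹' Ioi M) := hu measurableSet_Ioi
  have hLE : u ⁻¹' Iic M = u ⁻¹' Iio M ∪ u ⁻¹' {M} := by
    rw [← preimage_union, Iio_union_right]
  have dLE : Disjoint (u ⁻¹' Iio M) (u ⁻¹' {M}) := by
    refine Disjoint.preimage _ ?_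
    simp
  have hc : (u ⁻¹' Iic M)ᶜ = u ⁻¹' Ioi M := by
    rw [← preimage_compl, compl_Iic]
  set p := μ (u ⁻¹' Iio M)
  set q := μ (u ⁻¹' {M})
  have hpq : 2⁻¹ ≤ p + q := by rwa [hLE, measure_union dLE mE] at h2
  have hqt : q ≠ ∞ := measure_ne_top _ _
  have hsub : 2⁻¹ - p ≤ q := tsub_le_iff_left.2 hpq
  set b := (2⁻¹ - p) / q with hb
  have hbq : b * q = 2⁻¹ - p := by
    refine ENNReal.div_mul_cancel' (fun h => ?_) (fun h => absurd h hqt)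
    exact le_antisymm (h ▸ hsub) bot_le
  have hb1 : b ≤ 1 := ENNReal.div_le_of_le_mul (by rwa [one_mul])
  have hsum : (μ.restrict (u ⁻¹' Ioi M) + (1 - b) • μ.restrict (u ⁻¹' {M})) +
      (μ.restrict (u ⁻¹' Iio M) + b • μ.restrict (u ⁻¹' {M})) = μ := by
    have e1 : (1 - b) • μ.restrict (u ⁻¹' {M}) + b • μ.restrict (u ⁻¹' {M}) =
        μ.restrict (u ⁻¹' {M}) := by
      rw [← add_smul, tsub_add_cancel_of_le hb1, one_smul]
    calc _ = ((μ.restrict (u ⁻¹' Iio M) + ((1 - b) • μ.restrict (u ⁻¹' {M}) +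
          b • μ.restrict (u ⁻¹' {M})))) + μ.restrict (u ⁻¹' Ioi M) := by abel
      _ = _ := by
        rw [e1, ← Measure.restrict_union dLE mE, ← hLE, ← hc,
          Measure.restrict_add_restrict_compl (hu measurableSet_Iic)]
  have hm1 : (μ.restrict (u ⁻¹' Iio M) + b • μ.restrict (u ⁻¹' {M})) univ = 2⁻¹ := by
    simp only [Measure.coe_add, Pi.add_apply, Measure.smul_apply, Measure.restrict_apply_univ,
      smul_eq_mul]
    change p + b * q = _
    rw [hbq, add_tsub_cancel_of_le h1]
  refine ⟨M, _, _, hsum, ?_, hm1, ?_, ?_⟩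
  · have := congrArg (fun ν : Measure X => ν univ) hsum
    simp only [measure_univ] at this
    rw [Measure.add_apply, hm1] at this
    have h3 : (2⁻¹:ℝ≥0∞) + 2⁻¹ = 1 := ENNReal.inv_two_add_inv_two
    exact (ENNReal.add_left_inj (by simp)).1 (this.trans h3.symm)
  · rw [ae_add_measure_iff]
    refine ⟨(ae_restrict_mem mG).mono fun y hy => le_of_lt hy, ?_⟩
    exact Measure.ae_smul_measure ((ae_restrict_mem mE).mono fun y hy => ge_of_eq hy) _
  · rw [ae_add_measure_iff]
    refine ⟨(ae_restrict_mem mL).mono fun y hy => le_of_lt hy, ?_⟩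
    exact Measure.ae_smul_measure ((ae_restrict_mem mE).mono fun y hy => le_of_eq hy) _


section
variable {X : Type*} [MetricSpace X] [CompleteSpace X] [SecondCountableTopology X]
  [MeasurableSpace X] [BorelSpace X] [MeasurableSpace C(unitInterval, X)]
  [BorelSpace C(unitInterval, X)]

theorem rp_step2 (hgeo : IsGeodesicSpace X) {N : ℝ} (hN : 1 ≤ N) {m : Measure X} [SigmaFinite m]
    (hsdc : StronglyDisplacementConvex (renyiEntropy N m))
    {u : X → ℝ} (hu : Continuous u) {g : X → ℝ≥0∞} (hg : IsUpperGradient u g)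
    (x : X) (r : ℝ) (hr : 0 < r) (μ : Measure X) [IsProbabilityMeasure μ]
    (hμ : ∀ᵐ y ∂μ, y ∈ ball x (r/2)) {K : ℝ≥0∞} (hK0 : K ≠ 0) (hK : K ≠ ∞) (hden : μ ≤ K • m) :
    ∃ M : ℝ, ∫⁻ y, ENNReal.ofReal |u y - M| ∂μ ≤
      ENNReal.ofReal r * (K * ∫⁻ y in ball x r, g y ∂m) := by
  obtain ⟨M, ν₀, ν₁, hsum, h0, h1, hM0, hM1⟩ := rp_median μ u hu.measurable
  refine ⟨M, ?_⟩
  have h2 : (2:ℝ≥0∞) * 2⁻¹ = 1 := ENNReal.mul_inv_cancel (by simp) (by simp)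
  have p0 : IsProbabilityMeasure ((2:ℝ≥0∞) • ν₀) := ⟨by simp [h0, h2]⟩
  have p1 : IsProbabilityMeasure ((2:ℝ≥0∞) • ν₁) := ⟨by simp [h1, h2]⟩
  have le0 : ν₀ ≤ μ := by rw [← hsum]; exact Measure.le_add_right le_rfl
  have le1 : ν₁ ≤ μ := by rw [← hsum]; exact Measure.le_add_left le_rfl
  have d0 : (2:ℝ≥0∞) • ν₀ ≤ (2 * K) • m := by
    rw [← smul_smul]; have := le0.trans hden; gcongr
  have d1 : (2:ℝ≥0∞) • ν₁ ≤ (2 * K) • m := by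
    rw [← smul_smul]; have := le1.trans hden; gcongr
  have s0 : ∀ᵐ y ∂((2:ℝ≥0∞) • ν₀), y ∈ ball x (r/2) ∧ M ≤ u y :=
    Measure.ae_smul_measure ((show ∀ᵐ y ∂ν₀, y ∈ ball x (r/2) from ae_mono le0 hμ).and hM0) _
  have s1 : ∀ᵐ y ∂((2:ℝ≥0∞) • ν₁), y ∈ ball x (r/2) ∧ u y ≤ M :=
    Measure.ae_smul_measure ((show ∀ᵐ y ∂ν₁, y ∈ ball x (r/2) from ae_mono le1 hμ).and hM1) _
  obtain ⟨π, hπ, hG, e0, e1, hopt⟩ := rp_geo_lift hgeo ((2:ℝ≥0∞) • ν₀) ((2:ℝ≥0∞) • ν₁)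
  have hfin : W2sq ((2:ℝ≥0∞) • ν₀) ((2:ℝ≥0∞) • ν₁) ≠ ∞ :=
    rp_W2_fin _ _ x (r/2) (s0.mono fun y hy => hy.1) (s1.mono fun y hy => hy.1)
  have s0' : ∀ᵐ γ ∂π, rpEv 0 γ ∈ ball x (r/2) ∧ M ≤ u (rpEv 0 γ) :=
    ae_of_ae_map (rp_ev_meas 0).aemeasurable (by rw [e0]; exact s0)
  have s1' : ∀ᵐ γ ∂π, rpEv 1 γ ∈ ball x (r/2) ∧ u (rpEv 1 γ) ≤ M :=
    ae_of_ae_map (rp_ev_meas 1).aemeasurable (by rw [e1]; exact s1)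
  have hdist : ∀ᵐ γ ∂π, dist (rpEv 0 γ) (rpEv 1 γ) < r := by
    filter_upwards [s0', s1'] with γ ha hb
    have := dist_triangle_right (rpEv 0 γ) (rpEv 1 γ) x
    have h3 := mem_ball.1 ha.1
    have h4 := mem_ball.1 hb.1
    linarith
  have hug := rp_ug_int (m := m) hg π 1 ⟨zero_le_one, le_rfl⟩ r.toNNReal
    (measurableSet_ball (x := x) (ε := r)) (2 * K) hG
    (by
      filter_upwards [hdist] with γ hγ
      rw [one_mul, Real.coe_toNNReal _ hr.le]
      exact hγ.le)
    (by
      filter_upwards [hG, s0', s1', hdist] with γ ha hb hc hd t ht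
      rw [one_mul, mem_ball]
      have h3 := mem_ball.1 hb.1
      have h4 := mem_ball.1 hc.1
      have z0 : (0:ℝ) ∈ Icc (0:ℝ) 1 := ⟨le_rfl, zero_le_one⟩
      have z1 : (1:ℝ) ∈ Icc (0:ℝ) 1 := ⟨zero_le_one, le_rfl⟩
      rcases le_total t (1/2) with h | h
      · have h5 := rp_ev_dist ha ht z0
        rw [sub_zero, abs_of_nonneg ht.1] at h5
        have h6 := dist_triangle (rpEv t γ) (rpEv 0 γ) x
        nlinarith [ht.1, dist_nonneg (x := rpEv 0 γ) (y := rpEv 1 γ)]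
      · have h5 := rp_ev_dist ha ht z1
        rw [abs_of_nonpos (by linarith [ht.2])] at h5
        have h6 := dist_triangle (rpEv t γ) (rpEv 1 γ) x
        nlinarith [ht.2, dist_nonneg (x := rpEv 0 γ) (y := rpEv 1 γ)])
    (by
      intro t ht E hE
      rw [one_mul]
      have := rp_density_aux (k := 1) hN hsdc π hG (by rw [e0, e1, hopt]) (by rw [e0, e1]; exact hfin)
        (C := 2 * K) (mul_ne_zero (by simp) hK0) (ENNReal.mul_ne_top (by simp) hK)
        (by rw [e0]; exact d0) ht hE (Or.inr ⟨rfl, by rw [e1]; exact d1⟩)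
      simpa using this)
  have hfm : Measurable fun y => ENNReal.ofReal |u y - M| :=
    ENNReal.measurable_ofReal.comp (by fun_prop)
  have hi0 : ∫⁻ y, ENNReal.ofReal |u y - M| ∂ν₀ =
      2⁻¹ * ∫⁻ γ, ENNReal.ofReal |u (rpEv 0 γ) - M| ∂π := by
    rw [← lintegral_map (f := fun y => ENNReal.ofReal |u y - M|) hfm (rp_ev_meas 0), e0,
      lintegral_smul_measure, smul_eq_mul, ← mul_assoc, mul_comm 2⁻¹, h2, one_mul]
  have hi1 : ∫⁻ y, ENNReal.ofReal |u y - M| ∂ν₁ =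
      2⁻¹ * ∫⁻ γ, ENNReal.ofReal |u (rpEv 1 γ) - M| ∂π := by
    rw [← lintegral_map (f := fun y => ENNReal.ofReal |u y - M|) hfm (rp_ev_meas 1), e1,
      lintegral_smul_measure, smul_eq_mul, ← mul_assoc, mul_comm 2⁻¹, h2, one_mul]
  calc ∫⁻ y, ENNReal.ofReal |u y - M| ∂μ
      = 2⁻¹ * ∫⁻ γ, ENNReal.ofReal |u (rpEv 0 γ) - M| + ENNReal.ofReal |u (rpEv 1 γ) - M| ∂π := by
        rw [← hsum, lintegral_add_measure, hi0, hi1, ← mul_add, lintegral_add_left]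
        exact hfm.comp (rp_ev_meas 0)
    _ = 2⁻¹ * ∫⁻ γ, ENNReal.ofReal |u (rpEv 1 γ) - u (rpEv 0 γ)| ∂π := by
        congr 1
        refine lintegral_congr_ae ?_
        filter_upwards [s0', s1'] with γ ha hb
        rw [← ENNReal.ofReal_add (abs_nonneg _) (abs_nonneg _),
          abs_of_nonneg (by linarith [ha.2] : 0 ≤ u (rpEv 0 γ) - M),
          abs_of_nonpos (by linarith [hb.2] : u (rpEv 1 γ) - M ≤ 0),
          abs_of_nonpos (by linarith [ha.2, hb.2] : u (rpEv 1 γ) - u (rpEv 0 γ) ≤ 0)]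
        congr 1; ring
    _ ≤ 2⁻¹ * (r.toNNReal * (2 * K * ∫⁻ y in ball x r, g y ∂m)) := by gcongr
    _ = (2 * 2⁻¹) * (ENNReal.ofReal r * (K * ∫⁻ y in ball x r, g y ∂m)) := by
        change 2⁻¹ * (ENNReal.ofReal r * (2 * K * ∫⁻ y in ball x r, g y ∂m)) = _
        ring
    _ = _ := by rw [h2, one_mul]

theorem rp_main_aux (hgeo : IsGeodesicSpace X) {N : ℝ} (hN : 1 ≤ N) {m : Measure X}
    [IsLocallyFiniteMeasure m] (hsupp : ∀ x : X, ∀ ε > 0, 0 < m (Metric.ball x ε))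
    (hsdc : StronglyDisplacementConvex (renyiEntropy N m))
    {u : X → ℝ} (hu : Continuous u) {g : X → ℝ≥0∞} (hg : IsUpperGradient u g)
    (x : X) (r : ℝ) (hr : 0 < r) :
    ∃ M : ℝ, ∫⁻ y, ENNReal.ofReal |u y - M| ∂((m (ball x r))⁻¹ • m.restrict (ball x r)) ≤
      ENNReal.ofReal (3/2 * r) * (2 ^ N * (m (ball x r))⁻¹ * ∫⁻ y in ball x r, g y ∂m) := by
  have hN0 : 0 < N := by linarith
  have hB0 : m (ball x r) ≠ 0 := (hsupp x r hr).ne'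
  have hBt : m (ball x r) ≠ ∞ := rp_ball_fin hgeo hN hsdc x r hr
  obtain ⟨π, hπ, hG, e0, hd⟩ :=
    rp_to_point hgeo hN hsdc x r hr measurableSet_ball subset_rfl hB0 hBt
  set K : ℝ≥0∞ := 2 ^ N * (m (ball x r))⁻¹ with hKdef
  have hK0 : K ≠ 0 := mul_ne_zero (by simp [ENNReal.rpow_eq_zero_iff]) (ENNReal.inv_ne_zero.2 hBt)
  have hKt : K ≠ ∞ := ENNReal.mul_ne_top (ENNReal.rpow_ne_top_of_nonneg hN0.le (by simp))
    (ENNReal.inv_ne_top.2 hB0)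
  have hden : ∀ t ∈ Icc (0:ℝ) 1, ∀ E, MeasurableSet E → π.map (rpEv (1/2 * t)) E ≤ K * m E := by
    intro t ht E hE
    have h1 := hd (1/2 * t) ⟨by linarith [ht.1], by linarith [ht.2]⟩ E hE
    have h2 : (2⁻¹ : ℝ≥0∞) ≤ ENNReal.ofReal (1 - 1/2 * t) := by
      have : (2⁻¹ : ℝ≥0∞) = ENNReal.ofReal (1/2) := by
        rw [one_div, ENNReal.ofReal_inv_of_pos (by norm_num)]; simp
      rw [this]
      exact ENNReal.ofReal_le_ofReal (by linarith [ht.2])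
    have h3 : (2:ℝ≥0∞) ^ N * (2⁻¹) ^ N = 1 := by
      rw [← ENNReal.mul_rpow_of_nonneg _ _ hN0.le, ENNReal.mul_inv_cancel (by simp) (by simp),
        ENNReal.one_rpow]
    calc π.map (rpEv (1/2 * t)) E = 2 ^ N * ((2⁻¹) ^ N * π.map (rpEv (1/2 * t)) E) := by
          rw [← mul_assoc, h3, one_mul]
      _ ≤ 2 ^ N * (ENNReal.ofReal (1 - 1/2 * t) ^ N * π.map (rpEv (1/2 * t)) E) := by gcongr
      _ ≤ 2 ^ N * ((m (ball x r))⁻¹ * m E) := by gcongr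
      _ = K * m E := by rw [hKdef, mul_assoc]
  have hdx : ∀ᵐ γ ∂π, ∀ t ∈ Icc (0:ℝ) 1, dist (rpEv t γ) x < (1 - t) * r ∨ t = 1 := by
    filter_upwards [hG] with γ hγ t ht
    rcases eq_or_ne t 1 with h | h
    · exact Or.inr h
    · left
      have h5 := rp_ev_dist hγ.1 ht (⟨zero_le_one, le_rfl⟩ : (1:ℝ) ∈ Icc (0:ℝ) 1)
      rw [abs_of_nonpos (by linarith [ht.2]), hγ.2.2] at h5
      rw [h5, neg_sub]
      have h6 : 0 < 1 - t := by
        have := lt_of_le_of_ne ht.2 h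
        linarith
      exact mul_lt_mul_of_pos_left (mem_ball.1 hγ.2.1) h6
  have hug := rp_ug_int (m := m) hg π (1/2) ⟨by norm_num, by norm_num⟩ (r/2).toNNReal
    (measurableSet_ball (x := x) (ε := r)) K (hG.mono fun γ hγ => hγ.1)
    (by
      filter_upwards [hG] with γ hγ
      rw [Real.coe_toNNReal _ (by positivity), hγ.2.2]
      have := mem_ball.1 hγ.2.1
      linarith)
    (by
      filter_upwards [hdx] with γ hγ t ht
      have ht' : 1/2 * t ∈ Icc (0:ℝ) 1 := ⟨by linarith [ht.1], by linarith [ht.2]⟩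
      rcases hγ (1/2 * t) ht' with h | h
      · rw [mem_ball]
        nlinarith [ht.1]
      · linarith [ht.2])
    hden
  have hprob : IsProbabilityMeasure (π.map (rpEv (1/2))) :=
    Measure.isProbabilityMeasure_map (rp_ev_meas _).aemeasurable
  obtain ⟨M, hM⟩ := rp_step2 hgeo hN hsdc hu hg x r hr (π.map (rpEv (1/2)))
    (by
      refine (ae_map_iff (p := fun y => y ∈ ball x (r/2)) (rp_ev_meas _).aemeasurable
        measurableSet_ball).2 ?_
      filter_upwards [hdx] with γ hγ
      rcases hγ (1/2) ⟨by norm_num, by norm_num⟩ with h | h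
      · rw [mem_ball]; linarith
      · norm_num at h)
    hK0 hKt (Measure.le_iff.2 fun E hE => by
      have := hden 1 ⟨zero_le_one, le_rfl⟩ E hE
      simpa using this)
  refine ⟨M, ?_⟩
  have hfm : Measurable fun y => ENNReal.ofReal |u y - M| :=
    ENNReal.measurable_ofReal.comp (by fun_prop)
  rw [lintegral_map hfm (rp_ev_meas _)] at hM
  rw [← e0, lintegral_map hfm (rp_ev_meas _)]
  calc ∫⁻ γ, ENNReal.ofReal |u (rpEv 0 γ) - M| ∂π
      ≤ ∫⁻ γ, ENNReal.ofReal |u (rpEv (1/2) γ) - M| +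
          ENNReal.ofReal |u (rpEv (1/2) γ) - u (rpEv 0 γ)| ∂π := by
        refine lintegral_mono fun γ => ?_
        rw [← ENNReal.ofReal_add (abs_nonneg _) (abs_nonneg _)]
        refine ENNReal.ofReal_le_ofReal ?_
        rw [add_comm, abs_sub_comm (u (rpEv (1/2) γ)) (u (rpEv 0 γ))]
        exact abs_sub_le _ _ _
    _ = ∫⁻ γ, ENNReal.ofReal |u (rpEv (1/2) γ) - M| ∂π +
          ∫⁻ γ, ENNReal.ofReal |u (rpEv (1/2) γ) - u (rpEv 0 γ)| ∂π :=
        lintegral_add_left (hfm.comp (rp_ev_meas _)) _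
    _ ≤ ENNReal.ofReal r * (K * ∫⁻ y in ball x r, g y ∂m) +
          ENNReal.ofReal (r/2) * (K * ∫⁻ y in ball x r, g y ∂m) := add_le_add hM hug
    _ = _ := by
        rw [← add_mul, ← ENNReal.ofReal_add hr.le (by positivity)]
        congr 2; ring
end

theorem rp_final
    {X : Type*} [MetricSpace X] [CompleteSpace X] [MeasurableSpace X] [BorelSpace X]
    (m : Measure X) (hgeo : IsGeodesicSpace X)
    (hsupp : ∀ x : X, ∀ ε > 0, 0 < m (Metric.ball x ε))
    [IsLocallyFiniteMeasure m]
    {N : ℝ} (hN : 1 ≤ N) (hsdc : StronglyDisplacementConvex (renyiEntropy N m))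
    (u : X → ℝ) (hu : Continuous u) (g : X → ℝ≥0∞) (hg : IsUpperGradient u g)
    (x : X) (r : ℝ) (hr : 0 < r) :
    (⨍⁻ y in Metric.ball x r,
        ENNReal.ofReal |u y - ⨍ z in Metric.ball x r, u z ∂m| ∂m)
      ≤ ENNReal.ofReal ((2:ℝ) ^ (N + 2) * r) *
          ⨍⁻ y in Metric.ball x r, g y ∂m := by
  have hsc : SecondCountableTopology X := rp_second_countable hgeo m hsupp x
  let _ : MeasurableSpace C(unitInterval, X) := borel _
  have : BorelSpace C(unitInterval, X) := ⟨rfl⟩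
  have hB0 : m (ball x r) ≠ 0 := (hsupp x r hr).ne'
  have hBt : m (ball x r) ≠ ∞ := rp_ball_fin hgeo hN hsdc x r hr
  obtain ⟨M, hM⟩ := rp_main_aux hgeo hN hsupp hsdc hu hg x r hr
  set μ : Measure X := (m (ball x r))⁻¹ • m.restrict (ball x r) with hμ
  have hprob : IsProbabilityMeasure μ := by
    constructor
    simp [hμ, ENNReal.inv_mul_cancel hB0 hBt]
  have hLav : ∀ f : X → ℝ≥0∞, ⨍⁻ y in ball x r, f y ∂m = ∫⁻ y, f y ∂μ := by
    intro f
    rw [laverage, Measure.restrict_apply_univ]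
  have hav : ⨍ z in ball x r, u z ∂m = ∫ z, u z ∂μ := by
    rw [average, Measure.restrict_apply_univ]
  rw [hLav, hLav, hav]
  have hgμ : ∫⁻ y, g y ∂μ = (m (ball x r))⁻¹ * ∫⁻ y in ball x r, g y ∂m := by
    rw [hμ, lintegral_smul_measure, smul_eq_mul]
  rw [mul_assoc ((2:ℝ≥0∞) ^ N), ← hgμ] at hM
  set G := ∫⁻ y, g y ∂μ with hGdef
  rcases eq_or_ne G ∞ with hG | hG
  · rw [hG, ENNReal.mul_top]
    · exact le_top
    · simp only [ne_eq, ENNReal.ofReal_eq_zero, not_le]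
      positivity
  have h2N : (2:ℝ≥0∞) ^ N = ENNReal.ofReal ((2:ℝ) ^ N) := by
    rw [← ENNReal.ofReal_rpow_of_pos (by norm_num)]; simp
  have hI : ∫⁻ y, ENNReal.ofReal |u y - M| ∂μ ≠ ∞ := by
    refine ne_top_of_le_ne_top ?_ hM
    rw [h2N]
    exact ENNReal.mul_ne_top ENNReal.ofReal_ne_top (ENNReal.mul_ne_top ENNReal.ofReal_ne_top hG)
  have hen : ∀ a : ℝ, ‖a‖ₑ = ENNReal.ofReal |a| := fun a => by
    rw [← ofReal_norm, Real.norm_eq_abs]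
  have hintg' : Integrable (fun y => u y - M) μ := by
    refine ⟨(hu.sub continuous_const).aestronglyMeasurable, ?_⟩
    unfold HasFiniteIntegral
    simp only [hen]
    exact hI.lt_top
  have hintg : Integrable u μ := by
    have := hintg'.add (integrable_const M)
    refine this.congr (ae_of_all _ fun y => ?_)
    simp
  set c := ∫ z, u z ∂μ with hc
  have hcM : ENNReal.ofReal |M - c| ≤ ∫⁻ y, ENNReal.ofReal |u y - M| ∂μ := by
    have e : c - M = ∫ y, (u y - M) ∂μ := by
      rw [integral_sub hintg (integrable_const M)]
      simp [hc]
    rw [abs_sub_comm, e, ← hen]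
    refine (enorm_integral_le_lintegral_enorm _).trans (le_of_eq ?_)
    simp only [hen]
  have hfm : Measurable fun y => ENNReal.ofReal |u y - M| :=
    ENNReal.measurable_ofReal.comp (by fun_prop)
  calc ∫⁻ y, ENNReal.ofReal |u y - c| ∂μ
      ≤ ∫⁻ y, ENNReal.ofReal |u y - M| + ENNReal.ofReal |M - c| ∂μ := by
        refine lintegral_mono fun y => ?_
        rw [← ENNReal.ofReal_add (abs_nonneg _) (abs_nonneg _)]
        exact ENNReal.ofReal_le_ofReal (abs_sub_le _ _ _)
    _ = ∫⁻ y, ENNReal.ofReal |u y - M| ∂μ + ENNReal.ofReal |M - c| := by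
        rw [lintegral_add_left hfm]; simp
    _ ≤ ENNReal.ofReal (3/2 * r) * (2 ^ N * G) + ENNReal.ofReal (3/2 * r) * (2 ^ N * G) :=
        add_le_add hM (hcM.trans hM)
    _ = ENNReal.ofReal (3 * r * 2 ^ N) * G := by
        rw [← add_mul, ← ENNReal.ofReal_add (by positivity) (by positivity), h2N, ← mul_assoc,
          ← ENNReal.ofReal_mul (by positivity)]
        congr 2; ring
    _ ≤ _ := by
        refine mul_le_mul' (ENNReal.ofReal_le_ofReal ?_) le_rfl
        rw [Real.rpow_add (by norm_num), Real.rpow_two]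
        have : (0:ℝ) < 2 ^ N := by positivity
        nlinarith [mul_pos this hr]

/-- Remark (ii): under strong displacement convexity of `E_N` the strong local Poincaré
inequality holds with the same constant. -/
theorem renyi_sdc_strong_local_poincare
    {X : Type*} [MetricSpace X] [CompleteSpace X] [MeasurableSpace X] [BorelSpace X]
    (m : Measure X) (hgeo : IsGeodesicSpace X)
    (hsupp : ∀ x : X, ∀ ε > 0, 0 < m (Metric.ball x ε))
    [IsLocallyFiniteMeasure m]
    {N : ℝ} (hN : 1 ≤ N) (hsdc : StronglyDisplacementConvex (renyiEntropy N m))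
    (u : X → ℝ) (hu : Continuous u) (g : X → ℝ≥0∞) (hg : IsUpperGradient u g)
    (x : X) (r : ℝ) (hr : 0 < r) :
    (⨍⁻ y in Metric.ball x r,
        ENNReal.ofReal |u y - ⨍ z in Metric.ball x r, u z ∂m| ∂m)
      ≤ ENNReal.ofReal ((2:ℝ) ^ (N + 2) * r) *
          ⨍⁻ y in Metric.ball x r, g y ∂m := by
  exact rp_final m hgeo hsupp hN hsdc u hu g hg x r hr
end
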